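/- arXiv:2310.08816 — 2 statements merged into one kernel-verified Lean document; each statement's English description precedes it below -/
import Mathlib

section
/- The single-layer operator T : H̃^{-1/2}(Γ) → H^{1/2}(Γ) with kernel e^{ik|x−y|}/(4π|x−y|) is a Fredholm operator of index zero. -/
noncomputable section

open MeasureTheory Complex Filter Topology
open scoped Real NNReal ContDiff

/-- The plane `ℝ²`. -/
abbrev R2 : Type := EuclideanSpace ℝ (Fin 2)

/-- Euclidean dot product on `ℝ²`. -/
def rdot (x ξ : R2) : ℝ := x 0 * ξ 0 + x 1 * ξ 1

/-- `testFT φ ξ = ∫ e^{i x·ξ} φ(x) dx`, the (inverse-type) Fourier integral of a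
test function `φ`. -/
def testFT (φ : R2 → ℂ) (ξ : R2) : ℂ :=
  ∫ x : R2, Complex.exp (Complex.I * (rdot x ξ : ℂ)) * φ x

/-- The squared `H^s(ℝ²)` norm of the distribution whose Fourier transform is `F`:
`‖f‖² = (2π)⁻² ∫ (1+|ξ|²)^s |f̂(ξ)|² dξ`. -/
def wnormSq (s : ℝ) (F : R2 → ℂ) : ℝ :=
  ((2 * π) ^ 2)⁻¹ * ∫ ξ : R2, ((1 : ℝ) + ‖ξ‖ ^ 2) ^ s * ‖F ξ‖ ^ 2

/-- The `H^s(ℝ²)` norm (Fourier-side representation). -/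
def wnorm (s : ℝ) (F : R2 → ℂ) : ℝ := Real.sqrt (wnormSq s F)

/-- `F` is the Fourier transform of an element of `H^s(ℝ²)`. -/
def MemHs (s : ℝ) (F : R2 → ℂ) : Prop :=
  AEStronglyMeasurable F (volume : Measure R2) ∧
    Integrable (fun ξ : R2 => ((1 : ℝ) + ‖ξ‖ ^ 2) ^ s * ‖F ξ‖ ^ 2) volume

/-- An element `f` of `H̃^s(Γ)`: a distribution on `ℝ²` of Sobolev regularity `s`
supported in the closure of `Γ`, represented by its Fourier transform `ft`
(a continuous function, `f` being a compactly supported distribution).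
The support condition is expressed by testing against smooth compactly supported
functions `φ` whose support avoids `closure Γ`, via the Parseval pairing
`∫ f φ dx = (2π)⁻² ∫ f̂(ξ) φ̌(ξ) dξ` with `φ̌(ξ) = ∫ e^{ix·ξ} φ(x) dx`. -/
structure HTildeElt (s : ℝ) (Γ : Set R2) where
  ft : R2 → ℂ
  cont : Continuous ft
  mem : Integrable (fun ξ : R2 => ((1 : ℝ) + ‖ξ‖ ^ 2) ^ s * ‖ft ξ‖ ^ 2) volume
  supp : ∀ φ : R2 → ℂ, ContDiff ℝ ∞ φ → HasCompactSupport φ →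
    tsupport φ ∩ closure Γ = ∅ → (∫ ξ : R2, ft ξ * testFT φ ξ) = 0

/-- `Γ` is a bounded Lipschitz domain in `ℝ²`: a nonempty bounded open set whose
boundary is locally, after a rigid motion, the graph of a Lipschitz function with
the domain on one side. -/
def IsLipschitzDomain (Γ : Set R2) : Prop :=
  IsOpen Γ ∧ Bornology.IsBounded Γ ∧ Γ.Nonempty ∧
    ∀ x ∈ frontier Γ, ∃ (e : R2 ≃ₗᵢ[ℝ] R2) (L : ℝ≥0) (f : ℝ → ℝ) (U : Set R2),
      LipschitzWith L f ∧ IsOpen U ∧ x ∈ U ∧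
        ∀ y ∈ U, (y ∈ Γ ↔ f (e y 0) < e y 1)

/-- `ξ·V̂(ξ)`, i.e. `-i` times the Fourier transform of `div V`. -/
def dotFt (F1 F2 : R2 → ℂ) (ξ : R2) : ℂ := (ξ 0 : ℂ) * F1 ξ + (ξ 1 : ℂ) * F2 ξ

/-- `ξ⊥·V̂(ξ)`, i.e. `-i` times the Fourier transform of `curl V`. -/
def curlFt (F1 F2 : R2 → ℂ) (ξ : R2) : ℂ := (ξ 1 : ℂ) * F1 ξ - (ξ 0 : ℂ) * F2 ξ

/-- An element of `X = H̃^{-1/2}_div(Γ)`: a pair of elements of `H̃^{-1/2}(Γ)`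
whose distributional divergence also belongs to `H̃^{-1/2}(Γ)`. -/
structure Xelt (Γ : Set R2) where
  c1 : HTildeElt (-(1/2) : ℝ) Γ
  c2 : HTildeElt (-(1/2) : ℝ) Γ
  divMem : Integrable (fun ξ : R2 =>
    ((1 : ℝ) + ‖ξ‖ ^ 2) ^ (-(1/2) : ℝ) * ‖dotFt c1.ft c2.ft ξ‖ ^ 2) volume

/-- The Fourier transform of `div V`. -/
def divFt {Γ : Set R2} (V : Xelt Γ) (ξ : R2) : ℂ :=
  Complex.I * dotFt V.c1.ft V.c2.ft ξ

/-- The squared `H`-norm `‖V‖²_H` of a vector field. -/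
def HnormSq {Γ : Set R2} (V : Xelt Γ) : ℝ :=
  wnormSq (-(1/2)) V.c1.ft + wnormSq (-(1/2)) V.c2.ft

/-- The squared `X`-norm `‖V‖²_X = ‖V‖²_H + ‖div V‖²_{H̃^{-1/2}}`. -/
def XnormSq {Γ : Set R2} (V : Xelt Γ) : ℝ :=
  HnormSq V + wnormSq (-(1/2)) (divFt V)

/-- The `X`-norm. -/
def Xnorm {Γ : Set R2} (V : Xelt Γ) : ℝ := Real.sqrt (XnormSq V)

/-- `ĝ₀(ξ) = i/√(k²-|ξ|²)`, with the branch `√(k²-|ξ|²) = i√(|ξ|²-k²)` for `|ξ| > k`. -/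
def g0hat (k : ℝ) (ξ : R2) : ℂ :=
  if ‖ξ‖ < k then Complex.I / ((Real.sqrt (k ^ 2 - ‖ξ‖ ^ 2) : ℝ) : ℂ)
  else 1 / ((Real.sqrt (‖ξ‖ ^ 2 - k ^ 2) : ℝ) : ℂ)

/-- The integrand of the sesquilinear form `B`:
`ĝ₀(ξ) [ (|ξ|²-k²) a₁ b̄₁ - k² a₂ b̄₂ ]` with `a₁ = ξ·Ŵ/|ξ|`, `a₂ = ξ⊥·Ŵ/|ξ|`, etc. -/
def Bintegrand (k : ℝ) (F1 F2 G1 G2 : R2 → ℂ) (ξ : R2) : ℂ :=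
  g0hat k ξ *
    (((‖ξ‖ ^ 2 - k ^ 2 : ℝ) : ℂ) * (dotFt F1 F2 ξ * starRingEnd ℂ (dotFt G1 G2 ξ)) -
      ((k ^ 2 : ℝ) : ℂ) * (curlFt F1 F2 ξ * starRingEnd ℂ (curlFt G1 G2 ξ))) /
    ((‖ξ‖ ^ 2 : ℝ) : ℂ)

/-- The sesquilinear form `B(W,V)`. -/
def Bform (k : ℝ) {Γ : Set R2} (W V : Xelt Γ) : ℂ :=
  ∫ ξ : R2, Bintegrand k W.c1.ft W.c2.ft V.c1.ft V.c2.ft ξ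

/-- The sesquilinear form `E(q,V) = B(curl⃗ q, V)`, where
`curl⃗ q = (∂q/∂x₂, -∂q/∂x₁)` has Fourier transform `(iξ₂ q̂, -iξ₁ q̂)`. -/
def Eform (k : ℝ) {Γ : Set R2} (q : HTildeElt (1/2 : ℝ) Γ) (V : Xelt Γ) : ℂ :=
  ∫ ξ : R2, Bintegrand k (fun η => Complex.I * (η 1 : ℂ) * q.ft η)
      (fun η => -(Complex.I * (η 0 : ℂ) * q.ft η)) V.c1.ft V.c2.ft ξ

/-- The inner product of the Hilbert space `X`; by the Riesz representation
theorem, every bounded conjugate-linear functional on `X` is `V ↦ Xinner Y V`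
for a unique `Y ∈ X`, with functional norm `Xnorm Y`. -/
def Xinner {Γ : Set R2} (Y V : Xelt Γ) : ℂ :=
  ((((2 * π) ^ 2)⁻¹ : ℝ) : ℂ) * ∫ ξ : R2, ((((1 : ℝ) + ‖ξ‖ ^ 2) ^ (-(1/2) : ℝ) : ℝ) : ℂ) *
    (Y.c1.ft ξ * starRingEnd ℂ (V.c1.ft ξ) + Y.c2.ft ξ * starRingEnd ℂ (V.c2.ft ξ) +
      divFt Y ξ * starRingEnd ℂ (divFt V ξ))

/-- `√(k²-|ξ|²)`, with the branch `i√(|ξ|²-k²)` for `|ξ| > k`. -/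
def rootk (k : ℝ) (ξ : R2) : ℂ :=
  if ‖ξ‖ < k then ((Real.sqrt (k ^ 2 - ‖ξ‖ ^ 2) : ℝ) : ℂ)
  else Complex.I * ((Real.sqrt (‖ξ‖ ^ 2 - k ^ 2) : ℝ) : ℂ)

/-- The Fourier multiplier `i/(2√(k²-|ξ|²))` of the Helmholtz single-layer
operator `T` with kernel `e^{ik|x-y|}/(4π|x-y|)`. -/
def mT (k : ℝ) (ξ : R2) : ℂ := Complex.I / (2 * rootk k ξ)

/-- The Fourier multiplier `1/(2|ξ|)` of the Laplace single-layer operator `T₀`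
with kernel `1/(4π|x-y|)`. -/
def mT0 (ξ : R2) : ℂ := 1 / (2 * ((‖ξ‖ : ℝ) : ℂ))

/-- The Fourier multiplier of `R = T - T₀`. -/
def mR (k : ℝ) (ξ : R2) : ℂ := mT k ξ - mT0 ξ

/-- The distributions with Fourier data `G` and `E` have the same restriction to
the open set `Γ`: `⟨G - E, φ⟩ = 0` for all smooth `φ` compactly supported in `Γ`
(pairing written on the Fourier side). -/
def AgreeOn (Γ : Set R2) (G E : R2 → ℂ) : Prop :=
  ∀ φ : R2 → ℂ, ContDiff ℝ ∞ φ → HasCompactSupport φ → tsupport φ ⊆ Γ →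
    (∫ ξ : R2, (G ξ - E ξ) * testFT φ ξ) = 0

/-- The duality pairing `⟨f, ψ⟩` between `H^{1/2}(Γ)` and `H̃^{-1/2}(Γ)`, written
on the Fourier side (Plancherel): `(2π)⁻² ∫ f̂(ξ) conj(ψ̂(ξ)) dξ`, where `G = f̂`
is the Fourier data of (an extension of) `f`. -/
def dualPair (G ψ : R2 → ℂ) : ℂ :=
  ((((2 * π) ^ 2)⁻¹ : ℝ) : ℂ) * ∫ ξ : R2, G ξ * starRingEnd ℂ (ψ ξ)

noncomputable section
open MeasureTheory Complex Filter Topology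
open scoped Real NNReal ContDiff FourierTransform

namespace SL

/-- The character `e^{i x·ξ}`. -/
def ch (x ξ : R2) : ℂ := Complex.exp (Complex.I * (rdot x ξ : ℂ))

lemma rdot_eq (x ξ : R2) : rdot x ξ = inner ℝ x ξ := by
  simp [rdot, PiLp.inner_apply, Fin.sum_univ_two, mul_comm]

lemma ch_norm (x ξ : R2) : ‖ch x ξ‖ = 1 := by
  unfold ch; rw [mul_comm]; exact Complex.norm_exp_ofReal_mul_I _

lemma ch_add_left (x y ξ : R2) : ch (x + y) ξ = ch x ξ * ch y ξ := by
  unfold ch; rw [← Complex.exp_add]; congr 1; simp [rdot]; ring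

lemma ch_add_right (x ξ η : R2) : ch x (ξ + η) = ch x ξ * ch x η := by
  unfold ch; rw [← Complex.exp_add]; congr 1; simp [rdot]; ring

lemma ch_neg_left (x ξ : R2) : ch (-x) ξ = starRingEnd ℂ (ch x ξ) := by
  unfold ch; rw [← Complex.exp_conj]; congr 1; simp [rdot]; ring

lemma ch_neg_right (x ξ : R2) : ch x (-ξ) = starRingEnd ℂ (ch x ξ) := by
  unfold ch; rw [← Complex.exp_conj]; congr 1; simp [rdot]; ring

lemma ch_zero_left (ξ : R2) : ch 0 ξ = 1 := by simp [ch, rdot]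

@[fun_prop]
lemma ch_cont {X : Type*} [TopologicalSpace X] {f g : X → R2} (hf : Continuous f)
    (hg : Continuous g) : Continuous fun x => ch (f x) (g x) := by
  unfold ch
  simp_rw [rdot_eq]
  fun_prop

lemma testFT_ch (φ : R2 → ℂ) (ξ : R2) : testFT φ ξ = ∫ x, ch x ξ * φ x := rfl

lemma testFT_eq (φ : R2 → ℂ) (ξ : R2) : testFT φ ξ = 𝓕⁻ φ ((2 * π)⁻¹ • ξ) := by
  rw [testFT_ch, Real.fourierInv_eq' ]
  congr 1; ext x
  rw [smul_eq_mul]; congr 1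
  unfold ch; congr 1
  rw [inner_smul_right, rdot_eq]
  push_cast
  field_simp

/-- Smooth compactly supported functions. -/
def IsT (φ : R2 → ℂ) : Prop := ContDiff ℝ ∞ φ ∧ HasCompactSupport φ

lemma IsT.cont {φ : R2 → ℂ} (h : IsT φ) : Continuous φ := h.1.continuous
lemma IsT.int {φ : R2 → ℂ} (h : IsT φ) : Integrable φ := h.cont.integrable_of_hasCompactSupport h.2

/-- Associated Schwartz function -/
def IsT.sch {φ : R2 → ℂ} (h : IsT φ) : SchwartzMap R2 ℂ := h.2.toSchwartzMap h.1

lemma IsT.testFT_eq {φ : R2 → ℂ} (h : IsT φ) (ξ : R2) :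
    testFT φ ξ = (𝓕⁻ h.sch) ((2 * π)⁻¹ • ξ) := by
  rw [SL.testFT_eq, SchwartzMap.fourierInv_coe]; rfl

lemma IsT.testFT_cont {φ : R2 → ℂ} (h : IsT φ) : Continuous (testFT φ) := by
  have : testFT φ = fun ξ => (𝓕⁻ h.sch) ((2 * π)⁻¹ • ξ) := funext h.testFT_eq
  rw [this]
  have := (𝓕⁻ h.sch).continuous
  fun_prop

lemma IsT.decay {φ : R2 → ℂ} (h : IsT φ) (n : ℕ) :
    ∃ C, 0 ≤ C ∧ ∀ ξ, ‖testFT φ ξ‖ ≤ C * ((1 + ‖ξ‖ ^ 2) ^ n)⁻¹ := by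
  obtain ⟨C, hC⟩ := (𝓕⁻ h.sch).decay (2 * n) 0
  obtain ⟨C0, hC0⟩ := (𝓕⁻ h.sch).decay 0 0
  simp only [norm_iteratedFDeriv_zero, pow_zero, one_mul] at hC hC0
  have hp : (0:ℝ) < 2 * π := by positivity
  have key : ∀ a b : ℝ, 0 ≤ a → 0 ≤ b → (a + b) ^ n ≤ 2 ^ n * (a ^ n + b ^ n) := by
    intro a b ha hb
    have := add_pow_le ha hb n
    refine this.trans ?_
    gcongr
    · norm_num
    · omega
  refine ⟨2 ^ n * (C0 + (2 * π) ^ (2 * n) * C), ?_, fun ξ => ?_⟩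
  · have := hC0.1; have := hC.1; positivity
  · rw [← div_eq_mul_inv, le_div_iff₀ (by positivity), h.testFT_eq]
    set v := (2 * π)⁻¹ • ξ with hv
    have hn : ‖ξ‖ = (2 * π) * ‖v‖ := by
      rw [hv, norm_smul, Real.norm_of_nonneg (by positivity)]; field_simp
    have h1 := key 1 (‖ξ‖ ^ 2) zero_le_one (by positivity)
    have h2 := hC.2 v
    have h3 := hC0.2 v
    calc ‖(𝓕⁻ h.sch) v‖ * (1 + ‖ξ‖ ^ 2) ^ n
        ≤ ‖(𝓕⁻ h.sch) v‖ * (2 ^ n * (1 ^ n + (‖ξ‖ ^ 2) ^ n)) := by gcongr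
      _ = 2 ^ n * (‖(𝓕⁻ h.sch) v‖ + (2 * π) ^ (2 * n) * (‖v‖ ^ (2 * n) * ‖(𝓕⁻ h.sch) v‖)) := by
          rw [hn, ← pow_mul, mul_pow (2 * π)]; ring
      _ ≤ _ := by gcongr

lemma IsT.inversion {φ : R2 → ℂ} (h : IsT φ) (x : R2) :
    φ x = ((((2 * π) ^ 2)⁻¹ : ℝ) : ℂ) * ∫ ξ, ch (-x) ξ * testFT φ ξ := by
  have h1 : 𝓕 (𝓕⁻ h.sch) x = h.sch x := by rw [FourierTransform.fourier_fourierInv_eq]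
  have h2 : h.sch x = φ x := rfl
  rw [← h2, ← h1, SchwartzMap.fourier_coe, Real.fourier_eq']
  simp_rw [h.testFT_eq]
  have := Measure.integral_comp_smul (volume : Measure R2)
    (fun v => ch (-x) ((2 * π) • v) * (𝓕⁻ h.sch) v) (2 * π)⁻¹
  have e : ∀ ξ : R2, ch (-x) ((2 * π) • (2 * π)⁻¹ • ξ) = ch (-x) ξ := by
    intro ξ; rw [smul_smul, mul_inv_cancel₀ (by positivity), one_smul]
  simp only [e] at this
  rw [this]
  have hd : Module.finrank ℝ R2 = 2 := by simp
  rw [hd]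
  have hp : (0:ℝ) < 2 * π := by positivity
  rw [inv_pow, inv_inv, abs_of_pos (by positivity), Complex.real_smul, ← mul_assoc]
  have : ((((2 * π) ^ 2)⁻¹ : ℝ) : ℂ) * (((2 * π) ^ 2 : ℝ) : ℂ) = 1 := by
    rw [← Complex.ofReal_mul, inv_mul_cancel₀ (by positivity), Complex.ofReal_one]
  rw [this, one_mul]
  congr 1; ext v
  rw [smul_eq_mul]; congr 1
  unfold ch; congr 1
  rw [rdot_eq, inner_smul_right, inner_neg_left, real_inner_comm]
  push_cast; ring

lemma IsT.testFT_int {φ : R2 → ℂ} (h : IsT φ) : Integrable (testFT φ) := by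
  have : testFT φ = fun ξ => (𝓕⁻ h.sch) ((2 * π)⁻¹ • ξ) := funext h.testFT_eq
  rw [this]
  exact (𝓕⁻ h.sch).integrable.comp_smul (by positivity)

lemma testFT_shift (φ : R2 → ℂ) (a ξ : R2) :
    testFT (fun x => φ (x - a)) ξ = ch a ξ * testFT φ ξ := by
  rw [testFT_ch, testFT_ch, ← integral_const_mul,
    ← integral_add_right_eq_self (fun x => ch x ξ * φ (x - a)) a]
  congr 1; ext x
  rw [add_sub_cancel_right, ch_add_left]; ring

lemma IsT.shift {φ : R2 → ℂ} (h : IsT φ) (a : R2) : IsT (fun x => φ (x - a)) :=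
  ⟨h.1.comp (contDiff_id.sub contDiff_const), h.2.comp_homeomorph (Homeomorph.subRight a)⟩

lemma testFT_conj (φ : R2 → ℂ) (ξ : R2) :
    starRingEnd ℂ (testFT φ ξ) = testFT (fun x => starRingEnd ℂ (φ x)) (-ξ) := by
  rw [testFT_ch, testFT_ch, ← integral_conj]
  congr 1; ext x
  rw [map_mul, ch_neg_right]

lemma IsT.conj {φ : R2 → ℂ} (h : IsT φ) : IsT (fun x => starRingEnd ℂ (φ x)) :=
  ⟨Complex.conjCLE.contDiff.comp h.1, h.2.comp_left (map_zero _)⟩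

lemma IsT.mul {φ ψ : R2 → ℂ} (h : IsT φ) (h' : IsT ψ) : IsT (fun x => φ x * ψ x) :=
  ⟨h.1.mul h'.1, h.2.mul_right⟩

lemma IsT.sub {φ ψ : R2 → ℂ} (h : IsT φ) (h' : IsT ψ) : IsT (fun x => φ x - ψ x) :=
  ⟨h.1.sub h'.1, h.2.sub h'.2⟩

lemma testFT_sub {φ ψ : R2 → ℂ} (h : IsT φ) (h' : IsT ψ) (ξ : R2) :
    testFT (fun x => φ x - ψ x) ξ = testFT φ ξ - testFT ψ ξ := by
  simp only [testFT_ch]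
  rw [← integral_sub]
  · congr 1; ext x; ring
  · exact h.int.bdd_mul (c := 1) (by fun_prop) (by simp [ch_norm])
  · exact h'.int.bdd_mul (c := 1) (by fun_prop) (by simp [ch_norm])

/-- Fourier transform of a product. -/
lemma testFT_mul {χ G : R2 → ℂ} (hχ : Integrable χ) (hG : Integrable G) (ξ : R2) :
    testFT (fun x => χ x * ∫ η, ch (-x) η * G η) ξ = ∫ η, testFT χ (ξ - η) * G η := by
  have hintg : Integrable (fun z : R2 × R2 => ch z.1 (ξ - z.2) * (χ z.1 * G z.2))
      (volume.prod volume) := by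
    refine (hχ.mul_prod hG).bdd_mul (c := 1) ?_ (by simp [ch_norm])
    exact (ch_cont continuous_fst (continuous_const.sub continuous_snd)).aestronglyMeasurable
  have e := integral_integral_swap (f := fun x η => ch x (ξ - η) * (χ x * G η)) hintg
  calc _ = ∫ x, ∫ η, ch x (ξ - η) * (χ x * G η) := by
        rw [testFT_ch]; congr 1; ext x
        rw [← mul_assoc, ← integral_const_mul]
        congr 1; ext η
        rw [sub_eq_add_neg, ch_add_right, ch_neg_right, ← ch_neg_left]; ring
    _ = _ := e
    _ = _ := by
        congr 1; ext η
        rw [testFT_ch, ← integral_mul_const]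
        congr 1; ext x; ring

lemma IsT.testFT_mul {χ φ : R2 → ℂ} (hχ : IsT χ) (hφ : IsT φ) (ξ : R2) :
    testFT (fun x => χ x * φ x) ξ =
      ((((2 * π) ^ 2)⁻¹ : ℝ) : ℂ) * ∫ η, testFT χ (ξ - η) * testFT φ η := by
  have := SL.testFT_mul hχ.int (hφ.testFT_int.const_mul ((((2 * π) ^ 2)⁻¹ : ℝ) : ℂ)) ξ
  rw [← integral_const_mul]
  calc _ = testFT (fun x => χ x * ∫ η, ch (-x) η * (((((2 * π) ^ 2)⁻¹ : ℝ) : ℂ) * testFT φ η)) ξ := by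
        congr 1; ext x
        rw [hφ.inversion x, ← integral_const_mul]
        congr 2; ext η; ring
    _ = _ := this
    _ = _ := by congr 1; ext η; ring

lemma parseval {φ θ : R2 → ℂ} (hφ : IsT φ) (hθ : IsT θ) (hd : ∀ x, φ x = 0 ∨ θ x = 0) :
    ∫ ξ, starRingEnd ℂ (testFT φ ξ) * testFT θ ξ = 0 := by
  have := hφ.conj.testFT_mul hθ 0
  have h0 : (fun x => starRingEnd ℂ (φ x) * θ x) = fun _ => 0 := by
    ext x; rcases hd x with h | h <;> simp [h]
  rw [h0] at this
  simp only [testFT_conj]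
  simp only [zero_sub] at this
  have h1 : testFT (fun _ => (0:ℂ)) 0 = 0 := by simp [testFT]
  rw [h1] at this
  have hc : ((((2 * π) ^ 2)⁻¹ : ℝ) : ℂ) ≠ 0 := by
    rw [Complex.ofReal_ne_zero]; positivity
  exact (mul_eq_zero.1 this.symm).resolve_left hc

lemma ae_zero_of_ch {h : R2 → ℂ} (hh : Integrable h) (h0 : ∀ a, ∫ ξ, ch a ξ * h ξ = 0) :
    ∀ᵐ ξ, h ξ = 0 := by
  refine ae_eq_zero_of_integral_contDiff_smul_eq_zero hh.locallyIntegrable fun g hg hgc => ?_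
  have hT : IsT (fun x => (g x : ℂ)) :=
    ⟨Complex.ofRealCLM.contDiff.comp hg, hgc.comp_left Complex.ofReal_zero⟩
  have hintg : Integrable (fun z : R2 × R2 => ch (-z.1) z.2 *
      (h z.1 * testFT (fun x => (g x : ℂ)) z.2)) (volume.prod volume) := by
    refine (hh.mul_prod hT.testFT_int).bdd_mul (c := 1) ?_ (by simp [ch_norm])
    exact (ch_cont continuous_fst.neg continuous_snd).aestronglyMeasurable
  have e := integral_integral_swap (f := fun x η => ch (-x) η *
      (h x * testFT (fun x => (g x : ℂ)) η)) hintg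
  have e2 : ∀ η, ∫ x, ch (-x) η * (h x * testFT (fun x => (g x : ℂ)) η) = 0 := by
    intro η
    have := h0 (-η)
    rw [← zero_mul (testFT (fun x => (g x : ℂ)) η), ← this, ← integral_mul_const]
    congr 1; ext x
    rw [show ch (-x) η = ch (-η) x by simp [ch, rdot]; ring_nf]; ring
  simp only [e2, integral_zero] at e
  have : ∀ x, g x • h x = ((((2 * π) ^ 2)⁻¹ : ℝ) : ℂ) *
      ∫ η, ch (-x) η * (h x * testFT (fun x => (g x : ℂ)) η) := by
    intro x
    have := hT.inversion x
    rw [Complex.real_smul, this, mul_assoc, ← integral_mul_const]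
    congr 2; ext η; ring
  simp_rw [this]
  rw [integral_const_mul, e, mul_zero]

lemma exists_mollifier {ε : ℝ} (hε : 0 < ε) : ∃ ρ : R2 → ℂ, IsT ρ ∧
    (tsupport ρ ⊆ Metric.closedBall 0 ε) ∧ (∀ ξ, ‖testFT ρ ξ‖ ≤ 1) ∧
    ∀ ξ, ‖testFT ρ ξ - 1‖ ≤ ε * ‖ξ‖ := by
  let b : ContDiffBump (0 : R2) := ⟨ε / 2, ε, by positivity, by linarith⟩
  have hb1 : Integrable (b.normed volume) := b.integrable_normed
  have hsupp : tsupport (b.normed volume) = Metric.closedBall 0 ε := b.tsupport_normed_eq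
  refine ⟨fun x => (b.normed volume x : ℂ), ⟨?_, ?_⟩, ?_, fun ξ => ?_, fun ξ => ?_⟩
  · exact Complex.ofRealCLM.contDiff.comp b.contDiff_normed
  · exact b.hasCompactSupport_normed.comp_left Complex.ofReal_zero
  · rw [← hsupp]
    exact closure_mono (fun x hx => by simpa using hx)
  · rw [testFT_ch]
    calc _ ≤ ∫ x, ‖ch x ξ * (b.normed volume x : ℂ)‖ := norm_integral_le_integral_norm _
      _ = ∫ x, b.normed volume x := by
          congr 1; ext x
          rw [norm_mul, ch_norm, one_mul, Complex.norm_real, Real.norm_of_nonneg (b.nonneg_normed x)]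
      _ ≤ 1 := by rw [b.integral_normed]
  · have e1 : (1 : ℂ) = ∫ x, (b.normed volume x : ℂ) := by
      rw [integral_complex_ofReal, b.integral_normed]; simp
    rw [testFT_ch, e1, ← integral_sub]
    · calc _ ≤ ∫ x, ‖ch x ξ * (b.normed volume x : ℂ) - (b.normed volume x : ℂ)‖ :=
            norm_integral_le_integral_norm _
        _ ≤ ∫ x, (ε * ‖ξ‖) * b.normed volume x := by
            refine integral_mono_of_nonneg (ae_of_all _ fun x => norm_nonneg _)
              (hb1.const_mul _) (ae_of_all _ fun x => ?_)
            dsimp only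
            by_cases hx : x ∈ Metric.closedBall (0:R2) ε
            · rw [← sub_one_mul, norm_mul, Complex.norm_real,
                Real.norm_of_nonneg (b.nonneg_normed x)]
              gcongr
              · exact b.nonneg_normed x
              · unfold ch
                calc _ ≤ ‖rdot x ξ‖ := Real.norm_exp_I_mul_ofReal_sub_one_le
                  _ ≤ ‖x‖ * ‖ξ‖ := by rw [rdot_eq]; exact norm_inner_le_norm _ _
                  _ ≤ _ := by gcongr; simpa using hx
            · have : b.normed volume x = 0 := by
                rw [← hsupp] at hx
                exact image_eq_zero_of_notMem_tsupport hx
              simp [this]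
        _ = ε * ‖ξ‖ := by rw [integral_const_mul, b.integral_normed, mul_one]
    · exact hb1.ofReal.bdd_mul (c := 1) (by fun_prop) (by simp [ch_norm])
    · exact hb1.ofReal

end SL
end

noncomputable section
open MeasureTheory Complex Filter Topology
open scoped Real NNReal ContDiff FourierTransform ComplexConjugate

namespace SL

/-- weight `(1+|ξ|²)^{1/4}` -/
def p (ξ : R2) : ℝ := (1 + ‖ξ‖ ^ 2) ^ (1 / 4 : ℝ)

lemma p_pos (ξ : R2) : 0 < p ξ := by unfold p; positivity

lemma p_ne (ξ : R2) : (p ξ : ℂ) ≠ 0 := by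
  rw [Complex.ofReal_ne_zero]; exact (p_pos ξ).ne'

@[fun_prop]
lemma p_cont : Continuous p := by
  unfold p
  refine Continuous.rpow_const (by fun_prop) fun x => Or.inl (by positivity)

lemma p_pow (ξ : R2) : p ξ ^ 4 = 1 + ‖ξ‖ ^ 2 := by
  unfold p
  rw [← Real.rpow_natCast, ← Real.rpow_mul (by positivity)]; norm_num

lemma w_neg (ξ : R2) : ((1 : ℝ) + ‖ξ‖ ^ 2) ^ (-(1/2) : ℝ) = (p ξ ^ 2)⁻¹ := by
  rw [Real.rpow_neg (by positivity), ← Real.rpow_natCast (p ξ), p, ← Real.rpow_mul (by positivity)]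
  norm_num

lemma w_pos (ξ : R2) : ((1 : ℝ) + ‖ξ‖ ^ 2) ^ (1/2 : ℝ) = p ξ ^ 2 := by
  rw [← Real.rpow_natCast (p ξ), p, ← Real.rpow_mul (by positivity)]
  norm_num

lemma one_le_p (ξ : R2) : 1 ≤ p ξ := by
  unfold p; exact Real.one_le_rpow (by nlinarith [norm_nonneg ξ]) (by norm_num)

lemma peetre (ξ η : R2) : 1 + ‖ξ + η‖ ^ 2 ≤ 2 * (1 + ‖ξ‖ ^ 2) * (1 + ‖η‖ ^ 2) := by
  have h := norm_add_le ξ η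
  have h1 : ‖ξ + η‖ ^ 2 ≤ (‖ξ‖ + ‖η‖) ^ 2 := by gcongr
  nlinarith [sq_nonneg (‖ξ‖ - ‖η‖), mul_nonneg (sq_nonneg ‖ξ‖) (sq_nonneg ‖η‖)]

lemma p_add (ξ η : R2) : p (ξ + η) ≤ 2 * p ξ * p η := by
  have h1 := p_pos ξ; have h2 := p_pos η
  refine le_of_pow_le_pow_left₀ (n := 4) (by norm_num) (by positivity) ?_
  rw [mul_pow, mul_pow, p_pow, p_pow, p_pow]
  refine (peetre ξ η).trans ?_
  gcongr; norm_num

lemma p_le (ξ : R2) : p ξ ≤ 1 + ‖ξ‖ ^ 2 := by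
  rw [← p_pow]; exact le_self_pow₀ (one_le_p ξ) (by norm_num)

/-- decaying weight -/
def q (ξ : R2) : ℝ := ((1 + ‖ξ‖ ^ 2) ^ 2)⁻¹

lemma q_pos (ξ : R2) : 0 < q ξ := by unfold q; positivity

@[fun_prop]
lemma q_cont : Continuous q := by
  unfold q
  exact Continuous.inv₀ (by fun_prop) fun x => by positivity

lemma q_le_one (ξ : R2) : q ξ ≤ 1 := by
  unfold q
  exact inv_le_one_of_one_le₀ (one_le_pow₀ (by nlinarith [norm_nonneg ξ]))

lemma q_int : Integrable q := by
  have := integrable_rpow_neg_one_add_norm_sq (E := R2) (μ := volume) (r := 4) (by simp; norm_num)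
  refine this.congr (ae_of_all _ fun x => ?_)
  dsimp only
  rw [show (-4 / 2 : ℝ) = -((2 : ℕ) : ℝ) by norm_num, Real.rpow_neg (by positivity),
    Real.rpow_natCast]
  rfl

lemma q_memLp : MemLp q 2 := by
  refine (memLp_two_iff_integrable_sq q_cont.aestronglyMeasurable).2 ?_
  refine q_int.mono' (by fun_prop) (ae_of_all _ fun x => ?_)
  rw [Real.norm_of_nonneg (by positivity), sq]
  exact mul_le_of_le_one_left (q_pos x).le (q_le_one x)

lemma q_neg (ξ : R2) : q (-ξ) = q ξ := by simp [q]

lemma memLp_of_q {f : R2 → ℂ} (hf : AEStronglyMeasurable f) {C : ℝ} (h : ∀ x, ‖f x‖ ≤ C * q x) :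
    MemLp f 2 :=
  (q_memLp.const_mul C).mono' hf (ae_of_all _ h)

lemma IsT.decay_p {φ : R2 → ℂ} (h : IsT φ) :
    ∃ C, 0 ≤ C ∧ ∀ ξ, p ξ * ‖testFT φ ξ‖ ≤ C * q ξ := by
  obtain ⟨C, hC, h⟩ := h.decay 3
  refine ⟨C, hC, fun ξ => ?_⟩
  calc p ξ * ‖testFT φ ξ‖ ≤ (1 + ‖ξ‖ ^ 2) * (C * ((1 + ‖ξ‖ ^ 2) ^ 3)⁻¹) := by
        gcongr
        · exact p_le ξ
        · exact h ξ
    _ = _ := by unfold q; field_simp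

lemma IsT.memLp_p {φ : R2 → ℂ} (h : IsT φ) : MemLp (fun ξ => testFT φ ξ * p ξ) 2 := by
  obtain ⟨C, hC, hb⟩ := h.decay_p
  have := h.testFT_cont
  refine memLp_of_q (C := C) (by fun_prop) fun x => ?_
  rw [norm_mul, Complex.norm_real, Real.norm_of_nonneg (p_pos x).le, mul_comm]
  exact hb x

/-- uniform bound for translates -/
lemma IsT.decay_shift {φ : R2 → ℂ} (h : IsT φ) :
    ∃ C, 0 ≤ C ∧ ∀ ξ η, p η * ‖testFT φ (η - ξ)‖ ≤ C * (1 + ‖ξ‖ ^ 2) ^ 3 * q η := by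
  obtain ⟨C, hC, h⟩ := h.decay 3
  refine ⟨8 * C, by positivity, fun ξ η => ?_⟩
  have h1 : (1 + ‖η‖ ^ 2) ≤ 2 * (1 + ‖η - ξ‖ ^ 2) * (1 + ‖ξ‖ ^ 2) := by
    simpa using peetre (η - ξ) ξ
  have h2 : ((1 + ‖η - ξ‖ ^ 2) ^ 3)⁻¹ ≤ 8 * (1 + ‖ξ‖ ^ 2) ^ 3 * ((1 + ‖η‖ ^ 2) ^ 3)⁻¹ := by
    rw [inv_le_iff_one_le_mul₀ (by positivity), ← div_eq_mul_inv, div_mul_eq_mul_div,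
      le_div_iff₀ (by positivity), one_mul]
    calc (1 + ‖η‖ ^ 2) ^ 3 ≤ (2 * (1 + ‖η - ξ‖ ^ 2) * (1 + ‖ξ‖ ^ 2)) ^ 3 := by gcongr
      _ = _ := by ring
  calc p η * ‖testFT φ (η - ξ)‖ ≤ (1 + ‖η‖ ^ 2) * (C * ((1 + ‖η - ξ‖ ^ 2) ^ 3)⁻¹) := by
        gcongr
        · exact p_le η
        · exact h _
    _ ≤ (1 + ‖η‖ ^ 2) * (C * (8 * (1 + ‖ξ‖ ^ 2) ^ 3 * ((1 + ‖η‖ ^ 2) ^ 3)⁻¹)) := by gcongr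
    _ = _ := by unfold q; field_simp

/-- Schur-type integrability. -/
lemma schur {χ a b : R2 → ℂ} (hχ : IsT χ) (ha : MemLp (fun ξ => a ξ / p ξ) 2)
    (hb : MemLp (fun ξ => b ξ * p ξ) 2) (ham : AEStronglyMeasurable a)
    (hbm : AEStronglyMeasurable b) :
    Integrable (fun z : R2 × R2 => testFT χ (z.1 - z.2) * (a z.1 * b z.2))
      (volume.prod volume) := by
  obtain ⟨C, hC, hb'⟩ := hχ.decay_p
  have hA : Integrable fun x => ‖a x / p x‖ ^ 2 :=
    (memLp_two_iff_integrable_sq_norm ha.1).1 ha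
  have hB : Integrable fun x => ‖b x * p x‖ ^ 2 :=
    (memLp_two_iff_integrable_sq_norm hb.1).1 hb
  have i1 := hB.convolution_integrand (ContinuousLinearMap.mul ℝ ℝ) q_int
  have i2 := (hA.convolution_integrand (ContinuousLinearMap.mul ℝ ℝ) q_int).swap
  have i3 := (i1.add i2).const_mul C
  refine i3.mono' ?_ (ae_of_all _ fun z => ?_)
  · refine AEStronglyMeasurable.mul ?_ ?_
    · exact (hχ.testFT_cont.comp (continuous_fst.sub continuous_snd)).aestronglyMeasurable
    · exact ham.comp_fst.mul hbm.comp_snd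
  · obtain ⟨x, y⟩ := z
    simp only [Pi.add_apply, Function.comp_apply, Prod.swap, ContinuousLinearMap.mul_apply']
    have hq : q (y - x) = q (x - y) := by rw [← q_neg, neg_sub]
    rw [hq]
    set A := ‖a x / p x‖ with hAd
    set B := ‖b y * p y‖ with hBd
    have eA : ‖a x‖ = p x * A := by
      rw [hAd, norm_div, Complex.norm_real, Real.norm_of_nonneg (p_pos x).le]
      field_simp [(p_pos x).ne']
    have eB : p y * ‖b y‖ = B := by
      rw [hBd, norm_mul, Complex.norm_real, Real.norm_of_nonneg (p_pos y).le, mul_comm]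
    have hA0 : 0 ≤ A := norm_nonneg _
    have hB0 : 0 ≤ B := norm_nonneg _
    have hpa : p x ≤ 2 * p (x - y) * p y := by simpa using p_add (x - y) y
    calc ‖testFT χ (x - y) * (a x * b y)‖ = p x * (‖testFT χ (x - y)‖ * A * ‖b y‖) := by
          rw [norm_mul, norm_mul, eA]; ring
      _ ≤ 2 * p (x - y) * p y * (‖testFT χ (x - y)‖ * A * ‖b y‖) := by gcongr
      _ = 2 * (p (x - y) * ‖testFT χ (x - y)‖) * (A * (p y * ‖b y‖)) := by ring
      _ ≤ 2 * (C * q (x - y)) * (A * B) := by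
          rw [eB]; have := hb' (x - y); gcongr
      _ = C * (q (x - y) * (2 * A * B)) := by ring
      _ ≤ C * (q (x - y) * (B ^ 2 + A ^ 2)) := by
          have := (q_pos (x - y)).le
          gcongr; nlinarith [sq_nonneg (A - B)]
      _ = _ := by ring

/-- The basic Hilbert space. -/
abbrev L2 : Type := Lp ℂ 2 (volume : Measure R2)

lemma inner_toLp {a : R2 → ℂ} (ha : MemLp a 2) (u : L2) :
    inner ℂ (ha.toLp a) u = ∫ ξ, u ξ * conj (a ξ) := by
  rw [L2.inner_def]
  refine integral_congr_ae (ha.coeFn_toLp.mono fun x hx => ?_)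
  dsimp only
  rw [hx]; rfl

lemma norm_toLp_sq {a : R2 → ℂ} (ha : MemLp a 2) : ‖ha.toLp a‖ ^ 2 = ∫ ξ, ‖a ξ‖ ^ 2 := by
  have h := inner_self_eq_norm_sq_to_K (𝕜 := ℂ) (ha.toLp a)
  rw [inner_toLp] at h
  have h2 : ∫ ξ, (ha.toLp a) ξ * conj (a ξ) = ((∫ ξ, ‖a ξ‖ ^ 2 : ℝ) : ℂ) := by
    rw [← integral_complex_ofReal]
    refine integral_congr_ae (ha.coeFn_toLp.mono fun x hx => ?_)
    dsimp only
    rw [hx, Complex.mul_conj, Complex.normSq_eq_norm_sq]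
  rw [h2] at h
  exact (Complex.ofReal_injective (by simpa using h)).symm

/-- The function `p u`, the Fourier transform corresponding to `u`. -/
lemma memLp_u (u : L2) : MemLp (fun ξ => (p ξ * u ξ) / p ξ) 2 := by
  refine (Lp.memLp u).congr_norm ?_ (ae_of_all _ fun x => ?_)
  · have := (Lp.memLp u).1
    have h2 : AEStronglyMeasurable (fun ξ => (p ξ : ℂ)) (volume : Measure R2) := by fun_prop
    have h3 : (fun ξ => (p ξ * u ξ) / p ξ) = u := by
      ext x; rw [mul_div_cancel_left₀ _ (p_ne x)]
    rw [h3]; exact this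
  · rw [mul_div_cancel_left₀ _ (p_ne x)]

lemma meas_pu (u : L2) : AEStronglyMeasurable (fun ξ => (p ξ * u ξ : ℂ)) (volume : Measure R2) := by
  have := (Lp.memLp u).1
  have h2 : AEStronglyMeasurable (fun ξ => (p ξ : ℂ)) (volume : Measure R2) := by fun_prop
  exact h2.mul this

/-- representer -/
lemma IsT.memLp_tau {φ : R2 → ℂ} (h : IsT φ) : MemLp (fun ξ => conj (testFT φ ξ * p ξ)) 2 := by
  have := h.testFT_cont
  refine h.memLp_p.congr_norm (by fun_prop) (ae_of_all _ fun x => by simp)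

/-- tester -/
def tau {φ : R2 → ℂ} (h : IsT φ) : L2 := h.memLp_tau.toLp _

lemma inner_tau {φ : R2 → ℂ} (h : IsT φ) (u : L2) :
    inner ℂ (tau h) u = ∫ ξ, (p ξ * u ξ) * testFT φ ξ := by
  rw [tau, inner_toLp]
  congr 1; ext ξ; rw [Complex.conj_conj]; ring

/-- The closed subspace of `L²` corresponding to `H̃^{-1/2}(Γ)`. -/
def V (Γ : Set R2) : Submodule ℂ L2 :=
  (Submodule.span ℂ {x | ∃ (φ : R2 → ℂ) (h : IsT φ), tsupport φ ∩ closure Γ = ∅ ∧ x = tau h})ᗮ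

lemma mem_V {Γ : Set R2} {u : L2} : u ∈ V Γ ↔ ∀ φ : R2 → ℂ, IsT φ → tsupport φ ∩ closure Γ = ∅ →
    ∫ ξ, (p ξ * u ξ) * testFT φ ξ = 0 := by
  unfold V
  rw [Submodule.mem_orthogonal]
  constructor
  · intro h φ hφ hs
    rw [← inner_tau hφ]
    exact h _ (Submodule.subset_span ⟨φ, hφ, hs, rfl⟩)
  · intro h v hv
    refine Submodule.span_induction ?_ ?_ ?_ ?_ hv
    · rintro x ⟨φ, hφ, hs, rfl⟩
      rw [inner_tau, h φ hφ hs]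
    · simp
    · intro x y _ _ hx hy; rw [inner_add_left, hx, hy, add_zero]
    · intro a x _ hx; rw [inner_smul_left, hx, mul_zero]

instance (Γ : Set R2) : CompleteSpace (V Γ) := by
  unfold V; exact (Submodule.isClosed_orthogonal _).completeSpace_coe

/-- cutoff functions -/
structure Cut (Γ : Set R2) (χ : R2 → ℂ) : Prop where
  isT : IsT χ
  one : ∃ W : Set R2, IsOpen W ∧ closure Γ ⊆ W ∧ ∀ x ∈ W, χ x = 1

lemma exists_cut {Γ : Set R2} (hb : Bornology.IsBounded Γ) : ∃ χ, Cut Γ χ := by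
  obtain ⟨R, hR⟩ := hb.closure.subset_closedBall (0 : R2)
  let b : ContDiffBump (0 : R2) := ⟨|R| + 1, |R| + 2, by positivity, by linarith⟩
  refine ⟨fun x => (b x : ℂ), ⟨Complex.ofRealCLM.contDiff.comp b.contDiff,
    b.hasCompactSupport.comp_left Complex.ofReal_zero⟩, Metric.ball 0 (|R| + 1), Metric.isOpen_ball,
    fun x hx => ?_, fun x hx => ?_⟩
  · have := hR hx
    simp only [Metric.mem_closedBall, dist_zero_right, Metric.mem_ball] at *
    linarith [le_abs_self R]
  · rw [b.one_of_mem_closedBall (Metric.ball_subset_closedBall hx), Complex.ofReal_one]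

lemma memLp_kap {χ : R2 → ℂ} (hχ : IsT χ) (ξ : R2) :
    MemLp (fun η => ((((2 * π) ^ 2)⁻¹ : ℝ) : ℂ) * conj (p η * testFT χ (η - ξ))) 2 := by
  obtain ⟨C, hC, hb⟩ := hχ.decay_shift
  have := hχ.testFT_cont
  refine (memLp_of_q (C := C * (1 + ‖ξ‖ ^ 2) ^ 3) (by fun_prop) fun x => ?_).const_mul _
  rw [RCLike.norm_conj, norm_mul, Complex.norm_real, Real.norm_of_nonneg (p_pos x).le]
  exact hb ξ x

/-- reproducing kernel -/
def kap {χ : R2 → ℂ} (hχ : IsT χ) (ξ : R2) : L2 := (memLp_kap hχ ξ).toLp _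

lemma inner_kap {χ : R2 → ℂ} (hχ : IsT χ) (ξ : R2) (u : L2) : inner ℂ (kap hχ ξ) u =
    ((((2 * π) ^ 2)⁻¹ : ℝ) : ℂ) * ∫ η, testFT χ (η - ξ) * (p η * u η) := by
  rw [kap, inner_toLp, ← integral_const_mul]
  congr 1; ext η
  rw [map_mul, Complex.conj_conj, Complex.conj_ofReal]; ring

lemma kap_cont {χ : R2 → ℂ} (hχ : IsT χ) : Continuous (kap hχ) := by
  obtain ⟨C, hC, hb⟩ := hχ.decay_shift
  have hc := hχ.testFT_cont
  rw [continuous_iff_continuousAt]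
  intro ξ₀
  rw [ContinuousAt, tendsto_iff_norm_sub_tendsto_zero]
  set c : ℂ := ((((2 * π) ^ 2)⁻¹ : ℝ) : ℂ) with hcd
  set f : R2 → R2 → ℂ := fun ξ η => c * conj (p η * testFT χ (η - ξ)) with hf
  have e : ∀ ξ, ‖kap hχ ξ - kap hχ ξ₀‖ ^ 2 = ∫ η, ‖f ξ η - f ξ₀ η‖ ^ 2 := by
    intro ξ
    unfold kap
    rw [← MemLp.toLp_sub, norm_toLp_sq]; rfl
  have bd : ∀ ξ, ‖ξ‖ ≤ ‖ξ₀‖ + 1 → ∀ η, ‖f ξ η‖ ≤ ‖c‖ * C * (1 + (‖ξ₀‖ + 1) ^ 2) ^ 3 * q η := by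
    intro ξ hξ η
    rw [hf]; dsimp only
    rw [norm_mul, RCLike.norm_conj, norm_mul, Complex.norm_real (p η),
      Real.norm_of_nonneg (p_pos η).le]
    have := (q_pos η).le
    calc _ ≤ ‖c‖ * (C * (1 + ‖ξ‖ ^ 2) ^ 3 * q η) := mul_le_mul_of_nonneg_left (hb ξ η) (norm_nonneg _)
      _ ≤ ‖c‖ * (C * (1 + (‖ξ₀‖ + 1) ^ 2) ^ 3 * q η) := by gcongr
      _ = _ := by ring
  have lim : Tendsto (fun ξ => ∫ η, ‖f ξ η - f ξ₀ η‖ ^ 2) (𝓝 ξ₀) (𝓝 (∫ η : R2, (0:ℝ))) := by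
    set D := ‖c‖ * C * (1 + (‖ξ₀‖ + 1) ^ 2) ^ 3 with hD
    refine tendsto_integral_filter_of_dominated_convergence (fun η => (2 * D) ^ 2 * q η ^ 2) ?_ ?_ ?_ ?_
    · exact Eventually.of_forall fun ξ => by fun_prop
    · have : ∀ᶠ ξ in 𝓝 ξ₀, ‖ξ‖ < ‖ξ₀‖ + 1 :=
        continuous_norm.continuousAt.eventually_lt continuousAt_const (by simp)
      filter_upwards [this] with ξ hξ
      refine ae_of_all _ fun η => ?_
      rw [Real.norm_of_nonneg (by positivity), ← mul_pow]
      gcongr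
      calc _ ≤ ‖f ξ η‖ + ‖f ξ₀ η‖ := norm_sub_le _ _
        _ ≤ D * q η + D * q η := by
            gcongr
            · exact bd ξ hξ.le η
            · exact bd ξ₀ (by linarith) η
        _ = _ := by ring
    · exact ((memLp_two_iff_integrable_sq q_cont.aestronglyMeasurable).1 q_memLp).const_mul _
    · refine ae_of_all _ fun η => ?_
      have : Continuous fun ξ => ‖f ξ η - f ξ₀ η‖ ^ 2 := by fun_prop
      simpa using this.tendsto ξ₀
  rw [integral_zero] at lim
  have := lim.sqrt
  simp_rw [← e] at this
  simpa using this

/-- The continuous representative of the Fourier transform. -/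
def ftr {χ : R2 → ℂ} (hχ : IsT χ) (u : L2) (ξ : R2) : ℂ := inner ℂ (kap hχ ξ) u

lemma ftr_cont {χ : R2 → ℂ} (hχ : IsT χ) (u : L2) : Continuous (ftr hχ u) :=
  (kap_cont hχ).inner continuous_const

/-- Reproducing property. -/
lemma repro {Γ : Set R2} {χ : R2 → ℂ} (hχ : Cut Γ χ) {u : L2} (hu : u ∈ V Γ) :
    ∀ᵐ ξ, ftr hχ.isT u ξ = p ξ * u ξ := by
  set F : R2 → ℂ := fun ξ => p ξ * u ξ with hF
  set Ft := ftr hχ.isT u with hFt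
  obtain ⟨W, hW, hΓW, hW1⟩ := hχ.one
  have hintg : ∀ φ, IsT φ → Integrable (fun ξ => (Ft ξ - F ξ) * testFT φ ξ) ∧
      ∫ ξ, (Ft ξ - F ξ) * testFT φ ξ = 0 := by
    intro φ hφ
    have hS := schur hχ.isT (memLp_u u) hφ.memLp_p (meas_pu u)
      hφ.testFT_cont.aestronglyMeasurable
    have e1 : ∀ ξ, Ft ξ * testFT φ ξ = ((((2 * π) ^ 2)⁻¹ : ℝ) : ℂ) *
        ∫ η, testFT χ (η - ξ) * (F η * testFT φ ξ) := by
      intro ξ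
      rw [hFt, ftr, inner_kap, mul_assoc, ← integral_mul_const]
      congr 2; ext η; rw [hF]; ring
    have i1 : Integrable fun ξ => Ft ξ * testFT φ ξ := by
      simp_rw [e1]
      exact hS.integral_prod_right.const_mul _
    have i2 : Integrable fun ξ => F ξ * testFT φ ξ := by
      have := hφ.memLp_p.integrable_mul (Lp.memLp u)
      refine this.congr (ae_of_all _ fun x => ?_)
      simp only [Pi.mul_apply, hF]; ring
    have e2 : ∫ ξ, Ft ξ * testFT φ ξ = ∫ η, F η * testFT (fun x => χ x * φ x) η := by
      simp_rw [e1]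
      rw [integral_const_mul, ← integral_integral_swap hS, ← integral_const_mul]
      congr 1; ext η
      rw [hχ.isT.testFT_mul hφ, ← integral_const_mul, ← integral_const_mul, ← integral_const_mul]
      congr 1; ext ξ; ring
    have hd := hφ.sub (hχ.isT.mul hφ)
    have e3 : ∫ ξ, F ξ * testFT (fun x => φ x - χ x * φ x) ξ = 0 := by
      refine mem_V.1 hu _ hd ?_
      have : tsupport (fun x => φ x - χ x * φ x) ⊆ Wᶜ := by
        refine closure_minimal (fun x hx hxW => hx ?_) hW.isClosed_compl
        simp [hW1 x hxW]
      rw [Set.eq_empty_iff_forall_notMem]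
      rintro x ⟨h1, h2⟩
      exact this h1 (hΓW h2)
    have i3 : Integrable fun ξ => F ξ * testFT (fun x => χ x * φ x) ξ := by
      have := (hχ.isT.mul hφ).memLp_p.integrable_mul (Lp.memLp u)
      refine this.congr (ae_of_all _ fun x => ?_)
      simp only [Pi.mul_apply, hF]; ring
    simp_rw [testFT_sub hφ (hχ.isT.mul hφ), mul_sub] at e3
    rw [integral_sub i2 i3] at e3
    refine ⟨?_, ?_⟩
    · simp_rw [sub_mul]; exact i1.sub i2
    · simp_rw [sub_mul]
      rw [integral_sub i1 i2, e2]
      linear_combination -e3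
  have hz : ∀ n : ℕ, ∃ ρ : R2 → ℂ, (∀ᵐ ξ, (Ft ξ - F ξ) * testFT ρ ξ = 0) ∧
      ∀ ξ, ‖testFT ρ ξ - 1‖ ≤ (1 / ((n:ℝ) + 1)) * ‖ξ‖ := by
    intro n
    obtain ⟨ρ, hρ, -, -, h1⟩ := exists_mollifier (ε := 1 / ((n:ℝ) + 1)) (by positivity)
    refine ⟨ρ, ae_zero_of_ch (hintg ρ hρ).1 fun a => ?_, h1⟩
    rw [← (hintg _ (hρ.shift a)).2]
    congr 1; ext ξ
    rw [testFT_shift]; ring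
  choose ρ hρ1 hρ2 using hz
  filter_upwards [ae_all_iff.2 hρ1] with ξ hξ
  have : Tendsto (fun n : ℕ => (1 / ((n:ℝ) + 1)) * ‖ξ‖) atTop (𝓝 0) := by
    simpa using tendsto_one_div_add_atTop_nhds_zero_nat.mul_const ‖ξ‖
  obtain ⟨n, hn⟩ := (this.eventually_lt_const one_pos).exists
  have h0 : testFT (ρ n) ξ ≠ 0 := by
    intro h0
    have := hρ2 n ξ
    rw [h0] at this
    simp only [zero_sub, norm_neg, norm_one] at this
    linarith
  exact sub_eq_zero.1 ((mul_eq_zero.1 (hξ n)).resolve_right h0)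

end SL
end

noncomputable section
open MeasureTheory Complex Filter Topology
open scoped Real NNReal ContDiff FourierTransform ComplexConjugate Manifold

namespace SL

/-- Around each point one can push the closure of the domain inside. -/
lemma geom {Γ : Set R2} (hΓ : IsLipschitzDomain Γ) (x : R2) :
    ∃ (U : Set R2) (v : R2), IsOpen U ∧ x ∈ U ∧ ∀ K, IsCompact K → K ⊆ U →
      ∃ t₀ > (0:ℝ), ∀ t, 0 < t → t < t₀ → ∃ ε > (0:ℝ), ∀ y ∈ K ∩ closure Γ,
        Metric.ball (y + t • v) ε ⊆ Γ := by
  obtain ⟨ho, -, -, hl⟩ := hΓ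
  have key : ∀ (K : Set R2) (w : R2), IsCompact K → (∀ y ∈ K ∩ closure Γ, y + w ∈ Γ) →
      ∃ ε > (0:ℝ), ∀ y ∈ K ∩ closure Γ, Metric.ball (y + w) ε ⊆ Γ := by
    intro K w hK h
    have hc : IsCompact ((fun y => y + w) '' (K ∩ closure Γ)) :=
      (hK.inter_right isClosed_closure).image (by fun_prop)
    obtain ⟨δ, hδ, hs⟩ := hc.exists_thickening_subset_open ho (by rintro _ ⟨y, hy, rfl⟩; exact h y hy)
    refine ⟨δ, hδ, fun y hy z hz => hs ?_⟩
    exact Metric.mem_thickening_iff.2 ⟨y + w, ⟨y, hy, rfl⟩, hz⟩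
  by_cases hx : x ∈ closure Γ
  · by_cases hx' : x ∈ Γ
    · refine ⟨Γ, 0, ho, hx', fun K hK hKU => ⟨1, one_pos, fun t ht _ => key K _ hK ?_⟩⟩
      intro y hy
      simpa using hKU hy.1
    · have hfr : x ∈ frontier Γ := by
        rw [ho.frontier_eq]; exact ⟨hx, hx'⟩
      obtain ⟨e, L, f, U, hf, hU, hxU, hUΓ⟩ := hl x hfr
      set v : R2 := e.symm (EuclideanSpace.single 1 1) with hv
      refine ⟨U, v, hU, hxU, fun K hK hKU => ?_⟩
      obtain ⟨δ, hδ, hs⟩ := hK.exists_thickening_subset_open hU hKU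
      have hv1 : ‖v‖ = 1 := by rw [hv]; simp
      refine ⟨δ, hδ, fun t ht htδ => key K _ hK fun y hy => ?_⟩
      have hyU : y + t • v ∈ U := by
        refine hs (Metric.mem_thickening_iff.2 ⟨y, hy.1, ?_⟩)
        simp [hv1, norm_smul, abs_of_pos ht, htδ]
      rw [hUΓ _ hyU]
      have e1 : e (y + t • v) = e y + t • EuclideanSpace.single 1 1 := by
        rw [map_add, map_smul, hv, LinearIsometryEquiv.apply_symm_apply]
      rw [e1]
      have hfc := hf.continuous
      have hle : f (e y 0) ≤ e y 1 := by
        by_contra hcon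
        push Not at hcon
        have hopen : IsOpen {z : R2 | e z 1 < f (e z 0)} :=
          isOpen_lt (by fun_prop) (by fun_prop)
        obtain ⟨z, ⟨hz1, hz2⟩, hz3⟩ := mem_closure_iff.1 hy.2 _ (hopen.inter hU) ⟨hcon, hKU hy.1⟩
        have := (hUΓ z hz2).1 hz3
        exact lt_asymm this hz1
      simp
      linarith
  · refine ⟨(closure Γ)ᶜ, 0, isClosed_closure.isOpen_compl, hx, fun K hK hKU =>
      ⟨1, one_pos, fun t ht _ => ⟨1, one_pos, fun y hy => absurd hy.2 (hKU hy.1)⟩⟩⟩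

lemma memLp_of_mul_p {G : R2 → ℂ} (hGm : AEStronglyMeasurable G)
    (hG : MemLp (fun ξ => G ξ * p ξ) 2) : MemLp G 2 := by
  refine hG.mono hGm (ae_of_all _ fun x => ?_)
  rw [norm_mul, Complex.norm_real, Real.norm_of_nonneg (p_pos x).le]
  exact le_mul_of_one_le_right (norm_nonneg _) (one_le_p x)

lemma IsT.moment {ρ : R2 → ℂ} (h : IsT ρ) (n : ℕ) :
    MemLp (fun η => ((‖η‖ ^ n : ℝ) : ℂ) * testFT ρ η) 2 := by
  obtain ⟨C, hC, hb⟩ := h.decay (n + 2)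
  have := h.testFT_cont
  refine memLp_of_q (C := C) (by fun_prop) fun x => ?_
  rw [norm_mul, Complex.norm_real, Real.norm_of_nonneg (by positivity)]
  calc ‖x‖ ^ n * ‖testFT ρ x‖ ≤ (1 + ‖x‖ ^ 2) ^ n * (C * ((1 + ‖x‖ ^ 2) ^ (n + 2))⁻¹) := by
        gcongr
        · nlinarith [sq_nonneg (‖x‖ - 1)]
        · exact hb x
    _ = C * q x := by unfold q; field_simp; ring

lemma local_step {Γ : Set R2} {f : L2} (hf : f ∈ V Γ) {G : R2 → ℂ}
    (hGm : AEStronglyMeasurable G) (hG : MemLp (fun ξ => G ξ * p ξ) 2)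
    (h0 : ∀ φ, IsT φ → tsupport φ ⊆ Γ → ∫ ξ, G ξ * testFT φ ξ = 0)
    {χ : R2 → ℂ} (hχ : IsT χ) {w : R2} {ε δ : ℝ} (hε : 0 < ε) (hδε : δ ≤ ε / 3)
    (hb : ∀ y ∈ tsupport χ ∩ closure Γ, Metric.ball (y + w) ε ⊆ Γ) {ρ : R2 → ℂ} (hρ : IsT ρ)
    (hρs : tsupport ρ ⊆ Metric.closedBall 0 δ) (hρb : ∀ ξ, ‖testFT ρ ξ‖ ≤ 1) :
    ∫ z : R2 × R2, (ch (-w) z.2 * conj (testFT ρ z.2)) *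
      (testFT χ (z.1 - z.2) * ((p z.1 * f z.1) * conj (G z.2))) ∂(volume.prod volume) = 0 := by
  have hρc := hρ.testFT_cont
  have hGL := memLp_of_mul_p hGm hG
  set m : R2 → ℂ := fun η => ch (-w) η * conj (testFT ρ η) with hm
  have hmc : Continuous m := by fun_prop
  have hmb : ∀ η, ‖m η‖ ≤ 1 := fun η => by
    rw [hm]; dsimp only; rw [norm_mul, ch_norm, one_mul, RCLike.norm_conj]; exact hρb η
  set G1 : R2 → ℂ := fun η => m η * conj (G η) with hG1
  have hcG : AEStronglyMeasurable (fun η => conj (G η)) :=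
    Complex.continuous_conj.comp_aestronglyMeasurable hGm
  have hmom : ∀ n : ℕ, Integrable fun η => ‖η‖ ^ n * ‖G1 η‖ := by
    intro n
    have := ((hρ.moment n).integrable_mul hGL).norm
    refine this.congr (ae_of_all _ fun x => ?_)
    simp only [hG1, hm, Pi.mul_apply, norm_mul, ch_norm, RCLike.norm_conj, Complex.norm_real]
    rw [Real.norm_of_nonneg (by positivity)]; ring
  have hG1i : Integrable G1 := by
    refine (integrable_norm_iff ?_).1 (by simpa using hmom 0)
    exact hmc.aestronglyMeasurable.mul hcG
  set g : R2 → ℂ := fun x => ∫ η, ch (-x) η * G1 η with hg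
  have hgs : ContDiff ℝ ∞ g := by
    have h1 : ContDiff ℝ ∞ (𝓕 G1) := Real.contDiff_fourier fun n _ => hmom n
    have h2 : g = fun x => 𝓕 G1 ((2 * π)⁻¹ • x) := by
      ext x
      rw [hg, Real.fourier_eq']
      dsimp only
      congr 1; ext η
      rw [smul_eq_mul]; congr 1
      unfold ch; congr 1
      rw [inner_smul_right, rdot_eq, inner_neg_left, real_inner_comm]
      push_cast
      field_simp
    rw [h2]
    exact h1.comp (contDiff_const_smul _)
  have hg0 : ∀ x, Metric.closedBall (x + w) δ ⊆ Γ → g x = 0 := by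
    intro x hx
    have hT := hρ.shift (x + w)
    have := h0 _ hT ?_
    · simp_rw [testFT_shift] at this
      have h2 := congrArg conj this
      rw [← integral_conj, map_zero] at h2
      rw [← h2, hg]; dsimp only
      congr 1; ext η
      simp only [hG1, hm, map_mul]
      rw [ch_add_left, map_mul, ch_neg_left, ch_neg_left]; ring
    · refine subset_trans ?_ hx
      intro y hy
      have h3 : tsupport (fun y => ρ (y - (x + w))) ⊆ (fun y => y - (x + w)) ⁻¹' tsupport ρ :=
        tsupport_comp_subset_preimage ρ (f := fun y : R2 => y - (x + w)) (by fun_prop)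
      have h4 := hρs (h3 hy)
      simpa [dist_eq_norm] using h4
  have hhT : IsT (fun x => χ x * g x) := ⟨hχ.1.mul hgs, hχ.2.mul_right⟩
  have hsupp : tsupport (fun x => χ x * g x) ∩ closure Γ = ∅ := by
    rw [Set.eq_empty_iff_forall_notMem]
    rintro x ⟨hx1, hx2⟩
    have hxχ : x ∈ tsupport χ := tsupport_mul_subset_left hx1
    have hbx := hb x ⟨hxχ, hx2⟩
    rw [tsupport, Metric.mem_closure_iff] at hx1
    obtain ⟨y, hy, hxy⟩ := hx1 (ε / 3) (by positivity)
    apply hy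
    have : g y = 0 := by
      refine hg0 y fun z hz => hbx ?_
      rw [Metric.mem_closedBall] at hz
      rw [Metric.mem_ball]
      have h5 : dist (y + w) (x + w) < ε / 3 := by rw [dist_add_right, dist_comm]; exact hxy
      linarith [dist_triangle z (y + w) (x + w)]
    simp [this]
  have hz := mem_V.1 hf _ hhT hsupp
  have hS := schur hχ (memLp_u f) (b := fun η => conj (G η)) ?_ (meas_pu f) hcG
  · have hS2 : Integrable (fun z : R2 × R2 => m z.2 *
      (testFT χ (z.1 - z.2) * ((p z.1 * f z.1) * conj (G z.2)))) (volume.prod volume) :=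
      hS.bdd_mul (c := 1) (hmc.comp continuous_snd).aestronglyMeasurable
        (ae_of_all _ fun z => hmb z.2)
    rw [integral_prod _ hS2, ← hz]
    congr 1; ext ξ
    rw [hg, testFT_mul hχ.int hG1i, ← integral_const_mul]
    congr 1; ext η
    rw [hG1]; ring
  · refine hG.congr_norm ?_ (ae_of_all _ fun x => by simp)
    exact hcG.mul (by fun_prop)

lemma local_zero {Γ : Set R2} {f : L2} (hf : f ∈ V Γ) {G : R2 → ℂ}
    (hGm : AEStronglyMeasurable G) (hG : MemLp (fun ξ => G ξ * p ξ) 2)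
    (h0 : ∀ φ, IsT φ → tsupport φ ⊆ Γ → ∫ ξ, G ξ * testFT φ ξ = 0)
    {χ : R2 → ℂ} (hχ : IsT χ) {v : R2}
    (hb : ∃ t₀ > (0:ℝ), ∀ t, 0 < t → t < t₀ → ∃ ε > (0:ℝ), ∀ y ∈ tsupport χ ∩ closure Γ,
        Metric.ball (y + t • v) ε ⊆ Γ) :
    ∫ z : R2 × R2, testFT χ (z.1 - z.2) * ((p z.1 * f z.1) * conj (G z.2))
      ∂(volume.prod volume) = 0 := by
  obtain ⟨t₀, ht₀, hb⟩ := hb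
  have hcG : AEStronglyMeasurable (fun η => conj (G η)) :=
    Complex.continuous_conj.comp_aestronglyMeasurable hGm
  have hS := schur hχ (memLp_u f) (b := fun η => conj (G η))
    (hG.congr_norm (hcG.mul (by fun_prop)) (ae_of_all _ fun x => by simp)) (meas_pu f) hcG
  have hn : ∀ n : ℕ, ∃ ρ : R2 → ℂ, IsT ρ ∧ (∀ ξ, ‖testFT ρ ξ‖ ≤ 1) ∧
      (∀ ξ, ‖testFT ρ ξ - 1‖ ≤ (1 / ((n:ℝ) + 1)) * ‖ξ‖) ∧
      ∫ z : R2 × R2, (ch (-((t₀ / 2 * (1 / ((n:ℝ) + 1))) • v)) z.2 * conj (testFT ρ z.2)) *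
      (testFT χ (z.1 - z.2) * ((p z.1 * f z.1) * conj (G z.2))) ∂(volume.prod volume) = 0 := by
    intro n
    obtain ⟨ε, hε, h1⟩ := hb (t₀ / 2 * (1 / ((n:ℝ) + 1))) (by positivity) (by
      have : (1 / ((n:ℝ) + 1)) ≤ 1 := by
        rw [div_le_one (by positivity)]; linarith [n.cast_nonneg (α := ℝ)]
      nlinarith)
    obtain ⟨ρ, hρ, hρs, hρ1, hρ2⟩ := exists_mollifier (ε := min (ε / 3) (1 / ((n:ℝ) + 1)))
      (by positivity)
    refine ⟨ρ, hρ, hρ1, fun ξ => (hρ2 ξ).trans ?_, ?_⟩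
    · gcongr; exact min_le_right _ _
    · exact local_step hf hGm hG h0 hχ hε (min_le_left _ _) h1 hρ hρs hρ1
  choose ρ hρ hρ1 hρ2 hρ3 using hn
  have hlim : Tendsto (fun n : ℕ => ∫ z : R2 × R2,
      (ch (-((t₀ / 2 * (1 / ((n:ℝ) + 1))) • v)) z.2 * conj (testFT (ρ n) z.2)) *
      (testFT χ (z.1 - z.2) * ((p z.1 * f z.1) * conj (G z.2))) ∂(volume.prod volume)) atTop
      (𝓝 (∫ z : R2 × R2, testFT χ (z.1 - z.2) * ((p z.1 * f z.1) * conj (G z.2))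
      ∂(volume.prod volume))) := by
    refine tendsto_integral_of_dominated_convergence
      (fun z => ‖testFT χ (z.1 - z.2) * ((p z.1 * f z.1) * conj (G z.2))‖) ?_ hS.norm ?_ ?_
    · intro n
      refine AEStronglyMeasurable.mul ?_ hS.aestronglyMeasurable
      have := (hρ n).testFT_cont
      refine Continuous.aestronglyMeasurable ?_
      fun_prop
    · intro n
      refine ae_of_all _ fun z => ?_
      rw [norm_mul, norm_mul (ch _ _), ch_norm, one_mul, RCLike.norm_conj]
      exact mul_le_of_le_one_left (norm_nonneg _) (hρ1 n _)
    · refine ae_of_all _ fun z => ?_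
      have l0 : Tendsto (fun n : ℕ => 1 / ((n:ℝ) + 1)) atTop (𝓝 0) :=
        tendsto_one_div_add_atTop_nhds_zero_nat
      have l1 : Tendsto (fun n : ℕ => ch (-((t₀ / 2 * (1 / ((n:ℝ) + 1))) • v)) z.2) atTop
          (𝓝 1) := by
        have hc : Continuous fun s : ℝ => ch (-((t₀ / 2 * s) • v)) z.2 := by fun_prop
        have := (hc.tendsto 0).comp l0
        simpa [ch_zero_left, Function.comp_def] using this
      have l2 : Tendsto (fun n : ℕ => testFT (ρ n) z.2) atTop (𝓝 1) := by
        rw [tendsto_iff_norm_sub_tendsto_zero]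
        refine squeeze_zero (fun n => norm_nonneg _) (fun n => hρ2 n z.2) ?_
        simpa using l0.mul_const ‖z.2‖
      have l3 := (Complex.continuous_conj.tendsto _).comp l2
      simpa using (l1.mul l3).mul_const
        (testFT χ (z.1 - z.2) * ((p z.1 * f z.1) * conj (G z.2)))
  simp_rw [hρ3] at hlim
  exact (tendsto_nhds_unique tendsto_const_nhds hlim).symm

lemma pou {K : Set R2} (hK : IsCompact K) (U : R2 → Set R2) (hU : ∀ x, IsOpen (U x))
    (hxU : ∀ x, x ∈ U x) : ∃ (s : Finset R2) (P : s → R2 → ℝ),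
      (∀ i, ContDiff ℝ ∞ (P i)) ∧ (∀ i, tsupport (P i) ⊆ U i) ∧ ∀ x ∈ K, ∑ i, P i x = 1 := by
  obtain ⟨s, hs⟩ := hK.elim_finite_subcover U hU
    (fun x _ => Set.mem_iUnion.2 ⟨x, hxU x⟩)
  obtain ⟨P, hP⟩ := SmoothPartitionOfUnity.exists_isSubordinate 𝓘(ℝ, R2)
    hK.isClosed (fun i : s => U i) (fun i => hU i) (by
      intro x hx
      have := hs hx
      simpa using this)
  refine ⟨s, fun i => P i, fun i => (P i).contMDiff.contDiff, fun i => hP i, fun x hx => ?_⟩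
  have := P.sum_eq_one hx
  rwa [finsum_eq_sum_of_fintype] at this

theorem dens {Γ : Set R2} (hΓ : IsLipschitzDomain Γ) {f : L2} (hf : f ∈ V Γ) {G : R2 → ℂ}
    (hGm : AEStronglyMeasurable G) (hG : MemLp (fun ξ => G ξ * p ξ) 2)
    (h0 : ∀ φ, IsT φ → tsupport φ ⊆ Γ → ∫ ξ, G ξ * testFT φ ξ = 0) :
    ∫ ξ, (p ξ * f ξ) * conj (G ξ) = 0 := by
  obtain ⟨χ, hχ⟩ := exists_cut hΓ.2.1
  have hcG : AEStronglyMeasurable (fun η => conj (G η)) :=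
    Complex.continuous_conj.comp_aestronglyMeasurable hGm
  have hb2 : MemLp (fun η => conj (G η) * p η) 2 :=
    hG.congr_norm (hcG.mul (by fun_prop)) (ae_of_all _ fun x => by
      simp only [norm_mul, RCLike.norm_conj])
  have hSch : ∀ θ, IsT θ → Integrable (fun z : R2 × R2 => testFT θ (z.1 - z.2) *
      ((p z.1 * f z.1) * conj (G z.2))) (volume.prod volume) := fun θ hθ =>
    schur (a := fun ξ => p ξ * f ξ) (b := fun η => conj (G η)) hθ (memLp_u f) hb2 (meas_pu f) hcG
  choose U v hU hxU hloc using geom hΓ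
  obtain ⟨s, P, hPc, hP, hP1⟩ := pou hχ.isT.2.isCompact U hU hxU
  have hPT : ∀ i : s, IsT (fun x => (P i x : ℂ) * χ x) := fun i =>
    ⟨(Complex.ofRealCLM.contDiff.comp (hPc i)).mul hχ.isT.1, hχ.isT.2.mul_left⟩
  have hsum : χ = fun x => ∑ i : s, (P i x : ℂ) * χ x := by
    ext x
    by_cases hx : x ∈ tsupport χ
    · have := hP1 x hx
      rw [← Finset.sum_mul, ← Complex.ofReal_sum, this]; simp
    · simp [image_eq_zero_of_notMem_tsupport hx]
  have hFT : ∀ ξ, testFT χ ξ = ∑ i : s, testFT (fun x => (P i x : ℂ) * χ x) ξ := by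
    intro ξ
    conv_lhs => rw [hsum]
    simp only [testFT_ch]
    rw [← integral_finsetSum]
    · congr 1; ext x; rw [Finset.mul_sum]
    · intro i _
      exact (hPT i).int.bdd_mul (c := 1) (by fun_prop) (by simp [ch_norm])
  have hzero : ∫ z : R2 × R2, testFT χ (z.1 - z.2) * ((p z.1 * f z.1) * conj (G z.2))
      ∂(volume.prod volume) = 0 := by
    simp_rw [hFT, Finset.sum_mul]
    rw [integral_finsetSum _ fun i _ => hSch _ (hPT i)]
    refine Finset.sum_eq_zero fun i _ => ?_
    have h1 : tsupport (fun x => (P i x : ℂ) * χ x) ⊆ U i := by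
      have h2 : tsupport (fun x => (P i x : ℂ) * χ x) ⊆ tsupport (P i) := by
        refine closure_mono fun x hx => ?_
        have hx' : (P i x : ℂ) * χ x ≠ 0 := hx
        have := left_ne_zero_of_mul hx'
        exact fun h => this (by rw [h]; simp)
      exact h2.trans (hP i)
    have h3 := hloc i _ (hPT i).2.isCompact h1
    exact local_zero hf hGm hG h0 (hPT i) h3
  rw [integral_prod_symm _ (hSch χ hχ.isT)] at hzero
  have hc : ((((2 * π) ^ 2)⁻¹ : ℝ) : ℂ) ≠ 0 := by
    rw [Complex.ofReal_ne_zero]; positivity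
  have e : ∀ᵐ η, (p η * f η) * conj (G η) = ((((2 * π) ^ 2)⁻¹ : ℝ) : ℂ) *
      ∫ ξ, testFT χ (ξ - η) * ((p ξ * f ξ) * conj (G η)) := by
    filter_upwards [repro hχ hf] with η hη
    rw [← hη, ftr, inner_kap, mul_assoc, ← integral_mul_const]
    congr 2; ext ξ; ring
  rw [integral_congr_ae e, integral_const_mul, hzero, mul_zero]

end SL
end


noncomputable section
open MeasureTheory Complex Filter Topology
open scoped Real NNReal ContDiff ComplexConjugate InnerProductSpace

namespace SL

lemma index_alg {E : Type*} [AddCommGroup E] [Module ℂ E] (G : E →ₗ[ℂ] E)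
    [FiniteDimensional ℂ G.range] :
    FiniteDimensional ℂ (LinearMap.id + G).ker ∧
      FiniteDimensional ℂ (E ⧸ (LinearMap.id + G).range) ∧
      Module.finrank ℂ (LinearMap.id + G).ker = Module.finrank ℂ (E ⧸ (LinearMap.id + G).range) := by
  set L := LinearMap.id + G with hL
  set W := G.range with hW
  have hLW : ∀ x ∈ W, L x ∈ W := by
    intro x hx
    simp only [hL, LinearMap.add_apply, LinearMap.id_apply]
    exact W.add_mem hx ⟨x, rfl⟩
  let LW : W →ₗ[ℂ] W := L.restrict hLW
  have hker : L.ker ≤ W := by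
    intro x hx
    have : x + G x = 0 := hx
    rw [eq_neg_of_add_eq_zero_left this]
    exact W.neg_mem ⟨x, rfl⟩
  have e1 : L.ker ≃ₗ[ℂ] LW.ker := by
    refine LinearEquiv.ofBijective (LinearMap.codRestrict _ (LinearMap.codRestrict W L.ker.subtype
      (fun x => hker x.2)) ?_) ⟨?_, ?_⟩
    · intro x
      rw [LinearMap.mem_ker]
      ext
      exact x.2
    · intro x y h
      have := congrArg (fun z : LW.ker => ((z : W) : E)) h
      exact Subtype.ext this
    · intro y
      refine ⟨⟨y, ?_⟩, rfl⟩
      have := y.2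
      rw [LinearMap.mem_ker] at this
      exact congrArg Subtype.val this
  have e2 : (W ⧸ LW.range) ≃ₗ[ℂ] (E ⧸ L.range) := by
    refine LinearEquiv.ofBijective (Submodule.mapQ LW.range L.range W.subtype ?_) ⟨?_, ?_⟩
    · rintro _ ⟨x, rfl⟩
      exact ⟨x, rfl⟩
    · rw [← LinearMap.ker_eq_bot, LinearMap.ker_eq_bot']
      intro q
      obtain ⟨w, rfl⟩ := Submodule.mkQ_surjective _ q
      intro h
      have h2 : (w : E) ∈ L.range := by
        rw [← Submodule.Quotient.mk_eq_zero]; exact h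
      obtain ⟨x, hx⟩ := h2
      have hx2 : x + G x = w := hx
      have hxW : x ∈ W := by
        rw [eq_sub_of_add_eq hx2]
        exact W.sub_mem w.2 ⟨x, rfl⟩
      rw [Submodule.mkQ_apply, Submodule.Quotient.mk_eq_zero]
      exact ⟨⟨x, hxW⟩, Subtype.ext hx⟩
    · intro q
      obtain ⟨x, rfl⟩ := Submodule.mkQ_surjective _ q
      refine ⟨Submodule.mkQ _ ⟨-G x, W.neg_mem ⟨x, rfl⟩⟩, ?_⟩
      simp only [Submodule.mkQ_apply, Submodule.mapQ_apply]
      rw [Submodule.Quotient.eq]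
      refine ⟨-x, ?_⟩
      simp [hL]
      abel
  refine ⟨e1.symm.finiteDimensional, e2.finiteDimensional, ?_⟩
  rw [e1.finrank_eq, ← e2.finrank_eq]
  have h1 := LW.finrank_range_add_finrank_ker
  have h2 := Submodule.finrank_quotient_add_finrank LW.range
  omega

lemma exists_basis {E : Type*} [AddCommGroup E] [Module ℂ E] (K : Submodule ℂ E)
    [FiniteDimensional ℂ K] {n : ℕ} (hn : Module.finrank ℂ K = n) :
    ∃ e : Fin n → E, LinearIndependent ℂ e ∧ Submodule.span ℂ (Set.range e) = K := by
  let e := Module.finBasisOfFinrankEq ℂ K hn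
  refine ⟨fun i => e i, e.linearIndependent.map' K.subtype (Submodule.ker_subtype _), ?_⟩
  have := congrArg (Submodule.map K.subtype) e.span_eq
  rwa [Submodule.map_span, ← Set.range_comp, Submodule.map_top, Submodule.range_subtype] at this

theorem fredholm {E : Type*} [NormedAddCommGroup E] [InnerProductSpace ℂ E] [CompleteSpace E]
    (A S R : E →L[ℂ] E) (hA : A = (1/2 : ℂ) • 1 + S + R) (hS : ‖S‖ ≤ 1/4)
    (hR : R ∈ closure {F : E →L[ℂ] E | FiniteDimensional ℂ F.range}) :
    ∃ (n : ℕ) (e e' : Fin n → E), LinearIndependent ℂ e ∧ Submodule.span ℂ (Set.range e) = A.ker ∧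
      LinearIndependent ℂ e' ∧ Submodule.span ℂ (Set.range e') = A.adjoint.ker ∧
      ∀ f, (∃ u, A u = f) ↔ ∀ i, inner ℂ (e' i) f = 0 := by
  obtain ⟨F, hF, hd⟩ := Metric.mem_closure_iff.1 hR (1/4) (by norm_num)
  have hF : FiniteDimensional ℂ F.range := hF
  rw [dist_eq_norm] at hd
  have hu : IsUnit ((1/2 : ℂ) • 1 + S + (R - F) : E →L[ℂ] E) := by
    have h1 : ‖(-2 : ℂ) • (S + (R - F))‖ < 1 := by
      rw [norm_smul]
      have := norm_add_le S (R - F)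
      norm_num
      linarith
    have h2 := isUnit_one_sub_of_norm_lt_one h1
    have h3 : ((1/2 : ℂ) • 1 + S + (R - F) : E →L[ℂ] E) =
        (1/2 : ℂ) • (1 - (-2 : ℂ) • (S + (R - F))) := by
      rw [smul_sub, smul_smul]; norm_num; abel
    rw [h3]
    have h4 : IsUnit (algebraMap ℂ (E →L[ℂ] E) (1/2)) := 
      (IsUnit.mk0 (1/2 : ℂ) (by norm_num)).map _
    rw [Algebra.smul_def]
    exact h4.mul h2
  obtain ⟨B, hB⟩ := hu
  let b : E ≃L[ℂ] E := ContinuousLinearEquiv.ofUnit B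
  have hb : ∀ x, b x = (1/2 : ℂ) • x + S x + (R x - F x) := fun x => by
    change (B : E →L[ℂ] E) x = _
    rw [hB]; simp
  have hAb : ∀ x, A x = b x + F x := by
    intro x; rw [hb, hA]; simp; abel
  let G : E →ₗ[ℂ] E := b.symm.toLinearEquiv.toLinearMap ∘ₗ F.toLinearMap
  have hG : FiniteDimensional ℂ G.range := by
    rw [LinearMap.range_comp]
    infer_instance
  obtain ⟨k1, k2, k3⟩ := index_alg G
  have hAL : A.toLinearMap = b.toLinearEquiv.toLinearMap ∘ₗ (LinearMap.id + G) := by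
    ext x
    simp [hAb, G]
  have hkerA : A.ker = (LinearMap.id + G).ker := by
    change A.toLinearMap.ker = _
    rw [hAL]
    exact LinearMap.ker_comp_of_ker_eq_bot _ (by simp)
  have hranA : A.range = (LinearMap.id + G).range.map b.toLinearEquiv.toLinearMap := by
    change A.toLinearMap.range = _
    rw [hAL, LinearMap.range_comp]
  have q : (E ⧸ (LinearMap.id + G).range) ≃ₗ[ℂ] (E ⧸ A.range) :=
    Submodule.Quotient.equiv _ _ b.toLinearEquiv hranA.symm
  have hcl : IsClosed (A.range : Set E) := by
    have : F.toLinearMap.ker.CoFG := by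
      exact F.toLinearMap.quotKerEquivRange.symm.finiteDimensional
    refine LinearMap.isClosed_range_of_isClosed_map_of_finiteDimensional_quotient
      (f := A.toLinearMap) (s := F.toLinearMap.ker) ?_
    have : (F.toLinearMap.ker.map A.toLinearMap : Set E) = b.toHomeomorph '' (F.ker : Set E) := by
      ext y
      constructor
      · rintro ⟨x, hx, rfl⟩
        have hx2 : F x = 0 := hx
        exact ⟨x, hx, by change b x = A x; rw [hAb, hx2, add_zero]⟩
      · rintro ⟨x, hx, rfl⟩
        have hx2 : F x = 0 := hx
        exact ⟨x, hx, by change A x = b x; rw [hAb, hx2, add_zero]⟩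
    rw [this, Homeomorph.isClosed_image]
    exact F.isClosed_ker
  have : CompleteSpace A.range := hcl.completeSpace_coe
  have hcomp : IsCompl A.range A.rangeᗮ := Submodule.isCompl_orthogonal _
  have q2 := Submodule.quotientEquivOfIsCompl _ _ hcomp
  have hor := A.orthogonal_range
  have i1 : FiniteDimensional ℂ A.ker := by rw [hkerA]; exact k1
  have i2 : FiniteDimensional ℂ A.rangeᗮ := (q.trans q2).finiteDimensional
  have i3 : FiniteDimensional ℂ A.adjoint.ker := by rw [← hor]; exact i2
  have hfr : Module.finrank ℂ A.adjoint.ker = Module.finrank ℂ A.ker := by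
    rw [← hor, hkerA, k3, (q.trans q2).finrank_eq]
  obtain ⟨e, he, hs1⟩ := exists_basis A.ker rfl
  obtain ⟨e', he', hs2⟩ := exists_basis A.adjoint.ker hfr
  refine ⟨_, e, e', he, hs1, he', hs2, ?_⟩
  · intro f
    have h1 : (∃ u, A u = f) ↔ f ∈ A.range := Iff.rfl
    rw [h1, ← Submodule.orthogonal_orthogonal A.range, hor, ← hs2]
    constructor
    · intro h i
      exact h _ (Submodule.subset_span ⟨i, rfl⟩)
    · intro h
      rw [Submodule.mem_orthogonal]
      intro u hu
      induction hu using Submodule.span_induction with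
      | mem x hx => obtain ⟨i, rfl⟩ := hx; exact h i
      | zero => simp
      | add x y _ _ hx hy => rw [inner_add_left, hx, hy, add_zero]
      | smul a x _ hx => rw [inner_smul_left, hx, mul_zero]

end SL
end


noncomputable section
open MeasureTheory Complex Filter Topology
open scoped Real NNReal ContDiff ComplexConjugate InnerProductSpace

namespace SL

/-- finite rank operators -/
def FR (E : Type*) [NormedAddCommGroup E] [InnerProductSpace ℂ E] : Submodule ℂ (E →L[ℂ] E) where
  carrier := {F | FiniteDimensional ℂ F.range}
  zero_mem' := by
    change FiniteDimensional ℂ (0 : E →L[ℂ] E).range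
    have h : (0 : E →L[ℂ] E).range = ⊥ := LinearMap.range_zero
    rw [h]
    infer_instance
  add_mem' := by
    intro a b (ha : FiniteDimensional ℂ a.range) (hb : FiniteDimensional ℂ b.range)
    have h : (a + b).range ≤ a.range ⊔ b.range := LinearMap.range_add_le a.toLinearMap b.toLinearMap
    exact Submodule.finiteDimensional_of_le h
  smul_mem' := by
    intro c a (ha : FiniteDimensional ℂ a.range)
    have h : (c • a).range ≤ a.range := by
      rintro _ ⟨x, rfl⟩
      exact ⟨c • x, by simp⟩
    exact Submodule.finiteDimensional_of_le h

lemma rankOne_mem {E : Type*} [NormedAddCommGroup E] [InnerProductSpace ℂ E] (x y : E) :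
    InnerProductSpace.rankOne ℂ x y ∈ FR E := by
  have h : (InnerProductSpace.rankOne ℂ x y).range ≤ Submodule.span ℂ {x} := by
    rintro _ ⟨z, rfl⟩
    exact Submodule.mem_span_singleton.2 ⟨inner ℂ y z, rfl⟩
  exact Submodule.finiteDimensional_of_le h

lemma integral_mem_closure {E : Type*} [NormedAddCommGroup E] [InnerProductSpace ℂ E]
    [CompleteSpace E] {K : Set R2} (hK : IsCompact K) {Φ : R2 → E →L[ℂ] E} (hi : IntegrableOn Φ K)
    (h : ∀ ξ, Φ ξ ∈ FR E) :
    ∫ ξ in K, Φ ξ ∈ closure {F : E →L[ℂ] E | FiniteDimensional ℂ F.range} := by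
  change ∫ ξ in K, Φ ξ ∈ (FR E).topologicalClosure
  by_cases h0 : volume K = 0
  · rw [setIntegral_measure_zero _ h0]; exact Submodule.zero_mem _
  have hc : Convex ℝ ((FR E) : Set (E →L[ℂ] E)) := by
    have := ((FR E).restrictScalars ℝ).convex
    exact this
  have h1 : (⨍ ξ in K, Φ ξ) ∈ (FR E).topologicalClosure :=
    hc.set_average_mem_closure h0 hK.measure_lt_top.ne (ae_of_all _ h) hi
  rw [setAverage_eq] at h1
  have h2 := (((FR E).topologicalClosure).restrictScalars ℝ).smul_mem (volume.real K) h1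
  rw [smul_smul, mul_inv_cancel₀, one_smul] at h2
  · exact h2
  · exact (ENNReal.toReal_ne_zero).2 ⟨h0, hK.measure_lt_top.ne⟩

lemma exists_R {E : Type*} [NormedAddCommGroup E] [InnerProductSpace ℂ E]
    [CompleteSpace E] {K : Set R2} (hKc : IsCompact K) {m : R2 → ℂ} (hmi : IntegrableOn m K)
    {κ : R2 → E} (hκ : Continuous κ) :
    ∃ R ∈ closure {F : E →L[ℂ] E | FiniteDimensional ℂ F.range}, ∀ u v : E,
      inner ℂ v (R u) = ∫ ξ in K, m ξ * (inner ℂ (κ ξ) u * conj (inner ℂ (κ ξ) v)) := by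
  let Φ : R2 → E →L[ℂ] E := fun ξ => m ξ • InnerProductSpace.rankOne ℂ (κ ξ) (κ ξ)
  have hΦc : Continuous fun ξ => InnerProductSpace.rankOne ℂ (κ ξ) (κ ξ) :=
    ((ContinuousLinearMap.smulRightL ℂ E E).continuous.comp
      ((innerSL ℂ).continuous.comp hκ)).clm_apply hκ
  have hΦ : IntegrableOn Φ K := hmi.smul_continuousOn hΦc.continuousOn hKc
  refine ⟨∫ ξ in K, Φ ξ,
    integral_mem_closure hKc hΦ fun ξ => Submodule.smul_mem _ _ (rankOne_mem _ _), ?_⟩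
  intro u v
  have h1 : (∫ ξ in K, Φ ξ) u = ∫ ξ in K, Φ ξ u := ContinuousLinearMap.integral_apply hΦ u
  have hΦu : IntegrableOn (fun ξ => Φ ξ u) K :=
    (ContinuousLinearMap.apply ℂ E u).integrable_comp hΦ
  rw [h1, ← integral_inner hΦu]
  congr 1; ext ξ
  simp only [Φ, _root_.smul_apply, InnerProductSpace.rankOne_apply,
    inner_smul_right]
  rw [← inner_conj_symm v]

lemma exists_S {H : Type*} [NormedAddCommGroup H] [InnerProductSpace ℂ H]
    (W : Submodule ℂ H) [CompleteSpace W] (B : H →L[ℂ] H) {c : ℝ} (hc : 0 ≤ c) (hB : ‖B‖ ≤ c) :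
    ∃ S : W →L[ℂ] W, ‖S‖ ≤ c ∧ ∀ u v : W, inner ℂ v (S u) = inner ℂ (v : H) (B u) := by
  refine ⟨W.orthogonalProjectionOnto ∘L B ∘L W.subtypeL, ?_, fun u v =>
    Submodule.inner_orthogonalProjectionOnto_eq_of_mem_left v _⟩
  refine ContinuousLinearMap.opNorm_le_bound _ hc fun u => ?_
  have h1 : ‖W.orthogonalProjectionOnto (B (u : H))‖ ≤ ‖B (u : H)‖ :=
    Submodule.norm_orthogonalProjectionOnto_apply_le _ _
  have h2 : ‖B (u : H)‖ ≤ ‖B‖ * ‖(u : H)‖ := B.le_opNorm _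
  have h3 : ‖B‖ * ‖(u : H)‖ ≤ c * ‖(u : H)‖ := mul_le_mul_of_nonneg_right hB (norm_nonneg _)
  exact h1.trans (h2.trans h3)

lemma inner_three {E : Type*} [NormedAddCommGroup E] [InnerProductSpace ℂ E]
    (S R : E →L[ℂ] E) (c : ℂ) (u v : E) : inner ℂ v ((c • (1 : E →L[ℂ] E) + S + R) u) =
      c * inner ℂ v u + inner ℂ v (S u) + inner ℂ v (R u) := by
  have : (c • (1 : E →L[ℂ] E) + S + R) u = c • u + S u + R u := rfl
  rw [this, inner_add_right, inner_add_right, inner_smul_right]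

/-- multipliers close to one half of the Bessel symbol outside a ball -/
structure Mult (N : ℝ) (M : R2 → ℂ) : Prop where
  meas : Measurable M
  int : IntegrableOn M (Metric.closedBall 0 N)
  far : ∀ ξ, ξ ∉ Metric.closedBall (0 : R2) N → ‖M ξ * p ξ ^ 2 - 1 / 2‖ ≤ 1 / 4

lemma memLp_bdd {b : R2 → ℂ} (hb : Measurable b) {c : ℝ} (hc : ∀ ξ, ‖b ξ‖ ≤ c) (u : L2) :
    MemLp (fun ξ => b ξ * u ξ) 2 := by
  refine (Lp.memLp u).of_le_mul (c := c) (hb.aestronglyMeasurable.mul (Lp.memLp u).1)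
    (ae_of_all _ fun x => ?_)
  rw [norm_mul]
  exact mul_le_mul_of_nonneg_right (hc x) (norm_nonneg _)

/-- multiplication operator -/
def mulOp {b : R2 → ℂ} (hb : Measurable b) {c : ℝ} (hc : ∀ ξ, ‖b ξ‖ ≤ c) : L2 →L[ℂ] L2 :=
  LinearMap.mkContinuous
    { toFun := fun u => (memLp_bdd hb hc u).toLp _
      map_add' := fun u v => by
        rw [← MemLp.toLp_add]
        refine MemLp.toLp_congr _ _ ?_
        filter_upwards [Lp.coeFn_add u v] with x hx
        simp only [hx, Pi.add_apply, mul_add]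
      map_smul' := fun a u => by
        rw [RingHom.id_apply, ← MemLp.toLp_const_smul]
        refine MemLp.toLp_congr _ _ ?_
        filter_upwards [Lp.coeFn_smul a u] with x hx
        simp only [hx, Pi.smul_apply, smul_eq_mul]
        ring } c (fun u => by
    refine Lp.norm_le_mul_norm_of_ae_le_mul ?_
    filter_upwards [(memLp_bdd hb hc u).coeFn_toLp] with x hx
    change ‖((memLp_bdd hb hc u).toLp _) x‖ ≤ _
    rw [hx, norm_mul]
    exact mul_le_mul_of_nonneg_right (hc x) (norm_nonneg _))

lemma mulOp_ae {b : R2 → ℂ} (hb : Measurable b) {c : ℝ} (hc : ∀ ξ, ‖b ξ‖ ≤ c) (u : L2) :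
    mulOp hb hc u =ᵐ[volume] fun ξ => b ξ * u ξ :=
  (memLp_bdd hb hc u).coeFn_toLp

lemma mulOp_norm {b : R2 → ℂ} (hb : Measurable b) {c : ℝ} (h0 : 0 ≤ c) (hc : ∀ ξ, ‖b ξ‖ ≤ c) :
    ‖mulOp hb hc‖ ≤ c := LinearMap.mkContinuous_norm_le _ h0 _

lemma int_mul_conj (u v : L2) : Integrable (fun ξ => u ξ * conj (v ξ)) := by
  have := L2.integrable_inner (𝕜 := ℂ) v u
  exact this

theorem exists_op {Γ : Set R2} {χ : R2 → ℂ} (hχ : Cut Γ χ) {N : ℝ} {M : R2 → ℂ} (hM : Mult N M) :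
    ∃ A S R : V Γ →L[ℂ] V Γ, A = (1/2 : ℂ) • 1 + S + R ∧ ‖S‖ ≤ 1/4 ∧
      R ∈ closure {F : V Γ →L[ℂ] V Γ | FiniteDimensional ℂ F.range} ∧
      ∀ u v : V Γ, Integrable (fun ξ => M ξ * (ftr hχ.isT u ξ * conj (ftr hχ.isT v ξ))) ∧
        inner ℂ v (A u) = ∫ ξ, M ξ * (ftr hχ.isT u ξ * conj (ftr hχ.isT v ξ)) := by
  classical
  set K := Metric.closedBall (0 : R2) N with hK
  have hKc : IsCompact K := isCompact_closedBall _ _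
  have hKm : MeasurableSet K := hKc.measurableSet
  set b : R2 → ℂ := Kᶜ.indicator fun ξ => M ξ * p ξ ^ 2 - 1 / 2 with hb
  have hp : Measurable fun ξ => (p ξ : ℂ) := by
    have : Continuous fun ξ => (p ξ : ℂ) := by fun_prop
    exact this.measurable
  have hbm : Measurable b :=
    ((hM.meas.mul (hp.pow_const 2)).sub_const _).indicator hKm.compl
  have hbb : ∀ ξ, ‖b ξ‖ ≤ 1 / 4 := by
    intro ξ
    by_cases h : ξ ∈ K
    · rw [hb, Set.indicator_of_notMem (by simpa using h)]; norm_num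
    · rw [hb, Set.indicator_of_mem (by simpa using h)]; exact hM.far ξ h
  set m : R2 → ℂ := fun ξ => M ξ - 1 / 2 * ((p ξ : ℂ) ^ 2)⁻¹ with hm
  have hmi : IntegrableOn m K := by
    refine hM.int.sub (ContinuousOn.integrableOn_compact hKc ?_)
    have : Continuous fun ξ => (1 / 2 : ℂ) * ((p ξ : ℂ) ^ 2)⁻¹ := by
      refine continuous_const.mul (Continuous.inv₀ (by fun_prop) fun ξ => pow_ne_zero _ (p_ne ξ))
    exact this.continuousOn
  let P := (V Γ).orthogonalProjectionOnto
  let κ : R2 → V Γ := fun ξ => P (kap hχ.isT ξ)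
  have hκ : Continuous κ := P.continuous.comp (kap_cont hχ.isT)
  have hκi : ∀ ξ (u : V Γ), inner ℂ (κ ξ) u = ftr hχ.isT u ξ := fun ξ u =>
    Submodule.inner_orthogonalProjectionOnto_eq_of_mem_right u _
  obtain ⟨R, hRc, hRi⟩ := exists_R hKc hmi hκ
  obtain ⟨S, hSn, hSi⟩ := exists_S (V Γ) (mulOp hbm hbb) (by norm_num)
    (mulOp_norm hbm (by norm_num) hbb)
  refine ⟨(1/2 : ℂ) • 1 + S + R, S, R, rfl, hSn, hRc, ?_⟩
  · intro u v
    have hR : inner ℂ v (R u) = ∫ ξ in K, m ξ * (ftr hχ.isT u ξ * conj (ftr hχ.isT v ξ)) := by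
      rw [hRi]; simp only [hκi]
    have hS : inner ℂ v (S u) = ∫ ξ, b ξ * ((u : L2) ξ * conj ((v : L2) ξ)) := by
      rw [hSi, L2.inner_def]
      refine integral_congr_ae ?_
      filter_upwards [mulOp_ae hbm hbb u] with x hx
      rw [hx, RCLike.inner_apply]; ring
    have hI : (1/2 : ℂ) * inner ℂ v u = ∫ ξ, (1/2 : ℂ) * ((u : L2) ξ * conj ((v : L2) ξ)) := by
      rw [Submodule.coe_inner, L2.inner_def, integral_const_mul]
      rfl
    have i0 := int_mul_conj (u : L2) (v : L2)
    have i1 : Integrable fun ξ => (1/2 : ℂ) * ((u : L2) ξ * conj ((v : L2) ξ)) := i0.const_mul _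
    have i2 : Integrable fun ξ => b ξ * ((u : L2) ξ * conj ((v : L2) ξ)) :=
      i0.bdd_mul (c := 1/4) hbm.aestronglyMeasurable (ae_of_all _ hbb)
    have hfc : Continuous fun ξ => ftr hχ.isT u ξ * conj (ftr hχ.isT v ξ) := by
      have h1 := ftr_cont hχ.isT (u : L2)
      have h2 := ftr_cont hχ.isT (v : L2)
      fun_prop
    have i3 : IntegrableOn (fun ξ => m ξ * (ftr hχ.isT u ξ * conj (ftr hχ.isT v ξ))) K :=
      hmi.mul_continuousOn hfc.continuousOn hKc
    have i3' := (integrable_indicator_iff hKm).2 i3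
    have hae : (fun ξ => M ξ * (ftr hχ.isT u ξ * conj (ftr hχ.isT v ξ))) =ᵐ[volume] fun ξ =>
        (1/2 : ℂ) * ((u : L2) ξ * conj ((v : L2) ξ)) + b ξ * ((u : L2) ξ * conj ((v : L2) ξ)) +
        K.indicator (fun ξ => m ξ * (ftr hχ.isT u ξ * conj (ftr hχ.isT v ξ))) ξ := by
      filter_upwards [repro hχ u.2, repro hχ v.2] with ξ h1 h2
      have hp0 := p_ne ξ
      by_cases h : ξ ∈ K
      · rw [hb, Set.indicator_of_notMem (by simpa using h), Set.indicator_of_mem h, h1, h2, hm,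
          map_mul, Complex.conj_ofReal]
        field_simp
        ring
      · rw [hb, Set.indicator_of_mem (by simpa using h), Set.indicator_of_notMem h, h1, h2,
          map_mul, Complex.conj_ofReal]
        ring
    refine ⟨((i1.add i2).add i3').congr hae.symm, ?_⟩
    have i12 : Integrable fun ξ => (1/2 : ℂ) * ((u : L2) ξ * conj ((v : L2) ξ)) +
      b ξ * ((u : L2) ξ * conj ((v : L2) ξ)) := i1.add i2
    rw [integral_congr_ae hae, integral_add i12 i3', integral_add i1 i2,
      integral_indicator hKm, ← hR, ← hS, ← hI]
    exact inner_three S R _ u v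

end SL
end


noncomputable section
open MeasureTheory Complex Filter Topology
open scoped Real NNReal ContDiff ComplexConjugate InnerProductSpace

namespace SL

lemma rpow_neg_half {x : ℝ} (hx : x < 0) : x ^ (-(1/2) : ℝ) = 0 := by
  rw [Real.rpow_def_of_neg hx]
  have : Real.cos (-(1/2) * π) = 0 := by
    rw [neg_mul, Real.cos_neg, one_div_mul_eq_div, Real.cos_pi_div_two]
  rw [this, mul_zero]

lemma abs_rpow (y : ℝ) : |y| ^ (-(1/2) : ℝ) ≤ y ^ (-(1/2) : ℝ) + (-y) ^ (-(1/2) : ℝ) := by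
  rcases lt_trichotomy y 0 with h | h | h
  · rw [abs_of_neg h, rpow_neg_half h, zero_add]
  · subst h; simp
  · rw [abs_of_pos h, rpow_neg_half (neg_lt_zero.2 h), add_zero]

lemma mT_norm {k : ℝ} (hk : 0 < k) (ξ : R2) :
    ‖mT k ξ‖ ≤ k ^ (-(1/2) : ℝ) *
      ((‖ξ‖ - k) ^ (-(1/2) : ℝ) + (k - ‖ξ‖) ^ (-(1/2) : ℝ)) := by
  have h0 : ‖mT k ξ‖ = (1/2) * |‖ξ‖ ^ 2 - k ^ 2| ^ (-(1/2) : ℝ) := by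
    have hr : ‖rootk k ξ‖ = |‖ξ‖ ^ 2 - k ^ 2| ^ (1/2 : ℝ) := by
      rw [← Real.sqrt_eq_rpow]
      unfold rootk
      split_ifs with h
      · rw [Complex.norm_real, Real.norm_of_nonneg (Real.sqrt_nonneg _), abs_of_nonpos, neg_sub]
        nlinarith [norm_nonneg ξ]
      · rw [norm_mul, Complex.norm_I, one_mul, Complex.norm_real,
          Real.norm_of_nonneg (Real.sqrt_nonneg _), abs_of_nonneg]
        nlinarith [norm_nonneg ξ]
    rw [mT, norm_div, Complex.norm_I, norm_mul, hr, Real.rpow_neg (abs_nonneg _)]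
    simp [mul_comm]
  have h1 : |‖ξ‖ ^ 2 - k ^ 2| = |‖ξ‖ - k| * (‖ξ‖ + k) := by
    rw [show ‖ξ‖ ^ 2 - k ^ 2 = (‖ξ‖ - k) * (‖ξ‖ + k) by ring, abs_mul,
      abs_of_pos (a := ‖ξ‖ + k) (by positivity)]
  rw [h0, h1, Real.mul_rpow (abs_nonneg _) (by positivity)]
  have h2 : (‖ξ‖ + k) ^ (-(1/2) : ℝ) ≤ k ^ (-(1/2) : ℝ) :=
    Real.rpow_le_rpow_of_nonpos hk (by linarith [norm_nonneg ξ]) (by norm_num)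
  have h3 := abs_rpow (‖ξ‖ - k)
  rw [neg_sub] at h3
  have a1 : 0 ≤ |‖ξ‖ - k| ^ (-(1/2) : ℝ) := by positivity
  have a2 : 0 ≤ (‖ξ‖ + k) ^ (-(1/2) : ℝ) := by positivity
  have a3 : 0 ≤ k ^ (-(1/2) : ℝ) := by positivity
  calc _ ≤ 1 * (|‖ξ‖ - k| ^ (-(1/2) : ℝ) * (‖ξ‖ + k) ^ (-(1/2) : ℝ)) := by
        gcongr; norm_num
    _ = (‖ξ‖ + k) ^ (-(1/2) : ℝ) * |‖ξ‖ - k| ^ (-(1/2) : ℝ) := by ring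
    _ ≤ _ := by gcongr

lemma mT_meas (k : ℝ) : Measurable (mT k) := by
  unfold mT rootk
  refine measurable_const.div (measurable_const.mul ?_)
  refine Measurable.ite (measurableSet_lt measurable_norm measurable_const) ?_ ?_
  · fun_prop
  · fun_prop

lemma mT_int {k : ℝ} (hk : 0 < k) (r : ℝ) : IntegrableOn (mT k) (Metric.ball 0 r) := by
  have h1 : IntervalIntegrable (fun x : ℝ => (x - k) ^ (-(1/2) : ℝ)) volume 0 r := by
    have := (intervalIntegral.intervalIntegrable_rpow' (a := 0 - k) (b := r - k)
      (r := -(1/2)) (by norm_num)).comp_sub_right k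
    simpa using this
  have h2 : IntervalIntegrable (fun x : ℝ => (k - x) ^ (-(1/2) : ℝ)) volume 0 r := by
    have := (intervalIntegral.intervalIntegrable_rpow' (a := k - 0) (b := k - r)
      (r := -(1/2)) (by norm_num)).comp_sub_left k
    simpa using this
  have h3 := (h1.add h2).const_mul (k ^ (-(1/2) : ℝ))
  have h4 : IntervalIntegrable (fun x : ℝ => x * (k ^ (-(1/2) : ℝ) * ((x - k) ^ (-(1/2) : ℝ) +
      (k - x) ^ (-(1/2) : ℝ)))) volume 0 r :=
    h3.continuousOn_mul continuousOn_id
  have h5 : IntegrableOn (fun ξ : R2 => k ^ (-(1/2) : ℝ) * ((‖ξ‖ - k) ^ (-(1/2) : ℝ) +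
      (k - ‖ξ‖) ^ (-(1/2) : ℝ))) (Metric.ball 0 r) := by
    have := integrableOn_fun_norm_addHaar (E := R2) volume (r := r)
      (f := fun x => k ^ (-(1/2) : ℝ) * ((x - k) ^ (-(1/2) : ℝ) + (k - x) ^ (-(1/2) : ℝ)))
    rw [this]
    simp only [finrank_euclideanSpace, Fintype.card_fin, Nat.add_one_sub_one, pow_one, smul_eq_mul]
    rcases le_or_gt r 0 with hr | hr
    · rw [Set.Ioo_eq_empty (by simpa using hr)]; exact integrableOn_empty
    · exact ((intervalIntegrable_iff_integrableOn_Ioo_of_le hr.le).1 h4)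
  exact Integrable.mono' h5 (mT_meas k).aestronglyMeasurable (ae_of_all _ fun ξ => mT_norm hk ξ)

lemma p_sq (ξ : R2) : p ξ ^ 2 = Real.sqrt (1 + ‖ξ‖ ^ 2) := by
  rw [← w_pos, Real.sqrt_eq_rpow]

lemma mult_mT {k : ℝ} (hk : 0 < k) : Mult (2 * k + 1) (mT k) := by
  refine ⟨mT_meas k, (mT_int hk (2 * k + 2)).mono_set
    (Metric.closedBall_subset_ball (by linarith)), fun ξ hξ => ?_⟩
  have hr : 2 * k + 1 < ‖ξ‖ := by simpa using hξ
  have hs0 : 0 < ‖ξ‖ ^ 2 - k ^ 2 := by nlinarith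
  set s := Real.sqrt (‖ξ‖ ^ 2 - k ^ 2) with hs
  have hsp : 0 < s := Real.sqrt_pos.2 hs0
  have e : mT k ξ * p ξ ^ 2 - 1 / 2 = ((1 / 2 * (Real.sqrt (1 + ‖ξ‖ ^ 2) / s - 1) : ℝ) : ℂ) := by
    rw [← Complex.ofReal_pow, p_sq, mT, rootk, if_neg (by linarith), ← hs]
    have : (s : ℂ) ≠ 0 := by exact_mod_cast hsp.ne'
    push_cast
    field_simp
  rw [e, Complex.norm_real, Real.norm_eq_abs, abs_le]
  have l1 : s ≤ Real.sqrt (1 + ‖ξ‖ ^ 2) := Real.sqrt_le_sqrt (by nlinarith)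
  have l2 : Real.sqrt (1 + ‖ξ‖ ^ 2) ≤ 3 / 2 * s := by
    rw [Real.sqrt_le_left (by positivity), mul_pow, hs, Real.sq_sqrt hs0.le]
    nlinarith
  have l3 : 1 ≤ Real.sqrt (1 + ‖ξ‖ ^ 2) / s := (one_le_div hsp).2 l1
  have l4 : Real.sqrt (1 + ‖ξ‖ ^ 2) / s ≤ 3 / 2 := (div_le_iff₀ hsp).2 l2
  constructor <;> linarith

lemma Mult.conj {N : ℝ} {M : R2 → ℂ} (h : Mult N M) : Mult N (fun ξ => conj (M ξ)) := by
  refine ⟨Complex.continuous_conj.measurable.comp h.meas, ?_, fun ξ hξ => ?_⟩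
  · exact Integrable.congr' h.int (Complex.continuous_conj.measurable.comp h.meas).aestronglyMeasurable
      (ae_of_all _ fun x => by simp)
  · have h1 : (starRingEnd ℂ) (M ξ) * p ξ ^ 2 - 1 / 2 =
        (starRingEnd ℂ) (M ξ * p ξ ^ 2 - 1 / 2) := by
      simp; exact (map_ofNat (starRingEnd ℂ) 2).symm
    rw [h1, RCLike.norm_conj]
    exact h.far ξ hξ

end SL
end


noncomputable section
open MeasureTheory Complex Filter Topology
open scoped Real NNReal ContDiff ComplexConjugate InnerProductSpace

namespace SL

lemma elt_to_V {Γ : Set R2} {χ : R2 → ℂ} (hχ : Cut Γ χ) (ψ : HTildeElt (-(1/2) : ℝ) Γ) :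
    ∃ u : V Γ, ∀ ξ, ftr hχ.isT u ξ = ψ.ft ξ := by
  have hc : Continuous fun ξ => ψ.ft ξ / (p ξ : ℂ) :=
    ψ.cont.div (by fun_prop) p_ne
  have hL : MemLp (fun ξ => ψ.ft ξ / (p ξ : ℂ)) 2 := by
    rw [memLp_two_iff_integrable_sq_norm hc.aestronglyMeasurable]
    refine ψ.mem.congr (ae_of_all _ fun ξ => ?_)
    simp only [w_neg, norm_div, Complex.norm_real, Real.norm_of_nonneg (p_pos ξ).le, div_pow]
    field_simp
  have hae : ∀ᵐ ξ, (p ξ : ℂ) * (hL.toLp _) ξ = ψ.ft ξ := by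
    filter_upwards [hL.coeFn_toLp] with ξ h
    rw [h, mul_div_cancel₀ _ (p_ne ξ)]
  have hV : hL.toLp _ ∈ V Γ := by
    rw [mem_V]
    intro φ hφ hs
    rw [← ψ.supp φ hφ.1 hφ.2 hs]
    exact integral_congr_ae (hae.mono fun ξ h => by simp only [h])
  refine ⟨⟨_, hV⟩, ?_⟩
  have h1 : ftr hχ.isT (hL.toLp _) =ᵐ[volume] ψ.ft := by
    filter_upwards [hae, repro hχ hV] with ξ h2 h3
    rw [h3, h2]
  have h2 := ((ftr_cont hχ.isT (hL.toLp _)).ae_eq_iff_eq volume ψ.cont).1 h1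
  exact fun ξ => congrFun h2 ξ

/-- the distribution attached to an element of the model space -/
def toElt {Γ : Set R2} {χ : R2 → ℂ} (hχ : Cut Γ χ) (u : V Γ) : HTildeElt (-(1/2) : ℝ) Γ where
  ft := ftr hχ.isT u
  cont := ftr_cont hχ.isT u
  mem := by
    have h := (memLp_two_iff_integrable_sq_norm (Lp.memLp (u : L2)).1).1 (Lp.memLp (u : L2))
    refine h.congr ((repro hχ u.2).mono fun ξ hξ => ?_)
    have := (p_pos ξ).ne'
    simp only [hξ, w_neg, norm_mul, Complex.norm_real, Real.norm_of_nonneg (p_pos ξ).le, mul_pow]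
    field_simp
  supp := by
    intro φ h1 h2 h3
    rw [← mem_V.1 u.2 φ ⟨h1, h2⟩ h3]
    exact integral_congr_ae ((repro hχ u.2).mono fun ξ h => by simp only [h])

lemma exists_vphi {Γ : Set R2} {χ : R2 → ℂ} (hχ : Cut Γ χ) {φ : R2 → ℂ} (hφ : IsT φ)
    (hs : tsupport φ ⊆ Γ) : ∃ v : V Γ, ∀ᵐ ξ, ftr hχ.isT v ξ = conj (testFT φ ξ) := by
  have hFc := hφ.testFT_cont
  have hc : Continuous fun ξ => conj (testFT φ ξ) / (p ξ : ℂ) :=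
    Continuous.div (by fun_prop) (by fun_prop) p_ne
  have hL : MemLp (fun ξ => conj (testFT φ ξ) / (p ξ : ℂ)) 2 := by
    refine hφ.memLp_p.mono hc.aestronglyMeasurable (ae_of_all _ fun ξ => ?_)
    rw [norm_div, norm_mul, RCLike.norm_conj, Complex.norm_real,
      Real.norm_of_nonneg (p_pos ξ).le]
    exact (div_le_self (norm_nonneg _) (one_le_p ξ)).trans
      (le_mul_of_one_le_right (norm_nonneg _) (one_le_p ξ))
  have hae : ∀ᵐ ξ, (p ξ : ℂ) * (hL.toLp _) ξ = conj (testFT φ ξ) := by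
    filter_upwards [hL.coeFn_toLp] with ξ h
    rw [h, mul_div_cancel₀ _ (p_ne ξ)]
  have hV : hL.toLp _ ∈ V Γ := by
    rw [mem_V]
    intro θ hθ hd
    rw [← parseval hφ hθ fun x => ?_]
    · exact integral_congr_ae (hae.mono fun ξ h => by simp only [h])
    · by_contra! hx
      have h1 : x ∈ tsupport φ := subset_tsupport _ hx.1
      have h2 : x ∈ tsupport θ := subset_tsupport _ hx.2
      have h3 : x ∈ tsupport θ ∩ closure Γ := ⟨h2, subset_closure (hs h1)⟩
      rw [hd] at h3
      exact h3
  refine ⟨⟨_, hV⟩, ?_⟩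
  filter_upwards [hae, repro hχ hV] with ξ h2 h3
  rw [h3, h2]

lemma inner_V {Γ : Set R2} (u v : V Γ) : inner ℂ v u = ∫ ξ, (u : L2) ξ * conj ((v : L2) ξ) := by
  rw [Submodule.coe_inner, L2.inner_def]
  rfl

/-- `f` represents the distribution with Fourier data `F` on the model space -/
def Rep {Γ : Set R2} {χ : R2 → ℂ} (hχ : Cut Γ χ) (F : R2 → ℂ) (f : V Γ) : Prop :=
  ∀ v : V Γ, Integrable (fun ξ => F ξ * conj (ftr hχ.isT v ξ)) ∧
    inner ℂ v f = ∫ ξ, F ξ * conj (ftr hχ.isT v ξ)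

lemma exists_rep {Γ : Set R2} {χ : R2 → ℂ} (hχ : Cut Γ χ) {F : R2 → ℂ} (hF : MemHs (1/2) F) :
    ∃ f : V Γ, Rep hχ F f := by
  have hp : AEStronglyMeasurable (fun ξ => (p ξ : ℂ)) (volume : Measure R2) := by fun_prop
  have hL : MemLp (fun ξ => F ξ * (p ξ : ℂ)) 2 := by
    have hm : AEStronglyMeasurable (fun ξ => F ξ * (p ξ : ℂ)) (volume : Measure R2) := hF.1.mul hp
    refine (memLp_two_iff_integrable_sq_norm hm).2 ?_
    refine hF.2.congr (ae_of_all _ fun ξ => ?_)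
    simp only [w_pos, norm_mul, Complex.norm_real, Real.norm_of_nonneg (p_pos ξ).le, mul_pow]
    ring
  refine ⟨(V Γ).orthogonalProjectionOnto (hL.toLp _), fun v => ?_⟩
  have h1 : inner ℂ v ((V Γ).orthogonalProjectionOnto (hL.toLp _)) = inner ℂ (v : L2) (hL.toLp _) :=
    Submodule.inner_orthogonalProjectionOnto_eq_of_mem_left v _
  have h2 : (fun ξ => (hL.toLp _) ξ * conj ((v : L2) ξ)) =ᵐ[volume]
      fun ξ => F ξ * conj (ftr hχ.isT v ξ) := by
    filter_upwards [hL.coeFn_toLp, repro hχ v.2] with ξ h3 h4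
    rw [h3, h4, map_mul, Complex.conj_ofReal]; ring
  refine ⟨(int_mul_conj _ _).congr h2, ?_⟩
  rw [h1, L2.inner_def, ← integral_congr_ae h2]
  rfl

lemma rep_zero {Γ : Set R2} {χ : R2 → ℂ} (hχ : Cut Γ χ) :
    Rep hχ (fun _ => (0 : ℂ)) (0 : V Γ) := by
  intro v
  simp

lemma dens_zero {Γ : Set R2} (hΓ : IsLipschitzDomain Γ) {χ : R2 → ℂ} (hχ : Cut Γ χ) (f : V Γ)
    (h : ∀ φ, IsT φ → tsupport φ ⊆ Γ → ∀ v : V Γ, (∀ᵐ ξ, ftr hχ.isT v ξ = conj (testFT φ ξ)) →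
      inner ℂ v f = 0) : f = 0 := by
  set G : R2 → ℂ := fun ξ => (f : L2) ξ / p ξ with hG
  have hp : Continuous fun ξ => (p ξ : ℂ)⁻¹ := Continuous.inv₀ (by fun_prop) p_ne
  have hGm : AEStronglyMeasurable G := by
    simp only [hG, div_eq_mul_inv]
    exact (Lp.memLp (f : L2)).1.mul hp.aestronglyMeasurable
  have hGp : (fun ξ => G ξ * p ξ) = (f : L2) := by
    ext ξ; simp only [hG]; rw [div_mul_cancel₀ _ (p_ne ξ)]
  have key := dens hΓ f.2 hGm (by rw [hGp]; exact Lp.memLp _) (fun φ hφ hs => by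
    obtain ⟨v, hv⟩ := exists_vphi hχ hφ hs
    rw [← h φ hφ hs v hv, inner_V]
    refine integral_congr_ae ?_
    filter_upwards [hv, repro hχ v.2] with ξ h1 h2
    rw [h1] at h2
    have h3 : testFT φ ξ = p ξ * conj ((v : L2) ξ) := by
      rw [← Complex.conj_conj (testFT φ ξ), h2, map_mul, Complex.conj_ofReal]
    simp only [hG]
    rw [h3]
    field_simp [p_ne ξ])
  have h2 : inner ℂ f f = 0 := by
    rw [inner_V, ← key]
    congr 1; ext ξ
    simp only [hG]
    rw [map_div₀, Complex.conj_ofReal]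
    field_simp [p_ne ξ]
  exact inner_self_eq_zero.1 h2

/-- `A` is the compression of the multiplier `M`. -/
def IsOp {Γ : Set R2} {χ : R2 → ℂ} (hχ : Cut Γ χ) (M : R2 → ℂ) (A : V Γ →L[ℂ] V Γ) : Prop :=
  ∀ u v : V Γ, Integrable (fun ξ => M ξ * (ftr hχ.isT u ξ * conj (ftr hχ.isT v ξ))) ∧
    inner ℂ v (A u) = ∫ ξ, M ξ * (ftr hχ.isT u ξ * conj (ftr hχ.isT v ξ))

lemma agree_iff {Γ : Set R2} (hΓ : IsLipschitzDomain Γ) {χ : R2 → ℂ} (hχ : Cut Γ χ) {M : R2 → ℂ}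
    {A : V Γ →L[ℂ] V Γ} (hA : IsOp hχ M A) {F : R2 → ℂ} {f : V Γ} (hf : Rep hχ F f) (u : V Γ) :
    AgreeOn Γ (fun ξ => M ξ * ftr hχ.isT u ξ) F ↔ A u = f := by
  have key : ∀ φ (v : V Γ), (∀ᵐ ξ, ftr hχ.isT v ξ = conj (testFT φ ξ)) →
      ∫ ξ, (M ξ * ftr hχ.isT u ξ - F ξ) * testFT φ ξ = inner ℂ v (A u - f) := by
    intro φ v hv
    rw [inner_sub_right, (hA u v).2, (hf v).2, ← integral_sub (hA u v).1 (hf v).1]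
    refine integral_congr_ae (hv.mono fun ξ h => ?_)
    simp only [h, Complex.conj_conj]
    ring
  constructor
  · intro h
    rw [← sub_eq_zero]
    refine dens_zero hΓ hχ _ fun φ hφ hs v hv => ?_
    rw [← key φ v hv]
    exact h φ hφ.1 hφ.2 hs
  · intro h φ h1 h2 h3
    obtain ⟨v, hv⟩ := exists_vphi hχ ⟨h1, h2⟩ h3
    rw [key φ v hv, h, sub_self, inner_zero_right]

lemma op_adjoint {Γ : Set R2} {χ : R2 → ℂ} (hχ : Cut Γ χ) {M : R2 → ℂ}
    {A : V Γ →L[ℂ] V Γ} (hA : IsOp hχ M A) : IsOp hχ (fun ξ => conj (M ξ)) A.adjoint := by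
  intro u v
  have e : (fun ξ => conj (M ξ) * (ftr hχ.isT u ξ * conj (ftr hχ.isT v ξ))) =
      fun ξ => conj (M ξ * (ftr hχ.isT v ξ * conj (ftr hχ.isT u ξ))) := by
    ext ξ; simp only [map_mul, Complex.conj_conj]; ring
  rw [e]
  refine ⟨?_, ?_⟩
  · have h := (hA v u).1
    exact h.congr' (Complex.continuous_conj.comp_aestronglyMeasurable h.1)
      (ae_of_all _ fun x => by simp)
  · rw [ContinuousLinearMap.adjoint_inner_right, ← inner_conj_symm, (hA v u).2, integral_conj]

lemma ftr_sum {Γ : Set R2} {χ : R2 → ℂ} (hχ : Cut Γ χ) {n : ℕ} (c : Fin n → ℂ) (e : Fin n → V Γ)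
    (ξ : R2) : ftr hχ.isT ((∑ i, c i • e i : V Γ) : L2) ξ = ∑ i, c i * ftr hχ.isT (e i) ξ := by
  simp only [ftr, Submodule.coe_sum, Submodule.coe_smul, inner_sum, inner_smul_right]

lemma ftr_inj {Γ : Set R2} {χ : R2 → ℂ} (hχ : Cut Γ χ) {u : V Γ}
    (h : ∀ ξ, ftr hχ.isT u ξ = 0) : u = 0 := by
  refine Subtype.ext (Lp.ext ?_)
  have := Lp.coeFn_zero ℂ 2 (volume : Measure R2)
  filter_upwards [repro hχ u.2, this] with ξ h1 h2
  rw [h ξ] at h1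
  have h3 : (u : L2) ξ = 0 := (mul_eq_zero.1 h1.symm).resolve_left (p_ne ξ)
  rw [h3]
  exact h2.symm

lemma part {Γ : Set R2} (hΓ : IsLipschitzDomain Γ) {χ : R2 → ℂ} (hχ : Cut Γ χ) {M : R2 → ℂ}
    {A : V Γ →L[ℂ] V Γ} (hA : IsOp hχ M A) {n : ℕ} {e : Fin n → V Γ} (he : LinearIndependent ℂ e)
    (hs : Submodule.span ℂ (Set.range e) = A.ker) :
    (∀ i, AgreeOn Γ (fun ξ => M ξ * (toElt hχ (e i)).ft ξ) (fun _ => 0)) ∧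
      (∀ c : Fin n → ℂ, (∀ ξ : R2, ∑ i, c i * (toElt hχ (e i)).ft ξ = 0) → c = 0) ∧
      (∀ ψ : HTildeElt (-(1/2) : ℝ) Γ,
        AgreeOn Γ (fun ξ => M ξ * ψ.ft ξ) (fun _ => 0) →
        ∃ c : Fin n → ℂ, ∀ ξ : R2, ψ.ft ξ = ∑ i, c i * (toElt hχ (e i)).ft ξ) := by
  refine ⟨fun i => ?_, fun c hc => ?_, fun ψ hψ => ?_⟩
  · refine (agree_iff hΓ hχ hA (rep_zero hχ) (e i)).2 ?_
    have : e i ∈ A.ker := by rw [← hs]; exact Submodule.subset_span ⟨i, rfl⟩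
    exact this
  · have h1 : ∑ i, c i • e i = 0 := by
      refine ftr_inj hχ fun ξ => ?_
      rw [ftr_sum hχ]; exact hc ξ
    exact funext fun i => Fintype.linearIndependent_iff.1 he c h1 i
  · obtain ⟨u, hu⟩ := elt_to_V hχ ψ
    simp only [← hu] at hψ ⊢
    have h1 : u ∈ A.ker := (agree_iff hΓ hχ hA (rep_zero hχ) u).1 hψ
    rw [← hs, Submodule.mem_span_range_iff_exists_fun] at h1
    obtain ⟨c, rfl⟩ := h1
    exact ⟨c, fun ξ => ftr_sum hχ c e ξ⟩

theorem main (Γ : Set R2) (hΓ : IsLipschitzDomain Γ) (k : ℝ) (hk : 0 < k) :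
    ∃ n : ℕ, ∃ e e' : Fin n → HTildeElt (-(1/2) : ℝ) Γ,
      (∀ i, AgreeOn Γ (fun ξ => mT k ξ * (e i).ft ξ) (fun _ => 0)) ∧
      (∀ c : Fin n → ℂ, (∀ ξ : R2, ∑ i, c i * (e i).ft ξ = 0) → c = 0) ∧
      (∀ ψ : HTildeElt (-(1/2) : ℝ) Γ,
        AgreeOn Γ (fun ξ => mT k ξ * ψ.ft ξ) (fun _ => 0) →
        ∃ c : Fin n → ℂ, ∀ ξ : R2, ψ.ft ξ = ∑ i, c i * (e i).ft ξ) ∧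
      (∀ i, AgreeOn Γ (fun ξ => starRingEnd ℂ (mT k ξ) * (e' i).ft ξ) (fun _ => 0)) ∧
      (∀ c : Fin n → ℂ, (∀ ξ : R2, ∑ i, c i * (e' i).ft ξ = 0) → c = 0) ∧
      (∀ χ : HTildeElt (-(1/2) : ℝ) Γ,
        AgreeOn Γ (fun ξ => starRingEnd ℂ (mT k ξ) * χ.ft ξ) (fun _ => 0) →
        ∃ c : Fin n → ℂ, ∀ ξ : R2, χ.ft ξ = ∑ i, c i * (e' i).ft ξ) ∧
      (∀ F : R2 → ℂ, MemHs (1/2) F →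
        ((∃ ψ : HTildeElt (-(1/2) : ℝ) Γ, AgreeOn Γ (fun ξ => mT k ξ * ψ.ft ξ) F) ↔
          (∀ i, dualPair F (e' i).ft = 0))) := by
  obtain ⟨χ, hχ⟩ := exists_cut hΓ.2.1
  obtain ⟨A, S, R, hA, hS, hR, hop⟩ := exists_op hχ (mult_mT hk)
  have hop : IsOp hχ (mT k) A := hop
  obtain ⟨n, e, e', he, hs, he', hs', hran⟩ := fredholm A S R hA hS hR
  obtain ⟨a1, a2, a3⟩ := part hΓ hχ hop he hs
  obtain ⟨b1, b2, b3⟩ := part hΓ hχ (op_adjoint hχ hop) he' hs'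
  refine ⟨n, fun i => toElt hχ (e i), fun i => toElt hχ (e' i), a1, a2, a3, b1, b2, b3, ?_⟩
  intro F hF
  obtain ⟨f, hf⟩ := exists_rep hχ hF
  have h1 : (∃ ψ : HTildeElt (-(1/2) : ℝ) Γ, AgreeOn Γ (fun ξ => mT k ξ * ψ.ft ξ) F) ↔
      ∃ u, A u = f := by
    constructor
    · rintro ⟨ψ, hψ⟩
      obtain ⟨u, hu⟩ := elt_to_V hχ ψ
      simp only [← hu] at hψ
      exact ⟨u, (agree_iff hΓ hχ hop hf u).1 hψ⟩
    · rintro ⟨u, hu⟩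
      exact ⟨toElt hχ u, (agree_iff hΓ hχ hop hf u).2 hu⟩
  rw [h1, hran]
  refine forall_congr' fun i => ?_
  have hc : ((((2 * π) ^ 2)⁻¹ : ℝ) : ℂ) ≠ 0 := by
    rw [Complex.ofReal_ne_zero]; positivity
  rw [(hf (e' i)).2, dualPair, mul_eq_zero, or_iff_right hc]
  rfl

end SL
end

/-- Lemma A.2: the Helmholtz single-layer operator
`T : H̃^{-1/2}(Γ) → H^{1/2}(Γ)` (Fourier multiplier `mT k`) is Fredholm of index zero:
its kernel and the kernel of its adjoint (multiplier `conj ∘ mT k`) are spanned by the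
same finite number `n` of linearly independent elements, and the range of `T` is
exactly the annihilator of the adjoint kernel (hence closed, of codimension `n`). -/
theorem statement16 (Γ : Set R2) (hΓ : IsLipschitzDomain Γ) (k : ℝ) (hk : 0 < k) :
    ∃ n : ℕ, ∃ e e' : Fin n → HTildeElt (-(1/2) : ℝ) Γ,
      (∀ i, AgreeOn Γ (fun ξ => mT k ξ * (e i).ft ξ) (fun _ => 0)) ∧
      (∀ c : Fin n → ℂ, (∀ ξ : R2, ∑ i, c i * (e i).ft ξ = 0) → c = 0) ∧
      (∀ ψ : HTildeElt (-(1/2) : ℝ) Γ,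
        AgreeOn Γ (fun ξ => mT k ξ * ψ.ft ξ) (fun _ => 0) →
        ∃ c : Fin n → ℂ, ∀ ξ : R2, ψ.ft ξ = ∑ i, c i * (e i).ft ξ) ∧
      (∀ i, AgreeOn Γ (fun ξ => starRingEnd ℂ (mT k ξ) * (e' i).ft ξ) (fun _ => 0)) ∧
      (∀ c : Fin n → ℂ, (∀ ξ : R2, ∑ i, c i * (e' i).ft ξ = 0) → c = 0) ∧
      (∀ χ : HTildeElt (-(1/2) : ℝ) Γ,
        AgreeOn Γ (fun ξ => starRingEnd ℂ (mT k ξ) * χ.ft ξ) (fun _ => 0) →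
        ∃ c : Fin n → ℂ, ∀ ξ : R2, χ.ft ξ = ∑ i, c i * (e' i).ft ξ) ∧
      (∀ F : R2 → ℂ, MemHs (1/2) F →
        ((∃ ψ : HTildeElt (-(1/2) : ℝ) Γ, AgreeOn Γ (fun ξ => mT k ξ * ψ.ft ξ) F) ↔
          (∀ i, dualPair F (e' i).ft = 0))) := by
  exact SL.main Γ hΓ k hk

end
end

section
/- The kernel of T is trivial: if ψ ∈ H̃^{-1/2}(Γ) satisfies Tψ = 0, then ψ = 0. (In the proof: ⟨Tψ, ψ⟩ is, up to a positive constant, ∫_{ℝ²} (i/√(k²−|ξ|²)) |ψ̂(ξ)|² dξ; its imaginary part vanishing forces ψ̂ = 0 on |ξ| < k and its real part vanishing forces ψ̂ = 0 on |ξ| > k, hence ψ = 0.) -/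
noncomputable section

open MeasureTheory Complex Filter Topology
open scoped Real NNReal ContDiff

namespace KerT

/-- weight -/
def wt (ξ : R2) : ℝ := ((1 : ℝ) + ‖ξ‖ ^ 2) ^ (-(1/2) : ℝ)

lemma wt_eq (ξ : R2) : wt ξ = (Real.sqrt (1 + ‖ξ‖ ^ 2))⁻¹ := by
  unfold wt
  rw [Real.rpow_neg (by positivity), Real.sqrt_eq_rpow]

lemma wt_pos (ξ : R2) : 0 < wt ξ := by
  unfold wt; positivity

lemma wt_le_one (ξ : R2) : wt ξ ≤ 1 := by
  rw [wt_eq]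
  apply inv_le_one_of_one_le₀
  rw [Real.one_le_sqrt]; nlinarith [sq_nonneg ‖ξ‖]

lemma continuous_wt : Continuous wt := by
  unfold wt
  refine Continuous.rpow_const (by fun_prop) (fun x => Or.inl (by positivity))

lemma wt_inv_le (ξ : R2) : (wt ξ)⁻¹ ≤ 1 + ‖ξ‖ := by
  rw [wt_eq, inv_inv, Real.sqrt_le_left (by positivity)]
  nlinarith [norm_nonneg ξ]

lemma wt_peetre (ξ η : R2) : wt ξ ≤ wt η * (1 + ‖η - ξ‖) := by
  rw [wt_eq, wt_eq]
  set s := Real.sqrt (1 + ‖ξ‖ ^ 2) with hs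
  have hs2 : s ^ 2 = 1 + ‖ξ‖ ^ 2 := Real.sq_sqrt (by positivity)
  have hs1 : 1 ≤ s := by rw [hs, Real.one_le_sqrt]; nlinarith [sq_nonneg ‖ξ‖]
  have hxs : ‖ξ‖ ≤ s := by
    rw [hs]; apply Real.le_sqrt_of_sq_le; linarith
  have hη : ‖η‖ ≤ ‖ξ‖ + ‖η - ξ‖ := by
    calc ‖η‖ = ‖ξ + (η - ξ)‖ := by congr 1; abel
      _ ≤ _ := norm_add_le _ _
  have h1 : Real.sqrt (1 + ‖η‖ ^ 2) ≤ s * (1 + ‖η - ξ‖) := by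
    have : Real.sqrt (1 + ‖η‖ ^ 2) ≤ s + ‖η - ξ‖ := by
      rw [Real.sqrt_le_left (by positivity)]
      nlinarith [norm_nonneg η, norm_nonneg ξ, norm_nonneg (η - ξ),
        mul_nonneg (norm_nonneg (η - ξ)) (sub_nonneg.2 hxs), pow_le_pow_left₀ (norm_nonneg η) hη 2]
    nlinarith [norm_nonneg (η - ξ)]
  have hp : 0 < Real.sqrt (1 + ‖η‖ ^ 2) := by positivity
  have hp' : 0 < s := by linarith
  rw [inv_mul_eq_div, le_div_iff₀ hp, inv_mul_le_iff₀ hp']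
  exact h1

lemma amgm_wt (ξ : R2) (x y : ℝ) :
    x * y ≤ wt ξ * x ^ 2 + (1 + ‖ξ‖) * y ^ 2 := by
  have h1 := wt_pos ξ
  have h2 := wt_inv_le ξ
  have h3 : x * y ≤ wt ξ * x ^ 2 + (wt ξ)⁻¹ * y ^ 2 := by
    have : wt ξ * x ^ 2 + (wt ξ)⁻¹ * y ^ 2 - x * y
      = (wt ξ)⁻¹ * ((wt ξ * x - y / 2) ^ 2 + 3 / 4 * y ^ 2) := by
      field_simp; ring
    have : 0 ≤ (wt ξ)⁻¹ * ((wt ξ * x - y / 2) ^ 2 + 3 / 4 * y ^ 2) := by positivity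
    linarith
  nlinarith [sq_nonneg y]

/-- rapidly decaying continuous function -/
def RD (g : R2 → ℂ) : Prop := Continuous g ∧ ∀ n : ℕ, ∃ C : ℝ, 0 ≤ C ∧ ∀ ξ, (1 + ‖ξ‖) ^ n * ‖g ξ‖ ≤ C

lemma integrable_decay : Integrable (fun ξ : R2 => (1 + ‖ξ‖) ^ (-(3 : ℝ))) volume :=
  integrable_one_add_norm (by simp; norm_num)

lemma RD.integrable_pow {g : R2 → ℂ} (hg : RD g) (n : ℕ) :
    Integrable (fun ξ => (1 + ‖ξ‖) ^ n * ‖g ξ‖) volume := by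
  obtain ⟨C, hC0, hC⟩ := hg.2 (n + 3)
  have hc := hg.1
  refine (integrable_decay.const_mul C).mono' (by fun_prop) (Eventually.of_forall fun ξ => ?_)
  rw [Real.norm_of_nonneg (by positivity), Real.rpow_neg (by positivity), ← div_eq_mul_inv,
    le_div_iff₀ (by positivity)]
  have := hC ξ
  norm_cast
  rw [pow_add] at this
  linarith

lemma RD.integrable {g : R2 → ℂ} (hg : RD g) : Integrable g volume := by
  have := hg.integrable_pow 0
  simp only [pow_zero, one_mul] at this
  exact (integrable_norm_iff hg.1.aestronglyMeasurable).1 this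

lemma RD.comp_sub {g : R2 → ℂ} (hg : RD g) (a : R2) : RD (fun ξ => g (ξ - a)) := by
  have hc := hg.1
  refine ⟨by fun_prop, fun n => ?_⟩
  obtain ⟨C, hC0, hC⟩ := hg.2 n
  refine ⟨(1 + ‖a‖) ^ n * C, by positivity, fun ξ => ?_⟩
  have h1 : 1 + ‖ξ‖ ≤ (1 + ‖a‖) * (1 + ‖ξ - a‖) := by
    have : ‖ξ‖ ≤ ‖a‖ + ‖ξ - a‖ := by
      calc ‖ξ‖ = ‖a + (ξ - a)‖ := by congr 1; abel
        _ ≤ _ := norm_add_le _ _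
    nlinarith [norm_nonneg a, norm_nonneg (ξ - a)]
  calc (1 + ‖ξ‖) ^ n * ‖g (ξ - a)‖ ≤ ((1 + ‖a‖) * (1 + ‖ξ - a‖)) ^ n * ‖g (ξ - a)‖ := by gcongr
    _ = (1 + ‖a‖) ^ n * ((1 + ‖ξ - a‖) ^ n * ‖g (ξ - a)‖) := by rw [mul_pow]; ring
    _ ≤ _ := by gcongr; exact hC _

lemma RD.comp_smul {g : R2 → ℂ} (hg : RD g) {t : ℝ} (ht : 0 < t) : RD (fun ξ => g (t • ξ)) := by
  have hc := hg.1
  refine ⟨by fun_prop, fun n => ?_⟩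
  obtain ⟨C, hC0, hC⟩ := hg.2 n
  refine ⟨(1 + t⁻¹) ^ n * C, by positivity, fun ξ => ?_⟩
  have h1 : 1 + ‖ξ‖ ≤ (1 + t⁻¹) * (1 + ‖t • ξ‖) := by
    rw [norm_smul, Real.norm_of_nonneg ht.le]
    have : (1 + t⁻¹) * (1 + t * ‖ξ‖) = 1 + ‖ξ‖ + t⁻¹ + t * ‖ξ‖ := by field_simp; ring
    rw [this]
    have : 0 ≤ t⁻¹ + t * ‖ξ‖ := by positivity
    linarith
  calc (1 + ‖ξ‖) ^ n * ‖g (t • ξ)‖ ≤ ((1 + t⁻¹) * (1 + ‖t • ξ‖)) ^ n * ‖g (t • ξ)‖ := by gcongr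
    _ = (1 + t⁻¹) ^ n * ((1 + ‖t • ξ‖) ^ n * ‖g (t • ξ)‖) := by rw [mul_pow]; ring
    _ ≤ _ := by gcongr; exact hC _

lemma RD.conj {g : R2 → ℂ} (hg : RD g) : RD (fun ξ => starRingEnd ℂ (g ξ)) := by
  refine ⟨Complex.continuous_conj.comp hg.1, fun n => ?_⟩
  simpa using hg.2 n

lemma rdot_eq (x ξ : R2) : rdot x ξ = inner ℝ x ξ := by
  simp [rdot, PiLp.inner_apply, Fin.sum_univ_two]; ring

open scoped FourierTransform in
lemma testFT_eq (φ : R2 → ℂ) (ξ : R2) : testFT φ ξ = 𝓕 φ (-((2 * π)⁻¹ • ξ)) := by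
  rw [Real.fourier_eq', testFT]
  congr 1; ext x
  rw [smul_eq_mul, rdot_eq, inner_neg_right, inner_smul_right]
  congr 2
  push_cast
  have : (π : ℂ) ≠ 0 := by exact_mod_cast Real.pi_ne_zero
  field_simp

open scoped FourierTransform in
lemma testFT_RD {φ : R2 → ℂ} (h1 : ContDiff ℝ ∞ φ) (h2 : HasCompactSupport φ) :
    RD (testFT φ) := by
  set S := 𝓕 (h2.toSchwartzMap h1) with hS
  have hS' : ∀ x, 𝓕 φ x = S x := by
    intro x
    rw [hS, SchwartzMap.fourier_coe]; rfl
  have h0 : RD (fun ξ => S ξ) := by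
    refine ⟨S.continuous, fun n => ?_⟩
    refine ⟨2 ^ n * ((Finset.Iic (n, 0)).sup fun m => SchwartzMap.seminorm ℝ m.1 m.2) S,
      by positivity, fun ξ => ?_⟩
    have := SchwartzMap.one_add_le_sup_seminorm_apply (𝕜 := ℝ) (m := (n, 0)) le_rfl le_rfl S ξ
    simpa using this
  have h3 := h0.comp_smul (t := (2 * π)⁻¹) (by positivity)
  have hT : testFT φ = fun ξ => S (-((2 * π)⁻¹ • ξ)) := by
    ext ξ; rw [testFT_eq, hS']
  rw [hT]
  have hc := h3.1
  refine ⟨by fun_prop, fun n => ?_⟩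
  obtain ⟨C, hC0, hC⟩ := h3.2 n
  refine ⟨C, hC0, fun ξ => ?_⟩
  simpa using hC (-ξ)

open scoped FourierTransform in
lemma integral_testFT {φ : R2 → ℂ} (h1 : ContDiff ℝ ∞ φ) (h2 : HasCompactSupport φ) :
    ∫ ξ, testFT φ ξ = (((2 * π) ^ 2 : ℝ) : ℂ) * φ 0 := by
  have hF : Integrable (𝓕 φ) := by
    have : 𝓕 φ = fun x => 𝓕 (h2.toSchwartzMap h1) x := by
      ext x; rw [SchwartzMap.fourier_coe]; rfl
    rw [this]
    exact SchwartzMap.integrable _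
  have hφ : Integrable φ := h1.continuous.integrable_of_hasCompactSupport h2
  have := congrFun (h1.continuous.fourierInv_fourier_eq hφ hF) 0
  rw [Real.fourierInv_eq'] at this
  simp only [inner_zero_right, mul_zero, Complex.ofReal_zero, zero_mul, Complex.exp_zero, one_smul] at this
  rw [← this]
  simp_rw [testFT_eq]
  have h3 := Measure.integral_comp_smul (volume : Measure R2) (fun ξ => 𝓕 φ ξ) (-(2 * π)⁻¹)
  simp only [neg_smul] at h3
  rw [h3]
  simp
  field_simp
  left; rw [abs_of_pos Real.pi_pos]

lemma testFT_mod (φ : R2 → ℂ) (ξ η : R2) :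
    testFT (fun y => Complex.exp (-(Complex.I * (rdot y ξ : ℂ))) * φ y) η = testFT φ (η - ξ) := by
  unfold testFT
  congr 1; ext x
  rw [← mul_assoc, ← Complex.exp_add]
  congr 2
  simp [rdot]; ring

lemma testFT_scale (φ : R2 → ℂ) {t : ℝ} (ht : 0 < t) (y ξ : R2) :
    testFT (fun x => φ (t⁻¹ • (x - y))) ξ
      = ((t ^ 2 : ℝ) : ℂ) * (Complex.exp (Complex.I * (rdot y ξ : ℂ)) * testFT φ (t • ξ)) := by
  unfold testFT
  rw [← integral_add_right_eq_self _ y]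
  simp only [add_sub_cancel_right]
  have h3 := Measure.integral_comp_smul (volume : Measure R2)
    (fun z => Complex.exp (Complex.I * (rdot (t • z + y) ξ : ℂ)) * φ z) t⁻¹
  simp only [smul_inv_smul₀ ht.ne'] at h3
  rw [h3, ← integral_const_mul]
  simp only [finrank_euclideanSpace, Fintype.card_fin, inv_pow, inv_inv, abs_of_pos (pow_pos ht 2)]
  rw [Complex.real_smul]
  congr 2; ext z
  rw [← mul_assoc, ← Complex.exp_add]
  congr 2
  simp [rdot]; ring

lemma testFT_norm_le (φ : R2 → ℂ) (ξ : R2) : ‖testFT φ ξ‖ ≤ ∫ x, ‖φ x‖ := by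
  unfold testFT
  refine (norm_integral_le_integral_norm _).trans (le_of_eq ?_)
  congr 1; ext x
  rw [norm_mul, mul_comm Complex.I, Complex.norm_exp_ofReal_mul_I, one_mul]

/-- Standing assumptions on the pair `(f, M)`. -/
structure Dat (f M : R2 → ℂ) (a : R2 → ℝ) (C : ℝ) : Prop where
  fc : Continuous f
  fi : Integrable (fun ξ => wt ξ * ‖f ξ‖ ^ 2) volume
  Mm : AEStronglyMeasurable M volume
  ai : Integrable a volume
  ai' : Integrable (fun ξ => (1 + ‖ξ‖) * a ξ) volume
  a0 : ∀ ξ, 0 ≤ a ξ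
  C0 : 0 ≤ C
  Mb : ∀ ξ, ‖M ξ‖ ≤ a ξ + C * (wt ξ * ‖f ξ‖)

lemma integrable_f_mul {f g : R2 → ℂ} (fc : Continuous f)
    (fi : Integrable (fun ξ => wt ξ * ‖f ξ‖ ^ 2) volume) (hg : RD g) :
    Integrable (fun η => f η * g η) volume := by
  obtain ⟨K, hK0, hK⟩ := hg.2 0
  have hgc := hg.1
  have hi : Integrable (fun η => wt η * ‖f η‖ ^ 2 + K * ((1 + ‖η‖) ^ 1 * ‖g η‖)) volume :=
    fi.add ((hg.integrable_pow 1).const_mul K)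
  refine hi.mono' (by fun_prop) (Eventually.of_forall fun η => ?_)
  rw [norm_mul]
  have h1 := amgm_wt η ‖f η‖ ‖g η‖
  have h2 : ‖g η‖ ≤ K := by simpa using hK η
  have h3 : (1 + ‖η‖) * ‖g η‖ ^ 2 ≤ K * ((1 + ‖η‖) ^ 1 * ‖g η‖) := by
    have : 0 ≤ (1 + ‖η‖) * ‖g η‖ := by positivity
    nlinarith
  linarith

lemma Dat.integrable_mul {f M : R2 → ℂ} {a : R2 → ℝ} {C : ℝ} (D : Dat f M a C) {r : R2 → ℂ}
    (hr : RD r) (n : ℕ) : Integrable (fun ξ => ‖ξ‖ ^ n * ‖M ξ * r ξ‖) volume := by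
  obtain ⟨K, hK0, hK⟩ := hr.2 n
  have hi : Integrable (fun ξ => K * (a ξ + C * (wt ξ * ‖f ξ‖ ^ 2)) + C * ((1 + ‖ξ‖) ^ n * ‖r ξ‖))
      volume := ((D.ai.add (D.fi.const_mul C)).const_mul K).add ((hr.integrable_pow n).const_mul C)
  have hm : AEStronglyMeasurable (fun ξ => ‖ξ‖ ^ n * ‖M ξ * r ξ‖) volume :=
    (by fun_prop : Continuous fun ξ : R2 => ‖ξ‖ ^ n).aestronglyMeasurable.mul
      (D.Mm.mul hr.1.aestronglyMeasurable).norm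
  refine hi.mono' hm (Eventually.of_forall fun ξ => ?_)
  rw [Real.norm_of_nonneg (by positivity), norm_mul]
  have hw := wt_pos ξ
  have hw1 := wt_le_one ξ
  have hC := D.C0
  have h0 := D.a0 ξ
  have h1 : ‖M ξ‖ ≤ (a ξ + C * (wt ξ * ‖f ξ‖ ^ 2)) + C := by
    refine (D.Mb ξ).trans ?_
    have : wt ξ * ‖f ξ‖ ≤ wt ξ * ‖f ξ‖ ^ 2 + 1 := by
      nlinarith [sq_nonneg (‖f ξ‖ - 1), norm_nonneg (f ξ)]
    nlinarith
  have h2 : ‖ξ‖ ^ n * ‖r ξ‖ ≤ (1 + ‖ξ‖) ^ n * ‖r ξ‖ := by gcongr; linarith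
  have h3 := hK ξ
  have h4 : 0 ≤ a ξ + C * (wt ξ * ‖f ξ‖ ^ 2) := by positivity
  have h5 : 0 ≤ (1 + ‖ξ‖) ^ n * ‖r ξ‖ := by positivity
  calc ‖ξ‖ ^ n * (‖M ξ‖ * ‖r ξ‖) = ‖M ξ‖ * (‖ξ‖ ^ n * ‖r ξ‖) := by ring
    _ ≤ ((a ξ + C * (wt ξ * ‖f ξ‖ ^ 2)) + C) * ((1 + ‖ξ‖) ^ n * ‖r ξ‖) := by gcongr
    _ ≤ _ := by nlinarith

lemma integrable_shear {u v : R2 → ℝ} (hu : Integrable u volume) (hv : Integrable v volume) :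
    Integrable (fun p : R2 × R2 => u p.2 * v (p.1 - p.2)) (volume.prod volume) :=
  Integrable.convolution_integrand (ContinuousLinearMap.mul ℝ ℝ) hu hv

lemma integrable_shear' {u v : R2 → ℝ} (hu : Integrable u volume) (hv : Integrable v volume) :
    Integrable (fun p : R2 × R2 => u p.1 * v (p.1 - p.2)) (volume.prod volume) := by
  have h := (integrable_shear hu hv.comp_neg).swap
  refine h.congr (Eventually.of_forall fun p => ?_)
  simp

lemma Dat.integrable_prod {f M : R2 → ℂ} {a : R2 → ℝ} {C : ℝ} (D : Dat f M a C) {g : R2 → ℂ}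
    (hg : RD g) : Integrable (fun p : R2 × R2 => M p.2 * (f p.1 * g (p.1 - p.2)))
      (volume.prod volume) := by
  obtain ⟨K, hK0, hK⟩ := hg.2 0
  have hgc := hg.1
  have hfc := D.fc
  have g0 := hg.integrable.norm
  have g1 := hg.integrable_pow 1
  have i1 : Integrable (fun p : R2 × R2 => a p.2 * (wt p.1 * ‖f p.1‖ ^ 2)) (volume.prod volume) := by
    have := (D.fi.mul_prod D.ai : Integrable (fun p : R2 × R2 => (wt p.1 * ‖f p.1‖ ^ 2) * a p.2)
      (volume.prod volume))
    refine this.congr (Eventually.of_forall fun p => ?_)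
    simp only; ring
  have i2 := (integrable_shear D.ai' g1).const_mul K
  have i3 := (integrable_shear D.fi g0).const_mul C
  have i4 := (integrable_shear' D.fi g1).const_mul C
  have hm : AEStronglyMeasurable (fun p : R2 × R2 => M p.2 * (f p.1 * g (p.1 - p.2)))
      (volume.prod volume) := by
    refine AEStronglyMeasurable.mul ?_ ?_
    · exact D.Mm.comp_snd
    · exact Continuous.aestronglyMeasurable (by fun_prop)
  refine (((i1.add i2).add i3).add i4).mono' hm (Eventually.of_forall fun p => ?_)
  obtain ⟨η, ξ⟩ := p
  simp only [Pi.add_apply, norm_mul, pow_one]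
  have hC := D.C0
  have ha := D.a0 ξ
  have hw := wt_pos ξ
  have hw' := wt_pos η
  set F := ‖f η‖
  set F' := ‖f ξ‖
  set G := ‖g (η - ξ)‖
  have hF : 0 ≤ F := norm_nonneg _
  have hF' : 0 ≤ F' := norm_nonneg _
  have hG : 0 ≤ G := norm_nonneg _
  have hGK : G ≤ K := by simpa using hK (η - ξ)
  have e1 : F * G ≤ wt η * F ^ 2 + (1 + ‖ξ‖) * (K * ((1 + ‖η - ξ‖) * G)) := by
    refine (amgm_wt η F G).trans ?_
    have h1 : 1 + ‖η‖ ≤ (1 + ‖ξ‖) * (1 + ‖η - ξ‖) := by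
      have : ‖η‖ ≤ ‖ξ‖ + ‖η - ξ‖ := by
        calc ‖η‖ = ‖ξ + (η - ξ)‖ := by congr 1; abel
          _ ≤ _ := norm_add_le _ _
      nlinarith [norm_nonneg ξ, norm_nonneg (η - ξ)]
    have h2 : (1 + ‖η‖) * G ^ 2 ≤ ((1 + ‖ξ‖) * (1 + ‖η - ξ‖)) * (K * G) := by
      rw [sq]; gcongr
    linarith
  have e2 : wt ξ * F' * (F * G) ≤ wt ξ * F' ^ 2 * G + wt η * F ^ 2 * ((1 + ‖η - ξ‖) * G) := by
    have h1 : F' * F ≤ F' ^ 2 + F ^ 2 := by nlinarith [sq_nonneg (F' - F), sq_nonneg (F' + F)]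
    have h2 := wt_peetre ξ η
    calc wt ξ * F' * (F * G) = wt ξ * (F' * F) * G := by ring
      _ ≤ wt ξ * (F' ^ 2 + F ^ 2) * G := by gcongr
      _ = wt ξ * F' ^ 2 * G + wt ξ * (F ^ 2 * G) := by ring
      _ ≤ wt ξ * F' ^ 2 * G + (wt η * (1 + ‖η - ξ‖)) * (F ^ 2 * G) := by gcongr
      _ = _ := by ring
  calc ‖M ξ‖ * (F * G) ≤ (a ξ + C * (wt ξ * F')) * (F * G) := by
        gcongr; exact D.Mb ξ
    _ = a ξ * (F * G) + C * (wt ξ * F' * (F * G)) := by ring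
    _ ≤ a ξ * (wt η * F ^ 2 + (1 + ‖ξ‖) * (K * ((1 + ‖η - ξ‖) * G)))
        + C * (wt ξ * F' ^ 2 * G + wt η * F ^ 2 * ((1 + ‖η - ξ‖) * G)) := by gcongr
    _ = _ := by ring

/-- `F_χ(ξ) = ∫ f(η) χ̌(η - ξ) dη`. -/
def Fc (f χ : R2 → ℂ) (ξ : R2) : ℂ := ∫ η, f η * testFT χ (η - ξ)

lemma Dat.integrable_Fc {f M : R2 → ℂ} {a : R2 → ℝ} {C : ℝ} (D : Dat f M a C) {χ : R2 → ℂ}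
    (h1 : ContDiff ℝ ∞ χ) (h2 : HasCompactSupport χ) :
    Integrable (fun ξ => M ξ * Fc f χ ξ) volume := by
  have := (D.integrable_prod (testFT_RD h1 h2)).integral_prod_right
  refine this.congr (Eventually.of_forall fun ξ => ?_)
  simp only [Fc]
  rw [← integral_const_mul]

open scoped FourierTransform in
lemma contDiff_u {A : R2 → ℂ} (hA : ∀ n : ℕ, Integrable (fun ξ => ‖ξ‖ ^ n * ‖A ξ‖) volume) :
    ContDiff ℝ ∞ (fun y : R2 => ∫ ξ, Complex.exp (-(Complex.I * (rdot y ξ : ℂ))) * A ξ) := by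
  have h := Real.contDiff_fourier (N := ⊤) (f := A) (fun n _ => hA n)
  have h2 : ContDiff ℝ ∞ (fun y : R2 => (𝓕 A) ((2 * π)⁻¹ • y)) :=
    h.comp (contDiff_const_smul _)
  convert h2 using 1
  ext y
  rw [Real.fourier_eq']
  congr 1; ext ξ
  rw [smul_eq_mul, rdot_eq, inner_smul_right, real_inner_comm]
  congr 2
  push_cast
  have : (π : ℂ) ≠ 0 := by exact_mod_cast Real.pi_ne_zero
  field_simp

lemma testFT_u {A χ : R2 → ℂ} (hA : Integrable A volume) (hχ : Integrable χ volume) (η : R2) :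
    testFT (fun y => (∫ ξ, Complex.exp (-(Complex.I * (rdot y ξ : ℂ))) * A ξ) * χ y) η
      = ∫ ξ, A ξ * testFT χ (η - ξ) := by
  have hi : Integrable (Function.uncurry fun (y ξ : R2) =>
      Complex.exp (Complex.I * (rdot y η : ℂ)) *
        (Complex.exp (-(Complex.I * (rdot y ξ : ℂ))) * A ξ * χ y)) (volume.prod volume) := by
    have h0 : Integrable (fun p : R2 × R2 => χ p.1 * A p.2) (volume.prod volume) :=
      hχ.mul_prod hA
    refine h0.norm.mono' ?_ (Eventually.of_forall fun p => ?_)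
    · have e : (Function.uncurry fun (y ξ : R2) =>
        Complex.exp (Complex.I * (rdot y η : ℂ)) *
        (Complex.exp (-(Complex.I * (rdot y ξ : ℂ))) * A ξ * χ y)) =
        fun p : R2 × R2 => (Complex.exp (Complex.I * (rdot p.1 η : ℂ)) *
          Complex.exp (-(Complex.I * (rdot p.1 p.2 : ℂ)))) * (χ p.1 * A p.2) := by
        ext p; simp only [Function.uncurry]; ring
      rw [e]
      refine AEStronglyMeasurable.mul ?_ h0.aestronglyMeasurable
      apply Continuous.aestronglyMeasurable
      unfold rdot; fun_prop
    · simp only [Function.uncurry, norm_mul]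
      have e1 : ‖Complex.exp (Complex.I * (rdot p.1 η : ℂ))‖ = 1 := by
        rw [mul_comm, Complex.norm_exp_ofReal_mul_I]
      have e2 : ‖Complex.exp (-(Complex.I * (rdot p.1 p.2 : ℂ)))‖ = 1 := by
        rw [← neg_mul, mul_comm, mul_neg, ← neg_mul, ← Complex.ofReal_neg,
          Complex.norm_exp_ofReal_mul_I]
      rw [e1, e2]
      exact le_of_eq (by ring)
  unfold testFT
  simp_rw [← integral_mul_const, ← integral_const_mul]
  rw [integral_integral_swap hi]
  congr 1; ext ξ
  congr 1; ext y
  rw [show Complex.exp (Complex.I * (rdot y (η - ξ) : ℂ)) = Complex.exp (Complex.I * (rdot y η : ℂ))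
    * Complex.exp (-(Complex.I * (rdot y ξ : ℂ))) from ?_]
  · ring
  · rw [← Complex.exp_add]; congr 1; simp [rdot]; ring

lemma Dat.fubini {f M : R2 → ℂ} {a : R2 → ℝ} {C : ℝ} (D : Dat f M a C) {χ r : R2 → ℂ}
    (h1 : ContDiff ℝ ∞ χ) (h2 : HasCompactSupport χ) (hr : RD r) :
    ∫ η, f η * testFT (fun y => (∫ ξ, Complex.exp (-(Complex.I * (rdot y ξ : ℂ))) *
      (M ξ * r ξ)) * χ y) η = ∫ ξ, (M ξ * Fc f χ ξ) * r ξ := by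
  have hA : Integrable (fun ξ => M ξ * r ξ) volume := by
    have := D.integrable_mul hr 0
    simp only [pow_zero, one_mul] at this
    exact (integrable_norm_iff (D.Mm.mul hr.1.aestronglyMeasurable)).1 this
  have hχ : Integrable χ volume := h1.continuous.integrable_of_hasCompactSupport h2
  simp_rw [testFT_u hA hχ, Fc, ← integral_const_mul, ← integral_mul_const]
  obtain ⟨K, hK0, hK⟩ := hr.2 0
  have hrc := hr.1
  have hi : Integrable (Function.uncurry fun (η ξ : R2) =>
      f η * (M ξ * r ξ * testFT χ (η - ξ))) (volume.prod volume) := by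
    have := (D.integrable_prod (testFT_RD h1 h2)).bdd_mul (c := K)
      (f := fun p : R2 × R2 => r p.2) (Continuous.aestronglyMeasurable (by fun_prop))
      (Eventually.of_forall fun p => by simpa using hK p.2)
    refine this.congr (Eventually.of_forall fun p => ?_)
    simp only [Function.uncurry]; ring
  rw [integral_integral_swap hi]
  congr 1; ext ξ
  congr 1; ext η
  ring

lemma norm_tri (ξ η : R2) : 1 + ‖η‖ ≤ (1 + ‖ξ‖) * (1 + ‖η - ξ‖) := by
  have : ‖η‖ ≤ ‖ξ‖ + ‖η - ξ‖ := by
    calc ‖η‖ = ‖ξ + (η - ξ)‖ := by congr 1; abel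
      _ ≤ _ := norm_add_le _ _
  nlinarith [norm_nonneg ξ, norm_nonneg (η - ξ)]

lemma integrable_Q {f : R2 → ℂ} (fc : Continuous f)
    (fi : Integrable (fun ξ => wt ξ * ‖f ξ‖ ^ 2) volume) (ξ : R2) :
    Integrable (fun η => ‖f η‖ * ((1 + ‖η - ξ‖) ^ 4)⁻¹) volume := by
  have hi := fi.add ((integrable_decay.comp_sub_right ξ).const_mul (1 + ‖ξ‖))
  have hc : Continuous (fun η : R2 => ((1 + ‖η - ξ‖) ^ 4)⁻¹) :=
    Continuous.inv₀ (by fun_prop) (fun x => by positivity)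
  refine hi.mono' (by fun_prop) (Eventually.of_forall fun η => ?_)
  rw [Real.norm_of_nonneg (by positivity)]
  refine (amgm_wt η _ _).trans ?_
  simp only [Pi.add_apply]
  refine add_le_add le_rfl ?_
  rw [Real.rpow_neg (by positivity)]
  have h := norm_tri ξ η
  set d := 1 + ‖η - ξ‖ with hd
  have hd1 : 1 ≤ d := by rw [hd]; linarith [norm_nonneg (η - ξ)]
  have h3 : d ^ (3 : ℝ) = d ^ 3 := by norm_cast
  rw [h3]
  calc (1 + ‖η‖) * (d ^ 4)⁻¹ ^ 2 ≤ ((1 + ‖ξ‖) * d) * (d ^ 4)⁻¹ ^ 2 := by gcongr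
    _ = (1 + ‖ξ‖) * (d ^ 7)⁻¹ := by field_simp
    _ ≤ _ := by
      gcongr
      norm_num

lemma peak {f g : R2 → ℂ} (fc : Continuous f)
    (fi : Integrable (fun ξ => wt ξ * ‖f ξ‖ ^ 2) volume) (hg : RD g) (ξ : R2) :
    Tendsto (fun n : ℕ => ∫ η, f η * ((((n : ℝ) ^ 2 : ℝ) : ℂ) * g ((n : ℝ) • (η - ξ)))) atTop
      (𝓝 (f ξ * ∫ ζ, g ζ)) := by
  have hgc := hg.1
  set S : Set R2 := Metric.ball ξ 1 with hS
  have hSm : MeasurableSet S := measurableSet_ball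
  have hGint : ∀ n : ℕ, 1 ≤ n →
      Integrable (fun η => f η * ((((n : ℝ) ^ 2 : ℝ) : ℂ) * g ((n : ℝ) • (η - ξ)))) volume := by
    intro n hn
    have h0 : (0 : ℝ) < n := by exact_mod_cast hn
    have := integrable_f_mul fc fi ((hg.comp_smul h0).comp_sub ξ)
    refine (this.const_mul (((n : ℝ) ^ 2 : ℝ) : ℂ)).congr (Eventually.of_forall fun η => ?_)
    simp only; ring
  -- inner part
  have hin : Tendsto (fun n : ℕ => ∫ η in S, f η * ((((n : ℝ) ^ 2 : ℝ) : ℂ) * g ((n : ℝ) • (η - ξ))))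
      atTop (𝓝 (f ξ * ∫ ζ, g ζ)) := by
    obtain ⟨K, hK⟩ := (isCompact_closedBall ξ (1 : ℝ)).exists_bound_of_continuousOn fc.continuousOn
    have e : ∀ n : ℕ, 1 ≤ n →
        ∫ η in S, f η * ((((n : ℝ) ^ 2 : ℝ) : ℂ) * g ((n : ℝ) • (η - ξ)))
        = ∫ ζ, S.indicator f (ξ + (n : ℝ)⁻¹ • ζ) * g ζ := by
      intro n hn
      have h0 : (0 : ℝ) < n := by exact_mod_cast hn
      have h3 := Measure.integral_comp_smul (volume : Measure R2)
        (fun ζ => S.indicator f (ξ + (n : ℝ)⁻¹ • ζ) * g ζ) (n : ℝ)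
      simp only [inv_smul_smul₀ h0.ne'] at h3
      rw [← integral_indicator hSm]
      have h4 : ∫ η, S.indicator (fun η => f η * ((((n : ℝ) ^ 2 : ℝ) : ℂ) * g ((n : ℝ) • (η - ξ)))) η
          = (((n : ℝ) ^ 2 : ℝ) : ℂ) * ∫ x, S.indicator f (ξ + x) * g ((n : ℝ) • x) := by
        rw [← integral_const_mul, ← integral_add_left_eq_self _ ξ]
        congr 1; ext η
        by_cases hη : ξ + η ∈ S
        · simp [hη]; ring
        · simp [hη]
      rw [h4, h3]
      simp only [finrank_euclideanSpace, Fintype.card_fin]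
      rw [Complex.real_smul, ← mul_assoc, ← Complex.ofReal_mul, abs_of_pos (by positivity),
        mul_inv_cancel₀ (by positivity)]
      simp
    have hlim : Tendsto (fun n : ℕ => ∫ ζ, S.indicator f (ξ + (n : ℝ)⁻¹ • ζ) * g ζ) atTop
        (𝓝 (∫ ζ, f ξ * g ζ)) := by
      refine tendsto_integral_of_dominated_convergence (fun ζ => K * ‖g ζ‖) ?_
        (hg.integrable.norm.const_mul K) ?_ ?_
      · intro n
        refine Measurable.aestronglyMeasurable ?_
        exact ((fc.measurable.indicator hSm).comp (by fun_prop)).mul hgc.measurable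
      · intro n
        refine Eventually.of_forall fun ζ => ?_
        rw [norm_mul]
        gcongr
        by_cases hη : ξ + (n : ℝ)⁻¹ • ζ ∈ S
        · rw [Set.indicator_of_mem hη]
          exact hK _ (Metric.ball_subset_closedBall hη)
        · rw [Set.indicator_of_notMem hη, norm_zero]
          exact (norm_nonneg _).trans (hK ξ (by simp))
      · refine Eventually.of_forall fun ζ => ?_
        refine Tendsto.mul_const _ ?_
        have ht : Tendsto (fun n : ℕ => ξ + (n : ℝ)⁻¹ • ζ) atTop (𝓝 ξ) := by
          have : Tendsto (fun n : ℕ => (n : ℝ)⁻¹) atTop (𝓝 0) := tendsto_inv_atTop_nhds_zero_nat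
          simpa using (this.smul_const ζ).const_add ξ
        have hev : ∀ᶠ n : ℕ in atTop, ξ + (n : ℝ)⁻¹ • ζ ∈ S :=
          ht.eventually (Metric.ball_mem_nhds ξ one_pos)
        refine ((fc.tendsto ξ).comp ht).congr' ?_
        filter_upwards [hev] with n hn
        rw [Set.indicator_of_mem hn]; rfl
    rw [integral_const_mul] at hlim
    refine hlim.congr' ?_
    filter_upwards [eventually_ge_atTop 1] with n hn
    exact (e n hn).symm
  have hout : Tendsto (fun n : ℕ => ∫ η in Sᶜ, f η * ((((n : ℝ) ^ 2 : ℝ) : ℂ) * g ((n : ℝ) • (η - ξ))))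
      atTop (𝓝 0) := by
    obtain ⟨C, hC0, hC⟩ := hg.2 4
    have hQ := integrable_Q fc fi ξ
    have hb : ∀ n : ℕ, 1 ≤ n →
        ‖∫ η in Sᶜ, f η * ((((n : ℝ) ^ 2 : ℝ) : ℂ) * g ((n : ℝ) • (η - ξ)))‖
        ≤ (n : ℝ)⁻¹ * ∫ η in Sᶜ, (16 * C) * (‖f η‖ * ((1 + ‖η - ξ‖) ^ 4)⁻¹) := by
      intro n hn
      have h0 : (1 : ℝ) ≤ n := by exact_mod_cast hn
      rw [← integral_const_mul]
      refine norm_integral_le_of_norm_le ((hQ.const_mul _).const_mul _).integrableOn ?_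
      refine (ae_restrict_iff' hSm.compl).2 (Eventually.of_forall fun η hη => ?_)
      have hz : 1 ≤ ‖η - ξ‖ := by
        simpa [hS, dist_eq_norm] using hη
      have hg1 := hC ((n : ℝ) • (η - ξ))
      rw [norm_smul, Real.norm_of_nonneg (by positivity)] at hg1
      set G := ‖g ((n : ℝ) • (η - ξ))‖ with hG
      set d := ‖η - ξ‖ with hd
      have hGn : 0 ≤ G := norm_nonneg _
      have h5 : (n : ℝ) * (1 + d) ≤ 2 * (1 + n * d) := by nlinarith
      have h6 : ((n : ℝ) * (1 + d)) ^ 4 * G ≤ 16 * C := by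
        calc ((n : ℝ) * (1 + d)) ^ 4 * G ≤ (2 * (1 + n * d)) ^ 4 * G := by gcongr
          _ = 16 * ((1 + n * d) ^ 4 * G) := by ring
          _ ≤ _ := by linarith
      have h7 : (n : ℝ) ^ 2 * G ≤ (n : ℝ)⁻¹ * (16 * C) * ((1 + d) ^ 4)⁻¹ := by
        rw [← div_eq_mul_inv, le_div_iff₀ (by positivity), inv_mul_eq_div, le_div_iff₀ (by positivity)]
        have : (n : ℝ) ^ 3 ≤ (n : ℝ) ^ 4 := pow_le_pow_right₀ h0 (by norm_num)
        calc (n : ℝ) ^ 2 * G * (1 + d) ^ 4 * n = n ^ 3 * ((1 + d) ^ 4 * G) := by ring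
          _ ≤ n ^ 4 * ((1 + d) ^ 4 * G) := by gcongr
          _ = ((n : ℝ) * (1 + d)) ^ 4 * G := by ring
          _ ≤ _ := h6
      rw [norm_mul, norm_mul, Complex.norm_real, Real.norm_of_nonneg (by positivity), ← hG]
      calc ‖f η‖ * ((n : ℝ) ^ 2 * G) ≤ ‖f η‖ * ((n : ℝ)⁻¹ * (16 * C) * ((1 + d) ^ 4)⁻¹) := by gcongr
        _ = _ := by ring
    have hz : Tendsto (fun n : ℕ => (n : ℝ)⁻¹ * ∫ η in Sᶜ, (16 * C) *
        (‖f η‖ * ((1 + ‖η - ξ‖) ^ 4)⁻¹)) atTop (𝓝 0) := by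
      have : Tendsto (fun n : ℕ => (n : ℝ)⁻¹) atTop (𝓝 0) := tendsto_inv_atTop_nhds_zero_nat
      simpa using this.mul_const _
    refine squeeze_zero_norm' ?_ hz
    filter_upwards [eventually_ge_atTop 1] with n hn using hb n hn
  have hsum := hin.add hout
  rw [add_zero] at hsum
  refine hsum.congr' ?_
  filter_upwards [eventually_ge_atTop 1] with n hn
  exact integral_add_compl hSm (hGint n hn)

lemma contDiff_mod (ξ : R2) :
    ContDiff ℝ ∞ (fun y : R2 => Complex.exp (-(Complex.I * (rdot y ξ : ℂ)))) := by
  have h : ContDiff ℝ ∞ (fun y : R2 => (rdot y ξ : ℂ)) := by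
    have : (fun y : R2 => (rdot y ξ : ℂ)) = fun y => ((inner ℝ y ξ : ℝ) : ℂ) := by
      ext y; rw [rdot_eq]
    rw [this]
    exact Complex.ofRealCLM.contDiff.comp (contDiff_id.inner ℝ contDiff_const)
  exact (contDiff_const.mul h).neg.cexp

/-- test condition -/
def SuppIn (Γ : Set R2) (f : R2 → ℂ) : Prop :=
  ∀ φ : R2 → ℂ, ContDiff ℝ ∞ φ → HasCompactSupport φ →
    tsupport φ ∩ closure Γ = ∅ → (∫ ξ : R2, f ξ * testFT φ ξ) = 0

/-- reference cutoff -/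
def bump0 : ContDiffBump (0 : R2) := ⟨1, 2, one_pos, one_lt_two⟩

/-- scaled cutoff -/
def cut (R : ℝ) (y : R2) : ℂ := (bump0 (R⁻¹ • y) : ℂ)

lemma cut_contDiff (R : ℝ) : ContDiff ℝ ∞ (cut R) :=
  Complex.ofRealCLM.contDiff.comp (bump0.contDiff.comp (contDiff_const_smul _))

lemma cut_compact {R : ℝ} (hR : 0 < R) : HasCompactSupport (cut R) := by
  refine HasCompactSupport.intro (isCompact_closedBall (0 : R2) (R * 2)) fun y hy => ?_
  unfold cut
  rw [bump0.zero_of_le_dist]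
  · simp
  · rw [dist_zero_right, norm_smul, norm_inv, Real.norm_of_nonneg hR.le]
    simp only [Metric.mem_closedBall, dist_zero_right, not_le] at hy
    rw [inv_mul_eq_div, le_div_iff₀ hR]
    change 2 * R ≤ _
    linarith

lemma cut_one {R : ℝ} (hR : 0 < R) {y : R2} (hy : ‖y‖ ≤ R) : cut R y = 1 := by
  unfold cut
  rw [bump0.one_of_mem_closedBall]
  · simp
  · rw [mem_closedBall_zero_iff, norm_smul, norm_inv, Real.norm_of_nonneg hR.le, inv_mul_eq_div,
      div_le_iff₀ hR]
    change _ ≤ 1 * R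
    linarith

lemma testFT_sub {φ χ : R2 → ℂ} (hφ : Integrable φ volume) (hχ : Integrable χ volume) (ξ : R2) :
    testFT (fun y => φ y - χ y) ξ = testFT φ ξ - testFT χ ξ := by
  have key : ∀ φ : R2 → ℂ, Integrable φ volume →
      Integrable (fun x => Complex.exp (Complex.I * (rdot x ξ : ℂ)) * φ x) volume := by
    intro φ hφ
    refine hφ.bdd_mul (c := 1) (Continuous.aestronglyMeasurable (by unfold rdot; fun_prop))
      (Eventually.of_forall fun x => ?_)
    rw [mul_comm, Complex.norm_exp_ofReal_mul_I]
  unfold testFT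
  rw [← integral_sub (key φ hφ) (key χ hχ)]
  simp_rw [mul_sub]

lemma Fc_cut {Γ : Set R2} {f : R2 → ℂ} (fc : Continuous f)
    (fi : Integrable (fun ξ => wt ξ * ‖f ξ‖ ^ 2) volume) (hs : SuppIn Γ f)
    {R : ℝ} (hR : 0 < R) (hΓ : closure Γ ⊆ Metric.ball 0 R) (ξ : R2) :
    Fc f (cut R) ξ = f ξ * (((2 * π) ^ 2 : ℝ) : ℂ) := by
  have hconst : ∀ n : ℕ, R ≤ n → Fc f (cut n) ξ = Fc f (cut R) ξ := by
    intro n hn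
    have hn0 : (0 : ℝ) < n := hR.trans_le hn
    have c1 := cut_contDiff n
    have c2 := cut_contDiff R
    have k1 := cut_compact hn0
    have k2 := cut_compact hR
    have := hs (fun y => Complex.exp (-(Complex.I * (rdot y ξ : ℂ))) * (cut n y - cut R y))
      ((contDiff_mod ξ).mul (c1.sub c2)) ((k1.sub k2).mul_left) (by
        rw [Set.eq_empty_iff_forall_notMem]
        rintro y ⟨h1, h2⟩
        revert h1
        rw [imp_false, notMem_tsupport_iff_eventuallyEq]
        filter_upwards [Metric.isOpen_ball.mem_nhds (hΓ h2)] with z hz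
        rw [mem_ball_zero_iff] at hz
        rw [cut_one hn0 (hz.le.trans hn), cut_one hR hz.le]; simp)
    simp_rw [testFT_mod] at this
    simp_rw [testFT_sub (c1.continuous.integrable_of_hasCompactSupport k1)
      (c2.continuous.integrable_of_hasCompactSupport k2), mul_sub] at this
    rw [integral_sub (integrable_f_mul fc fi ((testFT_RD c1 k1).comp_sub ξ))
      (integrable_f_mul fc fi ((testFT_RD c2 k2).comp_sub ξ)), sub_eq_zero] at this
    exact this
  have hp := peak fc fi (testFT_RD (cut_contDiff 1) (cut_compact one_pos)) ξ
  rw [integral_testFT (cut_contDiff 1) (cut_compact one_pos), cut_one one_pos (by simp), mul_one] at hp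
  refine tendsto_nhds_unique ?_ hp
  refine (tendsto_const_nhds (x := Fc f (cut R) ξ)).congr' ?_
  filter_upwards [eventually_ge_atTop ⌈R⌉₊] with n hn
  have hn' : R ≤ n := Nat.ceil_le.1 hn
  have hn0 : (0 : ℝ) < n := hR.trans_le hn'
  rw [← hconst n hn', Fc]
  congr 1; ext η
  have h := testFT_scale (cut 1) hn0 0 (η - ξ)
  have e1 : (fun x => cut 1 ((n : ℝ)⁻¹ • (x - 0))) = cut n := by
    ext x; simp [cut]
  rw [e1] at h
  rw [h]
  simp [rdot]

/-- local geometric condition -/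
def Geo (Γ U : Set R2) (e : R2) (c t0 : ℝ) : Prop :=
  ∀ t : ℝ, 0 < t → t < t0 → ∀ y ∈ U, y ∈ closure Γ → ∀ z : R2, ‖z - e‖ < c → y + t • z ∈ Γ

lemma local_vanish {Γ U : Set R2} {f M : R2 → ℂ} {a : R2 → ℝ} {C : ℝ} (D : Dat f M a C)
    (hs : SuppIn Γ f)
    (hM : ∀ φ : R2 → ℂ, ContDiff ℝ ∞ φ → HasCompactSupport φ → tsupport φ ⊆ Γ →
      ∫ ξ, starRingEnd ℂ (M ξ) * testFT φ ξ = 0)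
    {e : R2} {c t0 : ℝ} (hc : 0 < c) (ht0 : 0 < t0) (hG : Geo Γ U e c t0)
    {χ : R2 → ℂ} (h1 : ContDiff ℝ ∞ χ) (h2 : HasCompactSupport χ) (h3 : tsupport χ ⊆ U) :
    ∫ ξ, M ξ * Fc f χ ξ = 0 := by
  let b : ContDiffBump e := ⟨c / 4, c / 2, by positivity, by linarith⟩
  have hbout : b.rOut = c / 2 := rfl
  set ρ : R2 → ℂ := fun x => (b x : ℂ) with hρ
  have ρ1 : ContDiff ℝ ∞ ρ := Complex.ofRealCLM.contDiff.comp b.contDiff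
  have ρ2 : HasCompactSupport ρ := by
    refine HasCompactSupport.intro (isCompact_closedBall e b.rOut) fun y hy => ?_
    rw [hρ]; simp only
    rw [b.zero_of_le_dist]; · simp
    · simp only [Metric.mem_closedBall, not_le] at hy; exact hy.le
  have hR := testFT_RD ρ1 ρ2
  -- vanishing for each t
  have hvan : ∀ t : ℝ, 0 < t → t < t0 →
      ∫ ξ, (M ξ * Fc f χ ξ) * starRingEnd ℂ (testFT ρ (t • ξ)) = 0 := by
    intro t ht htt
    have hr := (hR.comp_smul ht).conj
    rw [← D.fubini h1 h2 hr]
    refine hs _ ((contDiff_u (D.integrable_mul hr)).mul h1) h2.mul_left ?_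
    rw [Set.eq_empty_iff_forall_notMem]
    rintro y0 ⟨hy, hyΓ⟩
    have hyU : y0 ∈ U := h3 (tsupport_mul_subset_right hy)
    revert hy
    rw [imp_false, notMem_tsupport_iff_eventuallyEq]
    filter_upwards [Metric.ball_mem_nhds y0 (show 0 < t * (c / 4) by positivity)] with y hy
    rw [Metric.mem_ball, dist_eq_norm] at hy
    have hsub : ∀ x : R2, ‖t⁻¹ • (x - y) - e‖ ≤ c / 2 → x ∈ Γ := by
      intro x hx
      have h5 := hG t ht htt y0 hyU hyΓ (t⁻¹ • (x - y0)) (by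
        have : t⁻¹ • (x - y0) - e = (t⁻¹ • (x - y) - e) + t⁻¹ • (y - y0) := by
          rw [smul_sub, smul_sub, smul_sub]; abel
        rw [this]
        have h6 : ‖t⁻¹ • (y - y0)‖ < c / 4 := by
          rw [norm_smul, norm_inv, Real.norm_of_nonneg ht.le, inv_mul_eq_div, div_lt_iff₀ ht]
          linarith
        have := norm_add_le (t⁻¹ • (x - y) - e) (t⁻¹ • (y - y0))
        linarith)
      rw [smul_inv_smul₀ ht.ne'] at h5
      simpa using h5
    set φ : R2 → ℂ := fun x => ρ (t⁻¹ • (x - y)) with hφ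
    have hcl : IsClosed {x : R2 | ‖t⁻¹ • (x - y) - e‖ ≤ c / 2} :=
      isClosed_le (by fun_prop) continuous_const
    have hz : ∀ x : R2, ¬ ‖t⁻¹ • (x - y) - e‖ ≤ c / 2 → φ x = 0 := by
      intro x hx
      rw [hφ, hρ]; simp only
      rw [b.zero_of_le_dist]; · simp
      · rw [dist_eq_norm, hbout]; linarith
    have hts : tsupport φ ⊆ {x : R2 | ‖t⁻¹ • (x - y) - e‖ ≤ c / 2} := by
      refine closure_minimal (fun x hx => ?_) hcl
      by_contra hx'
      exact hx (hz x hx')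
    have hv := hM φ (ρ1.comp ((contDiff_id.sub contDiff_const).const_smul _)) (by
        refine HasCompactSupport.intro (isCompact_closedBall (y + t • e) (t * (c / 2))) fun x hx => ?_
        refine hz x fun hx' => hx ?_
        rw [mem_closedBall_iff_norm]
        have : x - (y + t • e) = t • (t⁻¹ • (x - y) - e) := by
          rw [smul_sub t, smul_inv_smul₀ ht.ne']; abel
        rw [this, norm_smul, Real.norm_of_nonneg ht.le]
        gcongr) (fun x hx => hsub x (hts hx))
    have hzero : ∫ ξ, Complex.exp (-(Complex.I * (rdot y ξ : ℂ))) *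
        (M ξ * starRingEnd ℂ (testFT ρ (t • ξ))) = 0 := by
      simp_rw [hφ, testFT_scale ρ ht y] at hv
      have e1 : ∫ ξ, starRingEnd ℂ (M ξ) * (((t ^ 2 : ℝ) : ℂ) *
          (Complex.exp (Complex.I * (rdot y ξ : ℂ)) * testFT ρ (t • ξ)))
          = ((t ^ 2 : ℝ) : ℂ) * starRingEnd ℂ (∫ ξ, Complex.exp (-(Complex.I * (rdot y ξ : ℂ))) *
        (M ξ * starRingEnd ℂ (testFT ρ (t • ξ)))) := by
        rw [← integral_conj, ← integral_const_mul]
        congr 1; ext ξ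
        simp only [map_mul, Complex.conj_conj, ← Complex.exp_conj, map_neg, Complex.conj_I,
          Complex.conj_ofReal, neg_mul, neg_neg]
        ring
      rw [e1] at hv
      have ht2 : ((t ^ 2 : ℝ) : ℂ) ≠ 0 := by exact_mod_cast (pow_pos ht 2).ne'
      have := (mul_eq_zero.1 hv).resolve_left ht2
      exact (map_eq_zero _).1 this
    rw [hzero]; simp
  have hI := D.integrable_Fc h1 h2
  have hlim : Tendsto (fun n : ℕ => ∫ ξ, (M ξ * Fc f χ ξ) *
      starRingEnd ℂ (testFT ρ ((t0 / ((n : ℝ) + 2)) • ξ))) atTop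
      (𝓝 (∫ ξ, (M ξ * Fc f χ ξ) * starRingEnd ℂ (testFT ρ 0))) := by
    refine tendsto_integral_of_dominated_convergence
      (fun ξ => ‖M ξ * Fc f χ ξ‖ * ∫ x, ‖ρ x‖) ?_ (hI.norm.mul_const _) ?_ ?_
    · intro n
      refine hI.aestronglyMeasurable.mul (Continuous.aestronglyMeasurable ?_)
      have := hR.1
      exact Complex.continuous_conj.comp (by fun_prop)
    · intro n
      refine Eventually.of_forall fun ξ => ?_
      rw [norm_mul, RCLike.norm_conj]
      gcongr
      exact testFT_norm_le _ _
    · refine Eventually.of_forall fun ξ => ?_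
      refine Tendsto.const_mul _ ?_
      have ht : Tendsto (fun n : ℕ => (t0 / ((n : ℝ) + 2)) • ξ) atTop (𝓝 0) := by
        have h0 : Tendsto (fun n : ℕ => t0 / ((n : ℝ) + 2)) atTop (𝓝 0) :=
          Tendsto.div_atTop tendsto_const_nhds
            (tendsto_atTop_add_const_right _ _ tendsto_natCast_atTop_atTop)
        simpa using h0.smul_const ξ
      exact (Complex.continuous_conj.tendsto _).comp ((hR.1.tendsto 0).comp ht)
  have h0 : ∫ ξ, (M ξ * Fc f χ ξ) * starRingEnd ℂ (testFT ρ 0) = 0 := by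
    refine tendsto_nhds_unique hlim (tendsto_const_nhds.congr fun n => ?_)
    refine (hvan _ (by positivity) ?_).symm
    rw [div_lt_iff₀ (by positivity)]
    have : (0 : ℝ) ≤ n := Nat.cast_nonneg n
    nlinarith
  rw [integral_mul_const] at h0
  refine (mul_eq_zero.1 h0).resolve_right ?_
  rw [map_eq_zero]
  have : testFT ρ 0 = ((∫ x, b x : ℝ) : ℂ) := by
    refine Eq.trans ?_ (integral_ofReal (𝕜 := ℂ) (f := fun x => b x))
    simp [testFT, rdot, hρ]
  rw [this]
  exact_mod_cast b.integral_pos.ne'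

lemma testFT_sum {ι : Type*} (s : Finset ι) {φ : ι → R2 → ℂ} (h : ∀ i, Integrable (φ i) volume)
    (ξ : R2) : testFT (fun y => ∑ i ∈ s, φ i y) ξ = ∑ i ∈ s, testFT (φ i) ξ := by
  unfold testFT
  rw [← integral_finsetSum]
  · simp_rw [Finset.mul_sum]
  · intro i _
    refine (h i).bdd_mul (c := 1) (Continuous.aestronglyMeasurable (by unfold rdot; fun_prop))
      (Eventually.of_forall fun x => ?_)
    rw [mul_comm, Complex.norm_exp_ofReal_mul_I]

open scoped Manifold in
lemma global_vanish {Γ : Set R2} {f M : R2 → ℂ} {a : R2 → ℝ} {C : ℝ} (D : Dat f M a C)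
    (hs : SuppIn Γ f)
    (hM : ∀ φ : R2 → ℂ, ContDiff ℝ ∞ φ → HasCompactSupport φ → tsupport φ ⊆ Γ →
      ∫ ξ, starRingEnd ℂ (M ξ) * testFT φ ξ = 0)
    (hG : ∀ x : R2, ∃ (U : Set R2) (e : R2) (c t0 : ℝ), IsOpen U ∧ x ∈ U ∧ 0 < c ∧ 0 < t0 ∧
      Geo Γ U e c t0)
    {χ : R2 → ℂ} (h1 : ContDiff ℝ ∞ χ) (h2 : HasCompactSupport χ) :
    ∫ ξ, M ξ * Fc f χ ξ = 0 := by
  choose U e c t0 hU hxU hc ht0 hgeo using hG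
  obtain ⟨s, hsub⟩ := IsCompact.elim_finite_subcover (s := tsupport χ) h2 U hU
    (fun x _ => Set.mem_iUnion.2 ⟨x, hxU x⟩)
  obtain ⟨p, hp⟩ := SmoothPartitionOfUnity.exists_isSubordinate 𝓘(ℝ, R2)
    (isClosed_tsupport χ) (fun i : s => U i) (fun i => hU i) (by
      intro x hx
      have := hsub hx
      simp only [Set.mem_iUnion] at this ⊢
      obtain ⟨i, hi, hxi⟩ := this
      exact ⟨⟨i, hi⟩, hxi⟩)
  set φ : s → R2 → ℂ := fun i y => (p i y : ℂ) * χ y with hφ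
  have φ1 : ∀ i, ContDiff ℝ ∞ (φ i) := fun i =>
    (Complex.ofRealCLM.contDiff.comp (p i).contMDiff.contDiff).mul h1
  have φ2 : ∀ i, HasCompactSupport (φ i) := fun i => h2.mul_left
  have φ3 : ∀ i, tsupport (φ i) ⊆ U i := by
    intro i
    refine (tsupport_mul_subset_left).trans (Set.Subset.trans ?_ (hp i))
    refine closure_mono fun x hx => ?_
    simpa using hx
  have hsum : χ = fun y => ∑ i : s, φ i y := by
    ext y
    by_cases hy : y ∈ tsupport χ
    · have h5 := p.sum_eq_one hy
      rw [finsum_eq_sum_of_fintype] at h5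
      simp only [hφ]
      rw [← Finset.sum_mul, ← Complex.ofReal_sum, h5]; simp
    · have : χ y = 0 := image_eq_zero_of_notMem_tsupport hy
      simp [hφ, this]
  have hF : ∀ ξ, Fc f χ ξ = ∑ i : s, Fc f (φ i) ξ := by
    intro ξ
    unfold Fc
    rw [← integral_finsetSum]
    · congr 1; ext η
      rw [← Finset.mul_sum, ← testFT_sum, ← hsum]
      exact fun i => (φ1 i).continuous.integrable_of_hasCompactSupport (φ2 i)
    · intro i _
      exact integrable_f_mul D.fc D.fi ((testFT_RD (φ1 i) (φ2 i)).comp_sub ξ)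
  simp_rw [hF, Finset.mul_sum]
  rw [integral_finsetSum]
  · refine Finset.sum_eq_zero fun i _ => ?_
    exact local_vanish D hs hM (hc i) (ht0 i) (hgeo i) (φ1 i) (φ2 i) (φ3 i)
  · intro i _
    exact D.integrable_Fc (φ1 i) (φ2 i)

lemma geo_of_lipschitz {Γ : Set R2} (h : IsLipschitzDomain Γ) (x : R2) :
    ∃ (U : Set R2) (e : R2) (c t0 : ℝ), IsOpen U ∧ x ∈ U ∧ 0 < c ∧ 0 < t0 ∧
      Geo Γ U e c t0 := by
  obtain ⟨ho, -, -, hl⟩ := h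
  by_cases hx : x ∈ closure Γ
  swap
  · refine ⟨(closure Γ)ᶜ, 0, 1, 1, isClosed_closure.isOpen_compl, hx, one_pos, one_pos, ?_⟩
    intro t _ _ y hy hy'
    exact absurd hy' hy
  by_cases hxo : x ∈ Γ
  · obtain ⟨r, hr, hb⟩ := Metric.isOpen_iff.1 ho x hxo
    refine ⟨Metric.ball x (r / 2), 0, r / 2, 1, Metric.isOpen_ball, Metric.mem_ball_self (by positivity),
      by positivity, one_pos, ?_⟩
    intro t ht ht1 y hy _ z hz
    apply hb
    rw [sub_zero] at hz
    rw [Metric.mem_ball, dist_eq_norm] at hy ⊢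
    have : y + t • z - x = (y - x) + t • z := by abel
    rw [this]
    have h1 := norm_add_le (y - x) (t • z)
    rw [norm_smul, Real.norm_of_nonneg ht.le] at h1
    nlinarith [norm_nonneg z]
  have hfr : x ∈ frontier Γ := by
    rw [frontier, ho.interior_eq]; exact ⟨hx, hxo⟩
  obtain ⟨E, L, g, V, hg, hV, hxV, hiff⟩ := hl x hfr
  obtain ⟨r, hr, hb⟩ := Metric.isOpen_iff.1 hV x hxV
  set v : R2 := E.symm (EuclideanSpace.single 1 1) with hv
  have hvn : ‖v‖ = 1 := by rw [hv, LinearIsometryEquiv.norm_map]; simp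
  have hL : (0 : ℝ) ≤ L := L.2
  refine ⟨Metric.ball x (r / 2), v, (2 * (1 + (L : ℝ)))⁻¹, r / 4, Metric.isOpen_ball,
    Metric.mem_ball_self (by positivity), by positivity, by positivity, ?_⟩
  intro t ht ht1 y hy hyc z hz
  have coord : ∀ (w : R2) (i : Fin 2), |w i| ≤ ‖w‖ := fun w i => by
    simpa using PiLp.norm_apply_le w i
  set c := (2 * (1 + (L : ℝ)))⁻¹ with hc
  have hcL : (1 + (L : ℝ)) * c = 1 / 2 := by rw [hc]; field_simp
  have hc0 : 0 < c := by positivity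
  have hc1 : c ≤ 1 := by nlinarith
  have hyV : y ∈ V := hb (Metric.ball_subset_ball (by linarith) hy)
  -- closure point lies weakly above the graph
  have hyg : g (E y 0) ≤ E y 1 := by
    have hcl : IsClosed {w : R2 | g (E w 0) ≤ E w 1} := by
      have := hg.continuous
      exact isClosed_le (by fun_prop) (by fun_prop)
    have : y ∈ closure (Γ ∩ V) := by
      rw [Set.inter_comm]
      exact hV.inter_closure ⟨hyV, hyc⟩
    exact closure_minimal (fun w hw => ((hiff w hw.2).1 hw.1).le) hcl this
  have hyz : y + t • z ∈ V := by
    apply hb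
    rw [Metric.mem_ball, dist_eq_norm] at hy ⊢
    have h0 : y + t • z - x = (y - x) + t • z := by abel
    rw [h0]
    have h1 := norm_add_le (y - x) (t • z)
    rw [norm_smul, Real.norm_of_nonneg ht.le] at h1
    have h2 : ‖z‖ ≤ 2 := by
      calc ‖z‖ = ‖(z - v) + v‖ := by simp
        _ ≤ ‖z - v‖ + ‖v‖ := norm_add_le _ _
        _ ≤ 2 := by rw [hvn]; linarith
    nlinarith [norm_nonneg z]
  rw [hiff _ hyz]
  set d : R2 := E (z - v) with hd
  have hdn : ‖d‖ < c := by rw [hd, LinearIsometryEquiv.norm_map]; exact hz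
  have hEz : E (y + t • z) = E y + t • (d + EuclideanSpace.single 1 1) := by
    have : E v = EuclideanSpace.single 1 1 := by rw [hv]; simp
    rw [hd, map_sub, this, sub_add_cancel, map_add, map_smul]
  have c0 : E (y + t • z) 0 = E y 0 + t * d 0 := by rw [hEz]; simp
  have c1 : E (y + t • z) 1 = E y 1 + t * (d 1 + 1) := by rw [hEz]; simp; ring
  rw [c0, c1]
  have hlip := hg.dist_le_mul (E y 0 + t * d 0) (E y 0)
  rw [Real.dist_eq, Real.dist_eq, add_sub_cancel_left, abs_mul, abs_of_pos ht] at hlip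
  have k0 := coord d 0
  have k1 := coord d 1
  have k2 := (abs_le.1 hlip).2
  have k3 := (abs_le.1 k1).1
  have k4 : (L : ℝ) * (t * |d 0|) ≤ L * (t * c) := by gcongr; linarith
  have k5 : t * (1 - c) ≤ t * (d 1 + 1) := by
    apply mul_le_mul_of_nonneg_left _ ht.le; linarith
  have k6 : (L : ℝ) * (t * c) < t * (1 - c) := by
    have : t * (1 - c) - L * (t * c) = t * (1 - (1 + L) * c) := by ring
    rw [hcL] at this
    nlinarith
  linarith

lemma norm_mT (k : ℝ) (hk : 0 < k) (ξ : R2) :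
    ‖mT k ξ‖ = (2 * Real.sqrt |k ^ 2 - ‖ξ‖ ^ 2|)⁻¹ := by
  unfold mT rootk
  have hn := norm_nonneg ξ
  split_ifs with h
  · rw [abs_of_pos (by nlinarith)]
    simp [abs_of_nonneg (Real.sqrt_nonneg _)]
  · rw [abs_of_nonpos (by nlinarith)]
    simp [abs_of_nonneg (Real.sqrt_nonneg _)]

lemma measurable_mT (k : ℝ) : Measurable (mT k) := by
  unfold mT rootk
  refine Measurable.div measurable_const (Measurable.mul measurable_const ?_)
  refine Measurable.ite (measurableSet_lt measurable_norm measurable_const) ?_ ?_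
  · fun_prop
  · fun_prop

lemma abs_rpow_bound (x : ℝ) :
    (Real.sqrt |x|)⁻¹ ≤ |x ^ (-(1/2) : ℝ)| + |(-x) ^ (-(1/2) : ℝ)| := by
  have key : ∀ y : ℝ, 0 ≤ y → (Real.sqrt y)⁻¹ = y ^ (-(1/2) : ℝ) := by
    intro y hy
    rw [Real.rpow_neg hy, Real.sqrt_eq_rpow]
  rcases le_total 0 x with h | h
  · rw [abs_of_nonneg h, key x h]
    have := le_abs_self (x ^ (-(1/2) : ℝ))
    have := abs_nonneg ((-x) ^ (-(1/2) : ℝ))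
    linarith
  · rw [abs_of_nonpos h, key (-x) (by linarith)]
    have := le_abs_self ((-x) ^ (-(1/2) : ℝ))
    have := abs_nonneg (x ^ (-(1/2) : ℝ))
    linarith

lemma integrable_mT_ball (k : ℝ) (hk : 0 < k) :
    Integrable ((Metric.closedBall (0 : R2) (2 * k)).indicator (fun ξ => ‖mT k ξ‖)) volume := by
  have e : (Metric.closedBall (0 : R2) (2 * k)).indicator (fun ξ => ‖mT k ξ‖)
      = fun ξ => (Set.Iic (2 * k)).indicator (fun y : ℝ => (2 * Real.sqrt |k ^ 2 - y ^ 2|)⁻¹) ‖ξ‖ := by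
    ext ξ
    by_cases h : ‖ξ‖ ≤ 2 * k
    · rw [Set.indicator_of_mem (by simpa using h), Set.indicator_of_mem (by simpa using h),
        norm_mT k hk]
    · rw [Set.indicator_of_notMem (by simpa using h), Set.indicator_of_notMem (by simpa using h)]
  rw [e, integrable_fun_norm_addHaar]
  simp only [finrank_euclideanSpace, Fintype.card_fin, Nat.add_one_sub_one, pow_one, smul_eq_mul]
  have hi : IntegrableOn (fun y : ℝ => (Real.sqrt k)⁻¹ * k *
      (|(y - k) ^ (-(1/2) : ℝ)| + |(k - y) ^ (-(1/2) : ℝ)|)) (Set.Ioc 0 (2 * k)) volume := by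
    have h0 : ∀ a b : ℝ, IntervalIntegrable (fun x : ℝ => x ^ (-(1/2) : ℝ)) volume a b :=
      fun a b => intervalIntegral.intervalIntegrable_rpow' (by norm_num)
    have h1 := ((h0 (0 - k) (2 * k - k)).comp_sub_right k)
    have h2 := ((h0 (k - 0) (k - 2 * k)).comp_sub_left k)
    simp only [sub_add_cancel, sub_sub_cancel] at h1 h2
    have h3 := (intervalIntegrable_iff_integrableOn_Ioc_of_le (by positivity)).1 h1
    have h4 := (intervalIntegrable_iff_integrableOn_Ioc_of_le (by positivity)).1 h2
    exact (Integrable.add h3.abs h4.abs).const_mul _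
  have e2 : (fun y : ℝ => y * (Set.Iic (2 * k)).indicator
      (fun y : ℝ => (2 * Real.sqrt |k ^ 2 - y ^ 2|)⁻¹) y) =
      (Set.Iic (2 * k)).indicator (fun y : ℝ => y * (2 * Real.sqrt |k ^ 2 - y ^ 2|)⁻¹) := by
    ext y
    by_cases h : y ≤ 2 * k
    · rw [Set.indicator_of_mem (by simpa using h), Set.indicator_of_mem (by simpa using h)]
    · rw [Set.indicator_of_notMem (by simpa using h), Set.indicator_of_notMem (by simpa using h),
        mul_zero]
  rw [e2, integrableOn_indicator_iff measurableSet_Iic, Set.inter_comm, Set.Ioi_inter_Iic]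
  refine Integrable.mono' hi (Measurable.aestronglyMeasurable (by fun_prop)) ?_
  refine (ae_restrict_iff' measurableSet_Ioc).2 (Eventually.of_forall fun y hy => ?_)
  obtain ⟨hy0, hy1⟩ := hy
  rw [Real.norm_of_nonneg (by positivity)]
  have hb := abs_rpow_bound (y - k)
  rw [neg_sub] at hb
  have h5 : Real.sqrt |k ^ 2 - y ^ 2| = Real.sqrt (k + y) * Real.sqrt |y - k| := by
    rw [← Real.sqrt_mul (by positivity)]
    congr 1
    rw [show k ^ 2 - y ^ 2 = -((k + y) * (y - k)) by ring, abs_neg, abs_mul, abs_of_pos (by positivity)]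
  have h6 : (Real.sqrt (k + y))⁻¹ ≤ (Real.sqrt k)⁻¹ := by
    apply inv_anti₀ (by positivity)
    exact Real.sqrt_le_sqrt (by linarith)
  calc y * (2 * Real.sqrt |k ^ 2 - y ^ 2|)⁻¹
      = (y / 2) * ((Real.sqrt (k + y))⁻¹ * (Real.sqrt |y - k|)⁻¹) := by
        rw [h5, mul_inv, mul_inv]; ring
    _ ≤ k * ((Real.sqrt k)⁻¹ * (|(y - k) ^ (-(1/2) : ℝ)| + |(k - y) ^ (-(1/2) : ℝ)|)) := by
        gcongr; linarith
    _ = _ := by ring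

lemma norm_mT_far (k : ℝ) (hk : 0 < k) (ξ : R2) (hξ : 2 * k < ‖ξ‖) :
    ‖mT k ξ‖ ≤ Real.sqrt (1 + 1 / (4 * k ^ 2)) * wt ξ := by
  rw [norm_mT k hk, wt_eq]
  have h1 : k ^ 2 - ‖ξ‖ ^ 2 ≤ 0 := by nlinarith
  rw [abs_of_nonpos h1]
  set A := 1 + 1 / (4 * k ^ 2) with hA
  have hA0 : 0 < A := by positivity
  have h2 : 1 + ‖ξ‖ ^ 2 ≤ A * (2 ^ 2 * (‖ξ‖ ^ 2 - k ^ 2)) := by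
    have e1 : 1 ≤ ‖ξ‖ ^ 2 / (4 * k ^ 2) := by
      rw [le_div_iff₀ (by positivity)]; nlinarith
    have e2 : 1 + ‖ξ‖ ^ 2 ≤ A * ‖ξ‖ ^ 2 := by
      have : A * ‖ξ‖ ^ 2 = ‖ξ‖ ^ 2 + ‖ξ‖ ^ 2 / (4 * k ^ 2) := by rw [hA]; ring
      linarith
    have e3 : ‖ξ‖ ^ 2 ≤ 2 ^ 2 * (‖ξ‖ ^ 2 - k ^ 2) := by nlinarith
    nlinarith
  have h3 : Real.sqrt (1 + ‖ξ‖ ^ 2) ≤ Real.sqrt A * (2 * Real.sqrt (-(k ^ 2 - ‖ξ‖ ^ 2))) := by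
    refine (Real.sqrt_le_sqrt h2).trans (le_of_eq ?_)
    rw [Real.sqrt_mul hA0.le, Real.sqrt_mul (by norm_num), Real.sqrt_sq (by norm_num), neg_sub]
  have hp : 0 < Real.sqrt (-(k ^ 2 - ‖ξ‖ ^ 2)) := Real.sqrt_pos.2 (by nlinarith)
  rw [← div_eq_mul_inv, le_div_iff₀ (by positivity), inv_mul_le_iff₀ (by positivity)]
  linarith

lemma mkDat {f : R2 → ℂ} (fc : Continuous f)
    (fi : Integrable (fun ξ => wt ξ * ‖f ξ‖ ^ 2) volume) (k : ℝ) (hk : 0 < k) :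
    ∃ a C, Dat f (fun ξ => starRingEnd ℂ (mT k ξ * f ξ)) a C := by
  obtain ⟨K, hK⟩ := (isCompact_closedBall (0 : R2) (2 * k)).exists_bound_of_continuousOn
    fc.continuousOn
  have hK0 : 0 ≤ K := (norm_nonneg _).trans (hK 0 (by simp; positivity))
  have hi := integrable_mT_ball k hk
  set I := (Metric.closedBall (0 : R2) (2 * k)).indicator (fun ξ => ‖mT k ξ‖) with hI
  have hI0 : ∀ ξ, 0 ≤ I ξ := fun ξ => Set.indicator_nonneg (fun _ _ => norm_nonneg _) ξ
  refine ⟨fun ξ => K * I ξ, Real.sqrt (1 + 1 / (4 * k ^ 2)), fc, fi, ?_, hi.const_mul K, ?_, ?_,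
    by positivity, ?_⟩
  · exact (Complex.continuous_conj.measurable.comp
      ((measurable_mT k).mul fc.measurable)).aestronglyMeasurable
  · refine (hi.const_mul ((1 + 2 * k) * K)).mono'
      ((by fun_prop : Continuous fun ξ : R2 => 1 + ‖ξ‖).aestronglyMeasurable.mul
        (hi.const_mul K).aestronglyMeasurable) (Eventually.of_forall fun ξ => ?_)
    have h0 := hI0 ξ
    rw [Real.norm_of_nonneg (by positivity)]
    by_cases h : ξ ∈ Metric.closedBall (0 : R2) (2 * k)
    · rw [mem_closedBall_zero_iff] at h
      rw [mul_assoc]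
      gcongr
    · have : I ξ = 0 := Set.indicator_of_notMem h _
      simp [this]
  · intro ξ
    have := hI0 ξ
    positivity
  · intro ξ
    rw [RCLike.norm_conj, norm_mul]
    have hw := wt_pos ξ
    by_cases h : ξ ∈ Metric.closedBall (0 : R2) (2 * k)
    · have e : I ξ = ‖mT k ξ‖ := Set.indicator_of_mem h _
      have := hK ξ h
      have h2 : 0 ≤ Real.sqrt (1 + 1 / (4 * k ^ 2)) * (wt ξ * ‖f ξ‖) := by positivity
      simp only [e]
      nlinarith [norm_nonneg (mT k ξ)]
    · have e : I ξ = 0 := Set.indicator_of_notMem h _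
      rw [mem_closedBall_zero_iff, not_le] at h
      have := norm_mT_far k hk ξ h
      simp only [e]
      nlinarith [norm_nonneg (f ξ)]

lemma mT_re_im (k : ℝ) (hk : 0 < k) (ξ : R2) :
    (mT k ξ).re + (mT k ξ).im = (2 * Real.sqrt |k ^ 2 - ‖ξ‖ ^ 2|)⁻¹ := by
  have hn := norm_nonneg ξ
  unfold mT rootk
  split_ifs with h
  · rw [abs_of_pos (by nlinarith)]
    have : Complex.I / (2 * ((Real.sqrt (k ^ 2 - ‖ξ‖ ^ 2) : ℝ) : ℂ))
        = (((2 * Real.sqrt (k ^ 2 - ‖ξ‖ ^ 2))⁻¹ : ℝ) : ℂ) * Complex.I := by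
      push_cast; rw [div_eq_mul_inv, mul_comm]
    rw [this, Complex.re_ofReal_mul, Complex.im_ofReal_mul]; simp
  · rw [abs_of_nonpos (by nlinarith)]
    have : Complex.I / (2 * (Complex.I * ((Real.sqrt (‖ξ‖ ^ 2 - k ^ 2) : ℝ) : ℂ)))
        = (((2 * Real.sqrt (-(k ^ 2 - ‖ξ‖ ^ 2)))⁻¹ : ℝ) : ℂ) := by
      rw [neg_sub]; push_cast
      rw [mul_left_comm, div_eq_mul_inv, mul_inv, ← mul_assoc, mul_inv_cancel₀ Complex.I_ne_zero,
        one_mul]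
    rw [this, Complex.ofReal_re, Complex.ofReal_im, add_zero]

lemma main (Γ : Set R2) (hΓ : IsLipschitzDomain Γ) (k : ℝ) (hk : 0 < k)
    (ψ : HTildeElt (-(1/2) : ℝ) Γ)
    (h : AgreeOn Γ (fun ξ => mT k ξ * ψ.ft ξ) (fun _ => 0)) :
    ∀ ξ : R2, ψ.ft ξ = 0 := by
  set f := ψ.ft with hf
  have fc : Continuous f := ψ.cont
  have fi : Integrable (fun ξ => wt ξ * ‖f ξ‖ ^ 2) volume := ψ.mem
  have hs : SuppIn Γ f := ψ.supp
  obtain ⟨a, C, D⟩ := mkDat fc fi k hk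
  obtain ⟨R0, hR0⟩ := (hΓ.2.1.closure).subset_ball (0 : R2)
  set R := max R0 1 with hRdef
  have hR : 0 < R := lt_of_lt_of_le one_pos (le_max_right _ _)
  have hsub : closure Γ ⊆ Metric.ball 0 R := hR0.trans (Metric.ball_subset_ball (le_max_left _ _))
  have hv := global_vanish D hs (fun φ h1 h2 h3 => by
    have := h φ h1 h2 h3
    simpa using this) (geo_of_lipschitz hΓ) (cut_contDiff R) (cut_compact hR)
  have hGint := D.integrable_Fc (cut_contDiff R) (cut_compact hR)
  simp_rw [Fc_cut fc fi hs hR hsub] at hv hGint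
  set c : ℝ := (2 * π) ^ 2 with hc
  have hc0 : 0 < c := by positivity
  have e1 : ∀ ξ, starRingEnd ℂ (mT k ξ * f ξ) * (f ξ * (c : ℂ))
      = ((c * ‖f ξ‖ ^ 2 : ℝ) : ℂ) * starRingEnd ℂ (mT k ξ) := by
    intro ξ
    have : starRingEnd ℂ (f ξ) * f ξ = ((‖f ξ‖ ^ 2 : ℝ) : ℂ) := by
      rw [Complex.conj_mul']; push_cast; rfl
    rw [Complex.ofReal_mul, ← this, map_mul]; ring
  simp_rw [e1] at hv hGint
  set G : R2 → ℂ := fun ξ => ((c * ‖f ξ‖ ^ 2 : ℝ) : ℂ) * starRingEnd ℂ (mT k ξ) with hG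
  have hre : ∫ ξ, (G ξ).re = 0 := by
    have := integral_re hGint
    simp only [RCLike.re_eq_complex_re] at this
    rw [this, hv]; simp
  have him : ∫ ξ, (G ξ).im = 0 := by
    have := integral_im hGint
    simp only [RCLike.im_eq_complex_im] at this
    rw [this, hv]; simp
  have hP : ∀ ξ, (G ξ).re - (G ξ).im
      = c * ‖f ξ‖ ^ 2 * (2 * Real.sqrt |k ^ 2 - ‖ξ‖ ^ 2|)⁻¹ := by
    intro ξ
    rw [← mT_re_im k hk, hG]
    simp only [Complex.re_ofReal_mul, Complex.im_ofReal_mul, Complex.conj_re, Complex.conj_im]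
    ring
  have hIi : Integrable (fun ξ => (G ξ).re - (G ξ).im) volume := hGint.re.sub hGint.im
  have hzero : ∫ ξ, ((G ξ).re - (G ξ).im) = 0 :=
    (integral_sub (f := fun ξ => (G ξ).re) (g := fun ξ => (G ξ).im) hGint.re hGint.im).trans
      (by rw [hre, him, sub_zero])
  have hae := (integral_eq_zero_iff_of_nonneg (fun ξ => by
    simp only [hP, Pi.zero_apply]; positivity) hIi).1 hzero
  have hsph : ∀ᵐ ξ : R2, ξ ∉ Metric.sphere (0 : R2) k :=
    measure_eq_zero_iff_ae_notMem.1 (Measure.addHaar_sphere volume (0 : R2) k)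
  have hfz : f =ᵐ[volume] fun _ => 0 := by
    filter_upwards [hae, hsph] with ξ h1 h2
    simp only [hP, Pi.zero_apply] at h1
    have h3 : ‖ξ‖ ≠ k := by simpa using h2
    have h4 : 0 < |k ^ 2 - ‖ξ‖ ^ 2| := by
      rw [abs_pos, sub_ne_zero]
      intro h5
      exact h3 ((pow_left_inj₀ hk.le (norm_nonneg ξ) two_ne_zero).1 h5).symm
    have h5 : 0 < (2 * Real.sqrt |k ^ 2 - ‖ξ‖ ^ 2|)⁻¹ := by positivity
    have h6 := (mul_eq_zero.1 h1).resolve_right h5.ne'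
    have h7 := (mul_eq_zero.1 h6).resolve_left hc0.ne'
    exact norm_eq_zero.1 (pow_eq_zero_iff two_ne_zero |>.1 h7)
  have := (Continuous.ae_eq_iff_eq volume fc continuous_const).1 hfz
  exact fun ξ => congrFun this ξ

end KerT

/-- Proposition A.3, kernel of `T` is trivial: if `ψ ∈ H̃^{-1/2}(Γ)`
satisfies `Tψ = 0` (i.e. the restriction of `Tψ` to `Γ` vanishes), then `ψ = 0`. -/
theorem statement17 (Γ : Set R2) (hΓ : IsLipschitzDomain Γ) (k : ℝ) (hk : 0 < k)
    (ψ : HTildeElt (-(1/2) : ℝ) Γ)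
    (h : AgreeOn Γ (fun ξ => mT k ξ * ψ.ft ξ) (fun _ => 0)) :
    ∀ ξ : R2, ψ.ft ξ = 0 := by
  exact KerT.main Γ hΓ k hk ψ h

end
end
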